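/- arXiv:1410.7138 — 3 statements merged into one kernel-verified Lean document; each statement's English description precedes it below -/
import Mathlib

section
/- Let g ≥ 9. With F the free group on a₀, a₁, …, a_{g−1} and K ⊴ F the normal closure of the relator set R described in the context (so that F/K ≅ O(g, ℤ/2)), the abelian group (K ∩ [F, F]) / [K, F] — which by the Hopf formula is isomorphic to H₂(O(g, ℤ/2); ℤ) — is generated by the single class of the word A⁻⁷ B₁⁻² B₂⁻⁴ B₃⁻⁶ B₄⁴ B₅² B¹² C², where A := a₀², B_i := a_i a_{i+1} a_i (a_{i+1} a_i a_{i+1})⁻¹, B := a₀ a₄ a₀ (a₄ a₀ a₄)⁻¹, and C := (a₂a₃a₄a₅a₆a₀)⁶ (a₂⁻¹a₃⁻¹a₄⁻¹a₅⁻¹a₆⁻¹a₀⁻¹)⁶ (a₁a₂a₃a₄a₅a₆a₀)⁻⁴ ((a₁⁻¹a₂⁻¹a₃⁻¹a₄⁻¹a₅⁻¹a₆⁻¹a₀⁻¹)⁻¹)⁵. -/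
/-!
Write `F` for the free group, `K` for the normal closure of the relators and `Γ = F / [K, F]`.

**The presentation.**  The generator `aᵢ` is sent to the transvection along `e_{i-1} + e_i` for
`i ≥ 1` and along `e₀ + e₁ + e₂ + e₃` for `i = 0`.  These transvections generate `O(g, ℤ/2)`
(`Cox.surj`), and the relators hold for them.  Injectivity is proved by induction: in the presented
group, the stabilizer of `e_n` in the subgroup generated by `a₀, …, a_n` is the subgroup generated
by `a₀, …, a_{n-1}`.  The cosets of the smaller subgroup map to the vertices of the graph of odd
vectors (two vertices being adjacent if they are orthogonal and do not add up to the all-one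
vector).  This map is a covering along which triangles lift (`Cox.tri`), and cycles of the graph of
odd vectors decompose into triangles, so that the covering is trivial (`cover`, `Cox.stab_step`).
The Coxeter relations suffice for this, except at the step adjoining `a₆`: there `a₆` has to satisfy
the braid relation with the central involution `b` of the subgroup of type `D₆` generated by
`a₀, …, a₅`.  In the Coxeter group of type `E₇`, the element `(a₆ b)³` is the central involution
(`Cox.zz_central`) and the kernel of the map to `O(7, ℤ/2)`, so each word in `a₀, …, a₆` that is
trivial in `O(7, ℤ/2)` equals `1` or `(a₆ b)³`; the relator `C` forces `(a₆ b)³ = 1`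
(`Cox.b_braid`).

**The generator of `(K ∩ [F, F]) / [K, F]`.**  The group `K / [K, F]` is central in `Γ` and generated
by the classes of the relators.  The commutator relators vanish in it: if `y` in `Γ` lies over a
transvection commuting with a configuration of transvections of type `E₇`, the commutator with `y`
is a homomorphism defined on the group generated by this configuration.  It takes equal values on
generators satisfying a braid relation, its values are killed by `2` since the generators are
involutions, and by the odd number `7 · 9` since the Coxeter element has order `9` in
`O(7, ℤ/2)`; hence it is trivial (`comm_config`, `pi_comm`, `pi_bword`).  The square of a generator
differs from that of a neighbour by the square of a braid relator (`TG_sq`).  Hence `K / [K, F]` is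
generated by the classes of `a₀²`, of the braid relators and of `C`.  Elements of `[F, F]` have
vanishing exponent sums in all generators; this is a linear system for the exponents of these
classes, with solutions the multiples of `(-7; -2, -4, -6, 4, 2; 12; 2)` (`solve`), which gives the
word `x0word`.
-/

/-- The generator `aᵢ` of the free group `F` on `Fin g` (and `1` if `i` is out of range).
Index `0` is the generator `a₀` (playing the role of `b`). -/
def gen (g i : ℕ) : FreeGroup (Fin g) :=
  if h : i < g then FreeGroup.of ⟨i, h⟩ else 1

/-- The words `b₁ := a₀`, `b₂ := (a₁a₂a₃a₄a₅a₀)⁵` and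
`b_{i+1} := (b_{i−1} a_{2i} a_{2i+1} a_{2i+2} a_{2i+3} b_i)⁵ (b_{i−1} a_{2i} a_{2i+1} a_{2i+2} a_{2i+3})⁻⁶`
for `i ≥ 2`. -/
def bword (g : ℕ) : ℕ → FreeGroup (Fin g)
  | 0 => 1
  | 1 => gen g 0
  | 2 => (gen g 1 * gen g 2 * gen g 3 * gen g 4 * gen g 5 * gen g 0) ^ 5
  | (n + 3) =>
      (bword g (n + 1) * gen g (2 * (n + 2)) * gen g (2 * (n + 2) + 1) *
          gen g (2 * (n + 2) + 2) * gen g (2 * (n + 2) + 3) * bword g (n + 2)) ^ 5 *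
        (bword g (n + 1) * gen g (2 * (n + 2)) * gen g (2 * (n + 2) + 1) *
          gen g (2 * (n + 2) + 2) * gen g (2 * (n + 2) + 3)) ^ (-6 : ℤ)

/-- The relator
`C := (a₂a₃a₄a₅a₆a₀)⁶ (a₂⁻¹a₃⁻¹a₄⁻¹a₅⁻¹a₆⁻¹a₀⁻¹)⁶ (a₁a₂a₃a₄a₅a₆a₀)⁻⁴ ((a₁⁻¹a₂⁻¹a₃⁻¹a₄⁻¹a₅⁻¹a₆⁻¹a₀⁻¹)⁻¹)⁵`. -/
def Cword (g : ℕ) : FreeGroup (Fin g) :=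
  (gen g 2 * gen g 3 * gen g 4 * gen g 5 * gen g 6 * gen g 0) ^ 6 *
    ((gen g 2)⁻¹ * (gen g 3)⁻¹ * (gen g 4)⁻¹ * (gen g 5)⁻¹ * (gen g 6)⁻¹ * (gen g 0)⁻¹) ^ 6 *
    (gen g 1 * gen g 2 * gen g 3 * gen g 4 * gen g 5 * gen g 6 * gen g 0) ^ (-4 : ℤ) *
    (((gen g 1)⁻¹ * (gen g 2)⁻¹ * (gen g 3)⁻¹ * (gen g 4)⁻¹ * (gen g 5)⁻¹ * (gen g 6)⁻¹ *
        (gen g 0)⁻¹)⁻¹) ^ 5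

/-- The relator set `R` described in the context: the squares `aᵢ²`, the commutators
`[aᵢ, aⱼ]` for (`j − i > 1` and `i ≠ 0`) or (`i = 0` and `j ≠ 4`), the braid relators, the
relator `C`, and (for even `g`) the relator `[a_{g−5}, b_{(g−2)/2}]`. -/
def R9 (g : ℕ) : Set (FreeGroup (Fin g)) :=
  {r | ∃ i < g, r = gen g i ^ 2} ∪
  {r | ∃ i j, j < g ∧ ((0 < i ∧ i + 1 < j) ∨ (i = 0 ∧ 1 ≤ j ∧ j ≠ 4)) ∧
      r = gen g i * gen g j * (gen g i)⁻¹ * (gen g j)⁻¹} ∪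
  {r | ∃ i, 1 ≤ i ∧ i + 1 < g ∧
      r = gen g i * gen g (i + 1) * gen g i *
        (gen g (i + 1) * gen g i * gen g (i + 1))⁻¹} ∪
  {gen g 0 * gen g 4 * gen g 0 * (gen g 4 * gen g 0 * gen g 4)⁻¹} ∪
  {Cword g} ∪
  {r | Even g ∧
      r = gen g (g - 5) * bword g ((g - 2) / 2) * (gen g (g - 5))⁻¹ *
        (bword g ((g - 2) / 2))⁻¹}

/-- The word `A⁻⁷ B₁⁻² B₂⁻⁴ B₃⁻⁶ B₄⁴ B₅² B¹² C²`, where `A := a₀²`,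
`Bᵢ := aᵢa_{i+1}aᵢ(a_{i+1}aᵢa_{i+1})⁻¹`, and `B := a₀a₄a₀(a₄a₀a₄)⁻¹`. -/
def x0word (g : ℕ) : FreeGroup (Fin g) :=
  (gen g 0 ^ 2) ^ (-7 : ℤ) *
    (gen g 1 * gen g 2 * gen g 1 * (gen g 2 * gen g 1 * gen g 2)⁻¹) ^ (-2 : ℤ) *
    (gen g 2 * gen g 3 * gen g 2 * (gen g 3 * gen g 2 * gen g 3)⁻¹) ^ (-4 : ℤ) *
    (gen g 3 * gen g 4 * gen g 3 * (gen g 4 * gen g 3 * gen g 4)⁻¹) ^ (-6 : ℤ) *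
    (gen g 4 * gen g 5 * gen g 4 * (gen g 5 * gen g 4 * gen g 5)⁻¹) ^ 4 *
    (gen g 5 * gen g 6 * gen g 5 * (gen g 6 * gen g 5 * gen g 6)⁻¹) ^ 2 *
    (gen g 0 * gen g 4 * gen g 0 * (gen g 4 * gen g 0 * gen g 4)⁻¹) ^ 12 *
    (Cword g) ^ 2

namespace Orth9

open Matrix

/-! ### Transvections in the orthogonal group over `ℤ/2` -/

/-- The orthogonal group `O(g, ℤ/2)`. -/
abbrev OG (g : ℕ) := Matrix.orthogonalGroup (Fin g) (ZMod 2)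

/-- The space `(ℤ/2)^g`, with the standard dot product. -/
abbrev VV (g : ℕ) := Fin g → ZMod 2

/-- The natural action of `O(g, ℤ/2)` on `(ℤ/2)^g`. -/
def ac {g : ℕ} (A : OG g) (x : VV g) : VV g := A.1 *ᵥ x

section basics
variable {g : ℕ}

lemma zadd (c : ZMod 2) : c + c = 0 := CharTwo.add_self_eq_zero c

lemma vadd_self (x : VV g) : x + x = 0 := by funext i; exact zadd _

lemma zcases (c : ZMod 2) : c = 0 ∨ c = 1 := by revert c; decide

lemma zne0 {c : ZMod 2} (h : c ≠ 0) : c = 1 := by revert c; decide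

lemma vadd_eq {x y z : VV g} (h : x + y = z) : x = z + y := by
  rw [← h, add_assoc, vadd_self, add_zero]

lemma eq_of_vadd {x y : VV g} (h : x + y = 0) : x = y := by
  rw [vadd_eq h, zero_add]

@[simp] lemma ac_one (x : VV g) : ac 1 x = x := by simp [ac]

lemma ac_mul (A B : OG g) (x : VV g) : ac (A * B) x = ac A (ac B x) := by
  simp [ac, Matrix.mulVec_mulVec]

@[simp] lemma ac_inv_ac (A : OG g) (x : VV g) : ac A⁻¹ (ac A x) = x := by
  rw [← ac_mul]; simp

@[simp] lemma ac_ac_inv (A : OG g) (x : VV g) : ac A (ac A⁻¹ x) = x := by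
  rw [← ac_mul]; simp

lemma ac_add (A : OG g) (x y : VV g) : ac A (x + y) = ac A x + ac A y := by
  simp [ac, Matrix.mulVec_add]

lemma ac_smul (A : OG g) (c : ZMod 2) (x : VV g) : ac A (c • x) = c • ac A x := by
  simp [ac, Matrix.mulVec_smul]

lemma ac_injective (A : OG g) : Function.Injective (ac A) := fun x y h => by
  rw [← ac_inv_ac A x, h, ac_inv_ac]

lemma ac_dot (A : OG g) (x y : VV g) : ac A x ⬝ᵥ ac A y = x ⬝ᵥ y := by
  have h : (A.1)ᵀ * A.1 = 1 := (Matrix.mem_orthogonalGroup_iff' _ _).1 A.2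
  rw [ac, ac, Matrix.dotProduct_mulVec, Matrix.vecMul_mulVec, h,
    Matrix.vecMul_one]

lemma ac_ext {A B : OG g} (h : ∀ x, ac A x = ac B x) : A = B := by
  apply Subtype.ext
  exact Matrix.mulVec_injective (funext h)

/-- The matrix `1 + v vᵀ`; it is orthogonal when `v ⬝ v = 0`. -/
lemma tau_mem (v : VV g) (h : v ⬝ᵥ v = 0) :
    1 + vecMulVec v v ∈ Matrix.orthogonalGroup (Fin g) (ZMod 2) := by
  rw [Matrix.mem_orthogonalGroup_iff]
  have h1 : (1 + vecMulVec v v)ᵀ = 1 + vecMulVec v v := by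
    simp [Matrix.transpose_add, Matrix.transpose_vecMulVec]
  rw [h1, add_mul, mul_add, mul_add, Matrix.vecMulVec_mul_vecMulVec, h]
  simp only [mul_one, one_mul, zero_smul, Matrix.vecMulVec_zero, add_zero]
  rw [add_assoc]
  have : vecMulVec v v + vecMulVec v v = 0 := by
    ext i j; exact zadd _
  rw [this, add_zero]

/-- The transvection `x ↦ x + (v ⬝ x) v` along a vector with `v ⬝ v = 0` (and `1` for other `v`). -/
def tau (v : VV g) : OG g := if h : v ⬝ᵥ v = 0 then ⟨1 + vecMulVec v v, tau_mem v h⟩ else 1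

lemma tau_ac {v : VV g} (h : v ⬝ᵥ v = 0) (x : VV g) : ac (tau v) x = x + (v ⬝ᵥ x) • v := by
  rw [tau, dif_pos h, ac, Matrix.add_mulVec, Matrix.one_mulVec, Matrix.vecMulVec_mulVec]
  simp

lemma tau_fix {v x : VV g} (h : v ⬝ᵥ v = 0) (hx : v ⬝ᵥ x = 0) : ac (tau v) x = x := by
  rw [tau_ac h, hx]; simp

lemma tau_move {v x : VV g} (h : v ⬝ᵥ v = 0) (hx : v ⬝ᵥ x = 1) : ac (tau v) x = x + v := by
  rw [tau_ac h, hx]; simp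

lemma tau_sq (v : VV g) : tau v * tau v = 1 := by
  by_cases h : v ⬝ᵥ v = 0
  · apply ac_ext; intro x
    rw [ac_mul, tau_ac h, tau_ac h, dotProduct_add, dotProduct_smul, h]
    simp [add_assoc, vadd_self]
  · simp [tau, h]

lemma tau_conj (A : OG g) (v : VV g) : A * tau v * A⁻¹ = tau (ac A v) := by
  by_cases h : v ⬝ᵥ v = 0
  · have h' : ac A v ⬝ᵥ ac A v = 0 := by rw [ac_dot, h]
    apply ac_ext; intro x
    rw [ac_mul, ac_mul, tau_ac h, tau_ac h', ac_add, ac_ac_inv, ac_smul]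
    congr 2
    rw [← ac_dot A, ac_ac_inv]
  · have h' : ¬ ac A v ⬝ᵥ ac A v = 0 := by rwa [ac_dot]
    simp [tau, h, h']

lemma tau_comm {v w : VV g} (h : v ⬝ᵥ w = 0) : tau v * tau w = tau w * tau v := by
  by_cases hv : v ⬝ᵥ v = 0
  · have := tau_conj (tau v) w
    rw [tau_fix hv h] at this
    exact mul_inv_eq_iff_eq_mul.1 this
  · simp [tau, hv]

lemma tau_inv (v : VV g) : (tau v)⁻¹ = tau v := inv_eq_of_mul_eq_one_left (tau_sq v)

lemma tau_braid {v w : VV g} (hv : v ⬝ᵥ v = 0) (hw : w ⬝ᵥ w = 0) (h : v ⬝ᵥ w = 1) :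
    tau v * tau w * tau v = tau w * tau v * tau w := by
  have h1 := tau_conj (tau v) w
  have h2 := tau_conj (tau w) v
  rw [tau_move hv h, tau_inv] at h1
  rw [tau_move hw (by rw [dotProduct_comm, h]), tau_inv, add_comm] at h2
  rw [h1, h2]

/-! ### Coordinate vectors -/

/-- The `k`-th standard basis vector, indexed by `ℕ`; it is `0` if `g ≤ k`. -/
def ee (g k : ℕ) : VV g := fun i => if (i : ℕ) = k then 1 else 0

/-- The vector whose first `n` coordinates are `1` and whose other coordinates are `0`. -/
def on (g n : ℕ) : VV g := fun i => if (i : ℕ) < n then 1 else 0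

/-- The vector of the transvection corresponding to the generator `aᵢ`: for `i ≥ 1` it is
`e_{i-1} + e_i` (so `aᵢ` swaps two coordinates), and for `i = 0` it is `e₀ + e₁ + e₂ + e₃`. -/
def vv (g i : ℕ) : VV g := if i = 0 then on g 4 else ee g (i - 1) + ee g i

/-- `x` is supported on the first `n` coordinates. -/
def supp (n : ℕ) (x : VV g) : Prop := ∀ i : Fin g, n ≤ (i : ℕ) → x i = 0

lemma ee_dot {k : ℕ} (hk : k < g) (x : VV g) : ee g k ⬝ᵥ x = x ⟨k, hk⟩ := by
  rw [dotProduct, Finset.sum_eq_single ⟨k, hk⟩]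
  · simp [ee]
  · intro b _ hb
    have : (b : ℕ) ≠ k := fun h => hb (Fin.ext h)
    simp [ee, this]
  · simp

lemma dot_ee {k : ℕ} (hk : k < g) (x : VV g) : x ⬝ᵥ ee g k = x ⟨k, hk⟩ := by
  rw [dotProduct_comm, ee_dot hk]

lemma ee_ee {j k : ℕ} (hj : j < g) : ee g j ⬝ᵥ ee g k = if j = k then 1 else 0 := by
  rw [ee_dot hj]; rfl

lemma on_succ (n : ℕ) : on g (n + 1) = on g n + ee g n := by
  funext i
  simp only [on, ee, Pi.add_apply]
  rcases lt_trichotomy (i : ℕ) n with h | h | h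
  · simp [h, h.ne, Nat.lt_succ_of_lt h]
  · simp [h]
  · simp [h.ne', not_lt.2 h.le, not_lt.2 (Nat.succ_le_of_lt h)]

lemma on_zero : on g 0 = 0 := by funext i; simp [on]

lemma on_ee {n k : ℕ} (hk : k < g) : on g n ⬝ᵥ ee g k = if k < n then 1 else 0 := by
  rw [dot_ee hk]; rfl

lemma on_dot {n : ℕ} {x : VV g} (h : supp n x) : on g n ⬝ᵥ x = x ⬝ᵥ x := by
  apply Finset.sum_congr rfl
  intro i _
  by_cases hi : (i : ℕ) < n
  · simp only [on, hi, if_true]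
    generalize x i = c; revert c; decide
  · rw [h i (not_lt.1 hi)]; simp

lemma on_on {m n : ℕ} (hm : m ≤ n) (hn : n ≤ g) : on g m ⬝ᵥ on g n = (m : ZMod 2) := by
  induction m with
  | zero => simp [on_zero]
  | succ m ih =>
    rw [on_succ, add_dotProduct, ih (by omega), dotProduct_comm (ee g m), on_ee (by omega),
      if_pos (by omega)]
    push_cast; ring

lemma supp_ee {n k : ℕ} (h : k < n) : supp n (ee g k) := fun i hi => by
  have : (i : ℕ) ≠ k := by omega
  simp [ee, this]

lemma supp_on {m n : ℕ} (h : m ≤ n) : supp n (on g m) := fun i hi => by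
  have : ¬ (i : ℕ) < m := by omega
  simp [on, this]

lemma supp_add {n : ℕ} {x y : VV g} (hx : supp n x) (hy : supp n y) : supp n (x + y) := fun i hi => by
  simp [hx i hi, hy i hi]

lemma supp_mono {m n : ℕ} (h : m ≤ n) {x : VV g} (hx : supp m x) : supp n x :=
  fun i hi => hx i (h.trans hi)

lemma supp_vv {i n : ℕ} (hi : i < n) (h4 : i = 0 → 4 ≤ n) : supp n (vv g i) := by
  unfold vv
  split_ifs with h
  · exact supp_on (h4 h)
  · exact supp_add (supp_ee (by omega)) (supp_ee hi)

lemma vv_succ (i : ℕ) : vv g (i + 1) = ee g i + ee g (i + 1) := by simp [vv]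

lemma vv_zero : vv g 0 = on g 4 := by simp [vv]

lemma vv_self {i : ℕ} (hi : i < g) (h4 : i = 0 → 4 ≤ g) : vv g i ⬝ᵥ vv g i = 0 := by
  rcases i with _ | i
  · rw [vv_zero, on_on le_rfl (h4 rfl)]; rfl
  · rw [vv_succ]
    simp only [add_dotProduct, dotProduct_add, ee_ee hi, ee_ee (Nat.lt_of_succ_lt hi)]
    simp; rfl

/-- A vector is determined by its dot products with the standard basis vectors. -/
lemma vec_ext {x y : VV g} (h : ∀ k < g, ee g k ⬝ᵥ x = ee g k ⬝ᵥ y) : x = y := by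
  funext i
  have := h i i.2
  rwa [ee_dot i.2, ee_dot i.2] at this

lemma supp_iff {n : ℕ} {x : VV g} : supp n x ↔ ∀ k, n ≤ k → k < g → ee g k ⬝ᵥ x = 0 := by
  constructor
  · intro h k hk hg
    rw [ee_dot hg]; exact h _ hk
  · intro h i hi
    have := h i hi i.2
    rwa [ee_dot i.2] at this

/-- A linear system `z ⬝ xᵢ = cᵢ` is solvable as soon as every linear relation among the `xᵢ` is
satisfied by the `cᵢ`. -/
lemma exists_dot {k : ℕ} (x : Fin k → VV g) (c : Fin k → ZMod 2)
    (h : ∀ ε : Fin k → ZMod 2, ∑ i, ε i • x i = 0 → ∑ i, ε i * c i = 0) :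
    ∃ z : VV g, ∀ i, z ⬝ᵥ x i = c i := by
  let f : VV g →ₗ[ZMod 2] (Fin k → ZMod 2) :=
    { toFun := fun z i => z ⬝ᵥ x i
      map_add' := fun a b => by funext i; simp [add_dotProduct]
      map_smul' := fun r a => by funext i; simp [smul_dotProduct] }
  by_contra hc
  have hnot : c ∉ LinearMap.range f := by
    rintro ⟨z, hz⟩
    exact hc ⟨z, fun i => congrFun hz i⟩
  obtain ⟨φ, hφ, hle⟩ := Submodule.exists_le_ker_of_notMem hnot
  let ε : Fin k → ZMod 2 := fun i => φ (Pi.single i 1)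
  have hφe : ∀ y : Fin k → ZMod 2, φ y = ∑ i, ε i * y i := by
    intro y
    conv_lhs => rw [← Finset.univ_sum_single y]
    rw [map_sum]
    refine Finset.sum_congr rfl fun i _ => ?_
    have : Pi.single (M := fun _ => ZMod 2) i (y i) = y i • Pi.single i 1 := by
      rw [← Pi.single_smul]; simp
    rw [this, map_smul, smul_eq_mul, mul_comm]
  refine hφ ?_
  rw [hφe]
  apply h
  apply vec_ext
  intro j hj
  have h1 : φ (f (ee g j)) = 0 := hle ⟨_, rfl⟩
  rw [hφe] at h1
  rw [dotProduct_zero, ← h1, dotProduct_sum]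
  refine Finset.sum_congr rfl fun i _ => ?_
  rw [dotProduct_smul]; rfl

/-- The same with a solution supported on the first `n` coordinates. -/
lemma exists_dot_supp {k n : ℕ} (x : Fin k → VV g) (hx : ∀ i, supp n (x i)) (c : Fin k → ZMod 2)
    (h : ∀ ε : Fin k → ZMod 2, ∑ i, ε i • x i = 0 → ∑ i, ε i * c i = 0) :
    ∃ z : VV g, supp n z ∧ ∀ i, z ⬝ᵥ x i = c i := by
  obtain ⟨z, hz⟩ := exists_dot x c h
  refine ⟨fun i => if (i : ℕ) < n then z i else 0, fun i hi => by simp [not_lt.2 hi], fun i => ?_⟩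
  rw [← hz i]
  apply Finset.sum_congr rfl
  intro j _
  by_cases hj : (j : ℕ) < n
  · simp [hj]
  · simp [hj, hx i j (not_lt.1 hj)]

end basics

end Orth9

namespace Orth9

open Matrix

set_option linter.unusedSimpArgs false

variable {g : ℕ}

lemma ee_ne {j k : ℕ} (h : j ≠ k) : ee g j ⬝ᵥ ee g k = 0 := by
  by_cases hj : j < g
  · rw [ee_ee hj, if_neg h]
  · have : ee g j = 0 := by
      funext i; have := i.2; simp [ee, show (i : ℕ) ≠ j by omega]
    rw [this, zero_dotProduct]

lemma ee_self {k : ℕ} (h : k < g) : ee g k ⬝ᵥ ee g k = 1 := by rw [ee_ee h, if_pos rfl]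

lemma on_ee_lt {n k : ℕ} (h : k < n) (hk : k < g) : on g n ⬝ᵥ ee g k = 1 := by
  rw [on_ee hk, if_pos h]

lemma ee_on_lt {n k : ℕ} (h : k < n) (hk : k < g) : ee g k ⬝ᵥ on g n = 1 := by
  rw [dotProduct_comm, on_ee_lt h hk]

lemma on_ee_ge {n k : ℕ} (h : n ≤ k) : on g n ⬝ᵥ ee g k = 0 := by
  apply Finset.sum_eq_zero
  intro i _
  by_cases hi : (i : ℕ) = k
  · simp [on, show ¬ (i : ℕ) < n by omega]
  · simp [ee, hi]

lemma ee_on_ge {n k : ℕ} (h : n ≤ k) : ee g k ⬝ᵥ on g n = 0 := by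
  rw [dotProduct_comm, on_ee_ge h]

lemma on_on' {m n : ℕ} (hm : m ≤ n) (hn : n ≤ g) : on g n ⬝ᵥ on g m = (m : ZMod 2) := by
  rw [dotProduct_comm, on_on hm hn]

lemma ee_supp {n k : ℕ} {x : VV g} (h : supp n x) (hk : n ≤ k) : ee g k ⬝ᵥ x = 0 := by
  by_cases hg : k < g
  · exact supp_iff.1 h k hk hg
  · have : ee g k = 0 := by
      funext i; have := i.2; simp [ee, show (i : ℕ) ≠ k by omega]
    rw [this, zero_dotProduct]

lemma supp_ee_dot {n k : ℕ} {x : VV g} (h : supp n x) (hk : n ≤ k) : x ⬝ᵥ ee g k = 0 := by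
  rw [dotProduct_comm, ee_supp h hk]

lemma dot_on {n : ℕ} {x : VV g} (h : supp n x) : x ⬝ᵥ on g n = x ⬝ᵥ x := by
  rw [dotProduct_comm, on_dot h]

lemma dot_self_add (x y : VV g) : (x + y) ⬝ᵥ (x + y) = x ⬝ᵥ x + y ⬝ᵥ y := by
  rw [add_dotProduct, dotProduct_add, dotProduct_add, dotProduct_comm y x]
  generalize x ⬝ᵥ x = a; generalize x ⬝ᵥ y = b; generalize y ⬝ᵥ y = c
  revert a b c; decide

lemma supp_pred {n : ℕ} {x : VV g} (h : supp (n + 1) x) (h0 : ee g n ⬝ᵥ x = 0) : supp n x := by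
  rw [supp_iff] at *
  intro k hk hg
  rcases Nat.eq_or_lt_of_le hk with rfl | hk
  · exact h0
  · exact h k hk hg

lemma exists_zero {n : ℕ} {x : VV g} (h : supp n x) (h0 : x ≠ on g n) :
    ∃ m < n, ee g m ⬝ᵥ x = 0 := by
  by_contra hc
  push Not at hc
  refine h0 (vec_ext fun k hk => ?_)
  by_cases hkn : k < n
  · rw [ee_on_lt hkn hk, zne0 (hc k hkn)]
  · rw [ee_on_ge (by omega), ee_supp h (by omega)]

/-! ### Groups with Coxeter generators mapping to the transvections -/

/-- Elements `p₀, …, p_{g-1}` of a group satisfying the Coxeter relations of the presentation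
(squares, commutations and braid relations, but not the other relators), with a homomorphism `ρ`
to `O(g, ℤ/2)` sending `pᵢ` to the transvection along `vv g i`. -/
structure Cox {H : Type*} [Group H] (g : ℕ) (p : ℕ → H) (ρ : H →* OG g) : Prop where
  hg : 7 ≤ g
  map : ∀ i < g, ρ (p i) = tau (vv g i)
  sq : ∀ i < g, p i * p i = 1
  comm : ∀ i j, j < g → ((0 < i ∧ i + 1 < j) ∨ (i = 0 ∧ 1 ≤ j ∧ j ≠ 4)) → p i * p j = p j * p i
  br : ∀ i, 1 ≤ i → i + 1 < g → p i * p (i + 1) * p i = p (i + 1) * p i * p (i + 1)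
  br0 : p 0 * p 4 * p 0 = p 4 * p 0 * p 4

/-- The subgroup generated by those `pᵢ` which act on the first `n` coordinates only. -/
def DD {H : Type*} [Group H] (p : ℕ → H) (n : ℕ) : Subgroup H :=
  Subgroup.closure {x | ∃ i, i < n ∧ (i = 0 → 4 ≤ n) ∧ x = p i}

section cox
variable {H : Type*} [Group H] {p : ℕ → H} {ρ : H →* OG g}

lemma DD_gen {n i : ℕ} (hi : i < n) (h4 : i = 0 → 4 ≤ n) : p i ∈ DD p n :=
  Subgroup.subset_closure ⟨i, hi, h4, rfl⟩

lemma DD_mono {m n : ℕ} (h : m ≤ n) : DD p m ≤ DD p n :=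
  Subgroup.closure_mono fun _ ⟨i, hi, h4, hx⟩ => ⟨i, by omega, fun h0 => (h4 h0).trans h, hx⟩

lemma DD_one : DD p 1 = ⊥ := by
  rw [DD, Subgroup.closure_eq_bot_iff]
  rintro x ⟨i, hi, h4, rfl⟩
  have := h4 (by omega)
  omega

/-- To prove a property for all of `DD p n`, it suffices to have it closed under left
multiplication by generators (these are involutions). -/
lemma Cox.ind (hc : Cox g p ρ) {n : ℕ} (hn : n ≤ g) {P : H → Prop} (h1 : P 1)
    (hs : ∀ i, i < n → (i = 0 → 4 ≤ n) → ∀ d ∈ DD p n, P d → P (p i * d)) {d : H}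
    (hd : d ∈ DD p n) : P d := by
  induction hd using Subgroup.closure_induction_left with
  | one => exact h1
  | mul_left x hx y hy ih =>
    obtain ⟨i, hi, h4, rfl⟩ := hx
    exact hs i hi h4 y hy ih
  | inv_mul_cancel x hx y hy ih =>
    obtain ⟨i, hi, h4, rfl⟩ := hx
    rw [inv_eq_of_mul_eq_one_left (hc.sq i (by omega))]
    exact hs i hi h4 y hy ih

lemma Cox.indr (hc : Cox g p ρ) {n : ℕ} (hn : n ≤ g) {P : H → Prop} (h1 : P 1)
    (hs : ∀ i, i < n → (i = 0 → 4 ≤ n) → ∀ d ∈ DD p n, P d → P (d * p i)) {d : H}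
    (hd : d ∈ DD p n) : P d := by
  induction hd using Subgroup.closure_induction_right with
  | one => exact h1
  | mul_right y hy x hx ih =>
    obtain ⟨i, hi, h4, rfl⟩ := hx
    exact hs i hi h4 y hy ih
  | mul_inv_cancel y hy x hx ih =>
    obtain ⟨i, hi, h4, rfl⟩ := hx
    rw [inv_eq_of_mul_eq_one_left (hc.sq i (by omega))]
    exact hs i hi h4 y hy ih

lemma Cox.vv0 (hc : Cox g p ρ) {i : ℕ} (hi : i < g) : vv g i ⬝ᵥ vv g i = 0 :=
  vv_self hi fun _ => by have := hc.hg; omega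

lemma Cox.act (hc : Cox g p ρ) {i : ℕ} (hi : i < g) (x : VV g) :
    ac (ρ (p i)) x = x + (vv g i ⬝ᵥ x) • vv g i := by
  rw [hc.map i hi, tau_ac (hc.vv0 hi)]

/-- Elements commuting with all generators of `DD p n`. -/
lemma Cox.comm_of (hc : Cox g p ρ) {n : ℕ} (hn : n ≤ g) {s : H}
    (h : ∀ i, i < n → (i = 0 → 4 ≤ n) → s * p i = p i * s) {d : H} (hd : d ∈ DD p n) :
    s * d = d * s := by
  refine hc.ind hn (P := fun d => s * d = d * s) (by simp) ?_ hd
  intro i hi h4 d _ ih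
  rw [← mul_assoc, h i hi h4, mul_assoc, ih, mul_assoc]

/-- `p_{n+1}` commutes with `DD p n` (for `n = 3`, the generator `p 0` is not in `DD p n`). -/
lemma Cox.comm_DD (hc : Cox g p ρ) {n : ℕ} (hn : n + 1 < g) {d : H}
    (hd : d ∈ DD p n) : p (n + 1) * d = d * p (n + 1) := by
  refine hc.comm_of (by omega) (fun i hi h4 => ?_) hd
  refine (hc.comm i (n + 1) hn ?_).symm
  rcases Nat.eq_zero_or_pos i with h | h
  · have := h4 h; right; omega
  · left; omega

lemma Cox.fix_ee (hc : Cox g p ρ) {n k : ℕ} (hn : n ≤ g) (hk : n ≤ k) {d : H}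
    (hd : d ∈ DD p n) : ac (ρ d) (ee g k) = ee g k := by
  refine hc.ind hn (P := fun d => ac (ρ d) (ee g k) = ee g k) (by simp) ?_ hd
  intro i hi h4 d _ ih
  rw [map_mul, ac_mul, ih, hc.act (by omega), supp_ee_dot (supp_vv hi h4) hk]
  simp

lemma Cox.fix_on (hc : Cox g p ρ) {n : ℕ} (hn : n ≤ g) {d : H}
    (hd : d ∈ DD p n) : ac (ρ d) (on g n) = on g n := by
  refine hc.ind hn (P := fun d => ac (ρ d) (on g n) = on g n) (by simp) ?_ hd
  intro i hi h4 d _ ih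
  rw [map_mul, ac_mul, ih, hc.act (by omega), dot_on (supp_vv hi h4), hc.vv0 (by omega)]
  simp

lemma Cox.supp_act (hc : Cox g p ρ) {n : ℕ} (hn : n ≤ g) {d : H}
    (hd : d ∈ DD p n) {x : VV g} (hx : supp n x) : supp n (ac (ρ d) x) := by
  rw [supp_iff] at *
  intro k hk hkg
  have := hc.fix_ee hn hk ((DD p n).inv_mem hd)
  rw [← ac_dot (ρ d⁻¹), this, map_inv, ac_inv_ac, hx k hk hkg]

/-- The vectors `v` whose transvection is induced by an element of `DD p n`. -/
def TT (p : ℕ → H) (ρ : H →* OG g) (n : ℕ) (v : VV g) : Prop :=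
  v ⬝ᵥ v = 0 ∧ ∃ d ∈ DD p n, ρ d = tau v

lemma Cox.TT_gen (hc : Cox g p ρ) {n i : ℕ} (hn : n ≤ g) (hi : i < n) (h4 : i = 0 → 4 ≤ n) :
    TT p ρ n (vv g i) :=
  ⟨hc.vv0 (by omega), p i, DD_gen hi h4, hc.map i (by omega)⟩

lemma TT_add {n : ℕ} {v w : VV g} (hv : TT p ρ n v) (hw : TT p ρ n w) (h : v ⬝ᵥ w = 1) :
    TT p ρ n (w + v) := by
  obtain ⟨hv0, d, hd, hdv⟩ := hv
  obtain ⟨hw0, e, he, hew⟩ := hw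
  refine ⟨by rw [dot_self_add, hv0, hw0, add_zero], d * e * d⁻¹,
    (DD p n).mul_mem ((DD p n).mul_mem hd he) ((DD p n).inv_mem hd), ?_⟩
  rw [map_mul, map_mul, map_inv, hdv, hew, tau_conj, tau_move hv0 h]

lemma Cox.TT_swap (hc : Cox g p ρ) {n i j : ℕ} (hn : n ≤ g) (hij : i < j) (hj : j < n) :
    TT p ρ n (ee g i + ee g j) := by
  induction j, hij using Nat.le_induction with
  | base => rw [← vv_succ]; exact hc.TT_gen hn hj (by omega)
  | succ j hij ih =>
    have h1 := ih (by omega)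
    have h2 := hc.TT_gen hn hj (by omega)
    rw [vv_succ] at h2
    have := TT_add h1 h2 (by
      simp (disch := omega) only [add_dotProduct, dotProduct_add, ee_ne, ee_self]; simp)
    convert this using 1
    linear_combination -vadd_self (ee g j)

lemma TT_move {n : ℕ} {v x y : VV g} (hv : TT p ρ n v) (h : v ⬝ᵥ y = 1) (hxy : y + v = x)
    {o : VV g} (hy : ∃ d ∈ DD p n, ac (ρ d) o = y) : ∃ d ∈ DD p n, ac (ρ d) o = x := by
  obtain ⟨hv0, d, hd, hdv⟩ := hv
  obtain ⟨e, he, hey⟩ := hy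
  exact ⟨d * e, (DD p n).mul_mem hd he, by rw [map_mul, ac_mul, hey, hdv, tau_move hv0 h, hxy]⟩

/-- `DD p n` acts transitively on the odd vectors supported on the first `n` coordinates and
different from the all-one vector. -/
lemma Cox.trans (hc : Cox g p ρ) (n : ℕ) (hn : n + 1 ≤ g) (x : VV g) (hx : supp (n + 1) x)
    (h1 : x ⬝ᵥ x = 1) (hx1 : x ≠ on g (n + 1)) : ∃ d ∈ DD p (n + 1), ac (ρ d) (ee g n) = x := by
  have hg := hc.hg
  induction n generalizing x with
  | zero =>
    obtain ⟨m, hm, h0⟩ := exists_zero hx hx1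
    obtain rfl : m = 0 := by omega
    have := supp_pred hx h0
    have hx0 : x = 0 := by
      funext i; exact this i (Nat.zero_le _)
    rw [hx0] at h1; simp at h1
  | succ k ih =>
    have ih' : ∀ y, supp (k + 1) y → y ⬝ᵥ y = 1 → y ≠ on g (k + 1) →
        ∃ d ∈ DD p (k + 1 + 1), ac (ρ d) (ee g (k + 1)) = y := by
      intro y hy hy1 hyn
      obtain ⟨d, hd, hdy⟩ := ih (by omega) y hy hy1 hyn
      refine ⟨d * p (k + 1), (DD p _).mul_mem (DD_mono (by omega) hd)
        (DD_gen (by omega) (by omega)), ?_⟩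
      rw [map_mul, ac_mul, hc.act (by omega), vv_succ]
      have : (ee g k + ee g (k + 1)) ⬝ᵥ ee g (k + 1) = 1 := by
        simp (disch := omega) only [add_dotProduct, dotProduct_add, ee_ne, ee_self]; simp
      rw [this, one_smul, add_comm (ee g k), ← add_assoc, vadd_self, zero_add, hdy]
    -- vectors with vanishing last coordinate
    have key : ∀ y, supp (k + 1) y → y ⬝ᵥ y = 1 →
        ∃ d ∈ DD p (k + 1 + 1), ac (ρ d) (ee g (k + 1)) = y := by
      intro y hy hy1
      by_cases hyn : y = on g (k + 1)
      swap
      · exact ih' y hy hy1 hyn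
      subst hyn
      rw [on_on le_rfl (by omega)] at hy1
      have hodd : Odd (k + 1) := (ZMod.natCast_eq_one_iff_odd).1 hy1
      have hswap : ∀ i j, i < j → j < k + 1 + 1 → TT p ρ (k + 1 + 1) (ee g i + ee g j) :=
        fun i j hij hj => hc.TT_swap (by omega) hij hj
      have hbase : ∃ d ∈ DD p (k + 1 + 1), ac (ρ d) (ee g (k + 1)) = ee g (k + 1) :=
        ⟨1, one_mem _, by simp⟩
      rcases Nat.lt_or_ge k 4 with hk | hk
      · have : k = 0 ∨ k = 2 := by
          rcases hodd with ⟨r, hr⟩; omega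
        rcases this with rfl | rfl
        · refine TT_move (hswap 0 1 (by omega) (by omega)) ?_ ?_ hbase
          · simp (disch := omega) only [add_dotProduct, dotProduct_add, ee_ne, ee_self]; simp
          · rw [on_succ, on_zero]; linear_combination vadd_self (ee g 1)
        · refine TT_move (hc.TT_gen (i := 0) (by omega) (by omega) (by omega)) ?_ ?_ hbase
          · rw [vv_zero, on_ee_lt (by omega) (by omega)]
          · rw [vv_zero, on_succ 3, add_comm, add_assoc, vadd_self, add_zero]
      · have h4 := hc.TT_gen (n := k + 1 + 1) (i := 0) (by omega) (by omega) (by omega)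
        rw [vv_zero] at h4
        have hb := ih' (on g (k + 1) + on g 4 + ee g 0 + ee g 1)
          (supp_add (supp_add (supp_add (supp_on le_rfl) (supp_on (by omega))) (supp_ee (by omega)))
            (supp_ee (by omega))) (by
            rw [dot_self_add, dot_self_add, dot_self_add, on_on le_rfl (by omega),
              on_on le_rfl (by omega), hy1, ee_self (by omega), ee_self (by omega)]; decide)
          (fun h => by
            have h' := congrArg (fun z => ee g 2 ⬝ᵥ z) h
            simp (disch := omega) only [add_dotProduct, dotProduct_add, ee_ne, ee_self,
              ee_on_lt] at h'
            revert h'; decide)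
        have h2 := TT_move (hswap 1 (k + 1) (by omega) (by omega)) (by
          simp (disch := omega) only [add_dotProduct, dotProduct_add, ee_ne, ee_self,
              ee_on_lt, ee_on_ge]
          decide) rfl hb
        have h3 := TT_move h4 (by
          simp (disch := omega) only [add_dotProduct, dotProduct_add, ee_ne, ee_self,
              ee_on_lt, ee_on_ge, on_ee_lt, on_ee_ge, on_on]
          decide) rfl h2
        refine TT_move (hswap 0 (k + 1) (by omega) (by omega)) ?_ ?_ h3
        · simp (disch := omega) only [add_dotProduct, dotProduct_add, ee_ne, ee_self,
              ee_on_lt, ee_on_ge, on_ee_lt, on_ee_ge, on_on]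
          decide
        · generalize on g (k + 1) = a; generalize on g 4 = b
          generalize ee g 0 = c; generalize ee g 1 = d; generalize ee g (k + 1) = e
          funext i
          simp only [Pi.add_apply]
          generalize a i = a; generalize b i = b; generalize c i = c; generalize d i = d
          generalize e i = e
          revert a b c d e; decide
    rcases zcases (ee g (k + 1) ⬝ᵥ x) with h0 | h0
    · exact key x (supp_pred hx h0) h1
    · obtain ⟨m, hm, hm0⟩ := exists_zero hx hx1
      have hmk : m ≠ k + 1 := by rintro rfl; rw [h0] at hm0; exact one_ne_zero hm0
      refine TT_move (hc.TT_swap hn (show m < k + 1 by omega) (by omega)) (y :=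
        x + (ee g m + ee g (k + 1))) ?_ (by rw [add_assoc, vadd_self, add_zero]) (key _ ?_ ?_)
      · simp (disch := omega) only [add_dotProduct, dotProduct_add, ee_ne, ee_self, hm0, h0]
        decide
      · refine supp_pred (supp_add hx (supp_add (supp_ee (by omega)) (supp_ee (by omega)))) ?_
        simp (disch := omega) only [dotProduct_add, ee_ne, ee_self, h0]
        decide
      · rw [dot_self_add, dot_self_add, ee_self (by omega), ee_self (by omega), h1]; decide

end cox

end Orth9

namespace Orth9

open Matrix

/-! ### A simple connectedness criterion

In a group `H`, let `K` be a subgroup and `s` an involution.  The cosets `dK` form a graph, with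
`dK` adjacent to the cosets contained in `dKsK`.  If this graph is a covering of a graph on
`V` such that triangles lift to triangles, and if the cycles of the graph on `V` decompose into
triangles, then the covering is an isomorphism. -/

/-- The cosets `dK` and `d'K` are adjacent: `d' ∈ d K s K`. -/
def AdjC {H : Type*} [Group H] (K : Subgroup H) (s d d' : H) : Prop :=
  ∃ k ∈ K, ∃ k' ∈ K, d' = d * k * s * k'

section adj
variable {H : Type*} [Group H] {K : Subgroup H} {s d d' k : H}

lemma AdjC.symm (hs : s * s = 1) (h : AdjC K s d d') : AdjC K s d' d := by
  obtain ⟨k, hk, k', hk', rfl⟩ := h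
  refine ⟨k'⁻¹, K.inv_mem hk', k⁻¹, K.inv_mem hk, ?_⟩
  have : s⁻¹ = s := inv_eq_of_mul_eq_one_left hs
  calc d = d * k * s * k' * k'⁻¹ * s⁻¹ * k⁻¹ := by group
    _ = _ := by rw [this]

lemma AdjC.mul_right (h : AdjC K s d d') (hk : k ∈ K) : AdjC K s d (d' * k) := by
  obtain ⟨a, ha, b, hb, rfl⟩ := h
  exact ⟨a, ha, b * k, K.mul_mem hb hk, by group⟩

lemma AdjC.mul_left (h : AdjC K s d d') (hk : k ∈ K) : AdjC K s (d * k) d' := by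
  obtain ⟨a, ha, b, hb, rfl⟩ := h
  exact ⟨k⁻¹ * a, K.mul_mem (K.inv_mem hk) ha, b, hb, by group⟩

lemma AdjC.right_of (h : AdjC K s d d') {e : H} (hk : d'⁻¹ * e ∈ K) : AdjC K s d e := by
  have := h.mul_right hk
  rwa [mul_inv_cancel_left] at this

lemma AdjC.mem {D : Subgroup H} (hK : K ≤ D) (hs : s ∈ D) (hd : d ∈ D) (h : AdjC K s d d') :
    d' ∈ D := by
  obtain ⟨k, hk, k', hk', rfl⟩ := h
  exact D.mul_mem (D.mul_mem (D.mul_mem hd (hK hk)) hs) (hK hk')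

end adj

/-- The base graph has vertices `vert`, a base vertex `o`, its neighbours, the set `N2` of vertices
at distance two and possibly one more vertex `a`, all of whose neighbours are in `N2`.  Hypotheses
`c1`, `c2`, `c3` decompose its cycles into triangles. -/
lemma cover {H V : Type*} [Group H] (K D : Subgroup H) (s : H) (o a : V) (π : H → V)
    (vert : V → Prop) (adj : V → V → Prop) (N2 : V → Prop)
    (hKD : K ≤ D) (hs : s ∈ D) (ss : s * s = 1)
    (hD : ∀ P : H → Prop, P 1 → (∀ d ∈ D, P d → ∀ k ∈ K, P (d * k)) →
      (∀ d ∈ D, P d → P (d * s)) → ∀ d ∈ D, P d)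
    (π1 : π 1 = o) (πK : ∀ d, ∀ k ∈ K, π (d * k) = π d) (πv : ∀ d ∈ D, vert (π d))
    (πadj : ∀ d ∈ D, ∀ d', AdjC K s d d' → adj (π d) (π d'))
    (uniq : ∀ d ∈ D, ∀ d' d'', AdjC K s d d' → AdjC K s d d'' → π d' = π d'' → d'⁻¹ * d'' ∈ K)
    (lift : ∀ d ∈ D, ∀ y, vert y → adj (π d) y → ∃ d', AdjC K s d d' ∧ π d' = y)
    (tri : ∀ d ∈ D, ∀ d' d'', AdjC K s d d' → AdjC K s d d'' → adj (π d') (π d'') →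
      AdjC K s d' d'')
    (asymm : ∀ x y, adj x y → adj y x)
    (cls : ∀ y, vert y → y = o ∨ adj o y ∨ y = a ∨ N2 y)
    (h1a : ∀ y, vert y → adj o y → ¬ adj y a)
    (ha2 : ∀ y, vert y → adj a y → N2 y)
    (hN2 : ∀ y, N2 y → ¬ adj o y) (oo : ¬ adj o o) (hNo : ¬ N2 o) (oa : o ≠ a)
    (c1 : ∀ y z z', vert y → vert z → vert z' → N2 y → adj o z → adj y z → adj o z' → adj y z' →
      z = z' ∨ adj z z' ∨ ∃ w, vert w ∧ adj o w ∧ adj y w ∧ adj z w ∧ adj z' w)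
    (c2 : ∀ y y', vert y → vert y' → N2 y → N2 y' → adj y y' →
      ∃ z, vert z ∧ adj o z ∧ adj y z ∧ adj y' z)
    (c3 : ∀ y y', vert a → vert y → vert y' → adj a y → adj a y' →
      y = y' ∨ adj y y' ∨ ∃ w, vert w ∧ adj a w ∧ adj y w ∧ adj y' w) :
    ∀ d ∈ D, π d = o → d ∈ K := by
  have mem : ∀ {d d'}, d ∈ D → AdjC K s d d' → d' ∈ D := fun hd h => h.mem hKD hs hd
  have one := D.one_mem
  -- moving between two adjacent common neighbours of `o` and `π d`
  have down : ∀ d1 d d', AdjC K s 1 d1 → AdjC K s d1 d → AdjC K s d d' → adj (π d1) (π d') →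
      adj o (π d') → AdjC K s 1 d' := by
    intro d1 d d' h1 h2 h3 h4 h5
    have e1 := mem one h1
    have h6 := tri d (mem e1 h2) d1 d' (h2.symm ss) h3 h4
    exact tri d1 e1 1 d' (h1.symm ss) h6 (by rwa [π1])
  let L2 : H → Prop := fun d => N2 (π d) ∧ ∃ d1, AdjC K s 1 d1 ∧ AdjC K s d1 d
  have L2D : ∀ d, L2 d → d ∈ D := by
    rintro d ⟨_, d1, h1, h2⟩
    exact mem (mem one h1) h2
  have L21 : ∀ d, L2 d → ∀ d', AdjC K s d d' → adj o (π d') → AdjC K s 1 d' := by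
    rintro d hL d' h ho
    have hdD := L2D d hL
    obtain ⟨hN, d1, h1, h2⟩ := hL
    have e1 := mem one h1
    have ho1 := πadj 1 one d1 h1
    rw [π1] at ho1
    have hy1 := asymm _ _ (πadj d1 e1 d h2)
    have hy' := πadj d hdD d' h
    rcases c1 (π d) (π d1) (π d') (πv _ hdD) (πv _ e1) (πv _ (mem hdD h)) hN ho1 hy1 ho hy' with
      h0 | h0 | ⟨w, hw, how, hyw, hzw, hzw'⟩
    · exact h1.right_of (uniq d hdD d1 d' (h2.symm ss) h h0)
    · exact down d1 d d' h1 h2 h h0 ho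
    · obtain ⟨dw, hdw, rfl⟩ := lift d hdD w hw hyw
      have := down d1 d dw h1 h2 hdw hzw how
      exact down dw d d' this (hdw.symm ss) h (asymm _ _ hzw') ho
  have L22 : ∀ d, L2 d → ∀ d', AdjC K s d d' → N2 (π d') → L2 d' := by
    intro d hL d' h hN
    have hdD := L2D d hL
    obtain ⟨z, hz, hoz, hyz, hyz'⟩ := c2 (π d) (π d') (πv _ hdD) (πv _ (mem hdD h)) hL.1 hN
      (πadj d hdD d' h)
    obtain ⟨dz, hdz, rfl⟩ := lift d hdD z hz hyz
    exact ⟨hN, dz, L21 d hL dz hdz hoz, tri d hdD dz d' hdz h (asymm _ _ hyz')⟩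
  have main : ∀ d ∈ D, (d ∈ K) ∨ AdjC K s 1 d ∨ L2 d ∨ (π d = a ∧ ∃ d2, L2 d2 ∧ AdjC K s d2 d) := by
    refine hD _ (Or.inl K.one_mem) ?_ ?_
    · intro d hd h k hk
      rcases h with h | h | ⟨hN, d1, h1, h2⟩ | ⟨ha, d2, h2, h3⟩
      · exact Or.inl (K.mul_mem h hk)
      · exact Or.inr (Or.inl (h.mul_right hk))
      · exact Or.inr (Or.inr (Or.inl ⟨by rwa [πK d k hk], d1, h1, h2.mul_right hk⟩))
      · exact Or.inr (Or.inr (Or.inr ⟨by rwa [πK d k hk], d2, h2, h3.mul_right hk⟩))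
    · intro d hd h
      have hA : AdjC K s d (d * s) := ⟨1, K.one_mem, 1, K.one_mem, by group⟩
      have hD' := mem hd hA
      generalize d * s = d' at hA hD'
      have hadj := πadj d hd d' hA
      rcases h with h | h | hL | ⟨ha, d2, h2, h3⟩
      · refine Or.inr (Or.inl ?_)
        have := hA.mul_left (K.inv_mem h)
        rwa [mul_inv_cancel] at this
      · have ho := πadj 1 one d h
        rw [π1] at ho
        rcases cls _ (πv d' hD') with h0 | h0 | h0 | h0
        · left
          have := uniq d hd 1 d' (h.symm ss) hA (by rw [π1, h0])
          simpa using this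
        · exact Or.inr (Or.inl (tri d hd 1 d' (h.symm ss) hA (by rwa [π1])))
        · exact (h1a _ (πv d hd) ho (h0 ▸ hadj)).elim
        · exact Or.inr (Or.inr (Or.inl ⟨h0, d, h, hA⟩))
      · rcases cls _ (πv d' hD') with h0 | h0 | h0 | h0
        · exact (hN2 _ hL.1 (asymm _ _ (h0 ▸ hadj))).elim
        · exact Or.inr (Or.inl (L21 d hL d' hA h0))
        · exact Or.inr (Or.inr (Or.inr ⟨h0, d, hL, hA⟩))
        · exact Or.inr (Or.inr (Or.inl (L22 d hL d' hA h0)))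
      · refine Or.inr (Or.inr (Or.inl ?_))
        have hd2 := L2D d2 h2
        have hv := πv d hd
        rw [ha] at hadj hv
        have hadj2 := asymm _ _ (πadj d2 hd2 d h3)
        rw [ha] at hadj2
        have hN' := ha2 _ (πv d' hD') hadj
        rcases c3 (π d2) (π d') hv (πv _ hd2) (πv _ hD') hadj2 hadj with
          h0 | h0 | ⟨w, hw, haw, hyw, hyw'⟩
        · have := uniq d hd d2 d' (h3.symm ss) hA h0
          obtain ⟨_, d1, h4, h5⟩ := h2
          exact ⟨hN', d1, h4, h5.right_of this⟩
        · exact L22 d2 h2 d' (tri d hd d2 d' (h3.symm ss) hA h0) hN'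
        · obtain ⟨dw, hdw, rfl⟩ := lift d hd w hw (by rwa [ha])
          have hwN := ha2 _ hw haw
          have := L22 d2 h2 dw (tri d hd d2 dw (h3.symm ss) hdw hyw) hwN
          exact L22 dw this d' (tri d hd dw d' hdw hA (asymm _ _ hyw')) hN'
  intro d hd ho
  rcases main d hd with h | h | hL | ⟨ha, -⟩
  · exact h
  · have := πadj 1 one d h
    rw [π1, ho] at this
    exact (oo this).elim
  · exact (hNo (ho ▸ hL.1)).elim
  · exact (oa (ho.symm.trans ha)).elim

end Orth9

namespace Orth9

open Matrix

set_option linter.unusedSimpArgs false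

variable {g : ℕ}

/-! ### The graph of odd vectors -/

/-- The odd vectors supported on the first `n` coordinates, except the all-one vector. -/
def vert (n : ℕ) (x : VV g) : Prop := supp n x ∧ x ⬝ᵥ x = 1 ∧ x ≠ on g n

/-- Two odd vectors are adjacent if they are orthogonal and their sum is not the all-one vector. -/
def adjv (n : ℕ) (x y : VV g) : Prop := x ⬝ᵥ y = 0 ∧ x + y ≠ on g n

lemma adjv_symm {n : ℕ} {x y : VV g} (h : adjv n x y) : adjv n y x :=
  ⟨by rw [dotProduct_comm, h.1], by rw [add_comm]; exact h.2⟩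

/-- A common odd vector orthogonal to four given ones exists unless the all-one vector is
in their span. -/
lemma exists_perp {n : ℕ} {x y z w : VV g} (hx : supp n x) (hy : supp n y) (hz : supp n z)
    (hw : supp n w) (h : ∀ a b c d : ZMod 2, a • x + b • y + c • z + d • w ≠ on g n) :
    ∃ v : VV g, supp n v ∧ v ⬝ᵥ v = 1 ∧ x ⬝ᵥ v = 0 ∧ y ⬝ᵥ v = 0 ∧ z ⬝ᵥ v = 0 ∧ w ⬝ᵥ v = 0 := by
  obtain ⟨v, hv, hvd⟩ := exists_dot_supp (n := n) ![x, y, z, w, on g n]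
    (by intro i; fin_cases i <;> simp [*, supp_on]) ![0, 0, 0, 0, 1] (by
      intro ε hε
      simp only [Fin.sum_univ_succ, Fin.sum_univ_zero] at hε ⊢
      simp at hε ⊢
      rcases zcases (ε 4) with h4 | h4
      · exact h4
      · exfalso
        apply h (ε 0) (ε 1) (ε 2) (ε 3)
        rw [h4, one_smul] at hε
        apply eq_of_vadd
        rw [← hε]; abel)
  have h0 := hvd 0
  have h1 := hvd 1
  have h2 := hvd 2
  have h3 := hvd 3
  have h4 := hvd 4
  simp at h0 h1 h2 h3 h4
  refine ⟨v, hv, by rw [← dot_on hv, h4], ?_, ?_, ?_, ?_⟩ <;> rw [dotProduct_comm] <;> assumption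

/-- Four vectors do not span the vectors supported on the first `n ≥ 5` coordinates. -/
lemma exists_not_span {n : ℕ} (hn : 5 ≤ n) (hg : n ≤ g) (x y z w : VV g) :
    ∃ v : VV g, supp n v ∧ ∀ a b c d : ZMod 2, a • x + b • y + c • z + d • w ≠ v := by
  by_contra hc
  push Not at hc
  let f : (Fin 5 → ZMod 2) → VV g := fun t i => if h : (i : ℕ) < 5 then t ⟨i, h⟩ else 0
  have hf : ∀ t, supp n (f t) := fun t i hi => by
    simp [f, show ¬ (i : ℕ) < 5 by omega]
  have hinj : Function.Injective f := by
    intro t t' h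
    funext j
    have := congrFun h ⟨j, by omega⟩
    simpa [f] using this
  choose a b c d he using fun t => hc (f t) (hf t)
  have : Function.Injective (fun t => (![a t, b t, c t, d t] : Fin 4 → ZMod 2)) := by
    intro t t' h
    apply hinj
    have h0 := congrFun h 0
    have h1 := congrFun h 1
    have h2 := congrFun h 2
    have h3 := congrFun h 3
    simp at h0 h1 h2 h3
    rw [← he t, ← he t', h0, h1, h2, h3]
  have := Fintype.card_le_of_injective _ this
  simp at this

lemma vert.odd {n : ℕ} {x : VV g} (h : vert n x) : x ⬝ᵥ on g n = 1 := by rw [dot_on h.1, h.2.1]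

lemma vert.odd' {n : ℕ} {x : VV g} (h : vert n x) : on g n ⬝ᵥ x = 1 := by rw [on_dot h.1, h.2.1]

/-- Two common neighbours of non-orthogonal vertices `o` and `y` are linked by a path of length at
most two in the graph of common neighbours: condition `c1` of `cover`. -/
lemma comb1 {n : ℕ} {o y z z' : VV g} (ho : vert n o) (hy : vert n y) (hz : vert n z)
    (hz' : vert n z') (hN : o ⬝ᵥ y = 1) (h1 : adjv n o z) (h2 : adjv n y z)
    (h3 : adjv n o z') (h4 : adjv n y z') :
    z = z' ∨ adjv n z z' ∨
      ∃ w, vert n w ∧ adjv n o w ∧ adjv n y w ∧ adjv n z w ∧ adjv n z' w := by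
  have hoJ := ho.odd
  rcases zcases (z ⬝ᵥ z') with h0 | h0
  · refine Or.inr (Or.inl ⟨h0, fun h => ?_⟩)
    have := congrArg (fun v => o ⬝ᵥ v) h
    simp only [dotProduct_add, h1.1, h3.1, hoJ] at this
    revert this; decide
  · right; right
    have hN' : y ⬝ᵥ o = 1 := by rw [dotProduct_comm, hN]
    have h0' : z' ⬝ᵥ z = 1 := by rw [dotProduct_comm, h0]
    obtain ⟨w, hw, hw1, how, hyw, hzw, hzw'⟩ := exists_perp ho.1 hy.1 hz.1 hz'.1 (by
      intro a b c d h
      have e1 := congrArg (fun v => o ⬝ᵥ v) h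
      have e2 := congrArg (fun v => z ⬝ᵥ v) h
      simp only [dotProduct_add, dotProduct_smul, h1.1, h3.1, hoJ, ho.2.1, hN,
        (adjv_symm h1).1, (adjv_symm h2).1, h0, hz.2.1, hz.odd, smul_eq_mul] at e1 e2
      rcases zcases a with rfl | rfl <;> rcases zcases c with rfl | rfl <;>
      rcases zcases b with rfl | rfl <;> rcases zcases d with rfl | rfl <;>
        first
        | (exfalso; revert e1; decide)
        | (exfalso; revert e2; decide)
        | (simp only [zero_smul, one_smul, zero_add, add_zero] at h
           first | exact h1.2 h | exact h2.2 h | exact h3.2 h | exact h4.2 h))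
    have hwo : w ⬝ᵥ o = 0 := by rw [dotProduct_comm, how]
    -- each exceptional case contradicts one of the orthogonality relations
    refine ⟨w, ⟨hw, hw1, fun h => ?_⟩, ⟨how, fun h => ?_⟩, ⟨hyw, fun h => ?_⟩, ⟨hzw, fun h => ?_⟩,
      ⟨hzw', fun h => ?_⟩⟩
    · rw [h, hoJ] at how; exact one_ne_zero how
    · have := congrArg (fun v => z ⬝ᵥ v) h
      simp only [dotProduct_add, (adjv_symm h1).1, hzw, hz.odd] at this
      revert this; decide
    · have := congrArg (fun v => z ⬝ᵥ v) h
      simp only [dotProduct_add, (adjv_symm h2).1, hzw, hz.odd] at this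
      revert this; decide
    · have := congrArg (fun v => o ⬝ᵥ v) h
      simp only [dotProduct_add, h1.1, how, hoJ] at this
      revert this; decide
    · have := congrArg (fun v => o ⬝ᵥ v) h
      simp only [dotProduct_add, h3.1, how, hoJ] at this
      revert this; decide

/-- An edge of vertices not orthogonal to `o` has a common neighbour with `o`: condition `c2` of
`cover`. -/
lemma comb2 {n : ℕ} (hn : 5 ≤ n) (hg : n ≤ g) {o y y' : VV g} (ho : vert n o) (hy : vert n y)
    (hy' : vert n y') (hN : o ⬝ᵥ y = 1) (hN' : o ⬝ᵥ y' = 1) (h : adjv n y y') :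
    ∃ z, vert n z ∧ adjv n o z ∧ adjv n y z ∧ adjv n y' z := by
  have hoJ := ho.odd
  have hNs : y ⬝ᵥ o = 1 := by rw [dotProduct_comm, hN]
  have hNs' : y' ⬝ᵥ o = 1 := by rw [dotProduct_comm, hN']
  obtain ⟨w, hw, hws⟩ := exists_not_span hn hg o y y' (on g n)
  -- the last equation is chosen such that `o + on g n` is not a solution
  obtain ⟨z, hz, hzd⟩ := exists_dot_supp (n := n) ![o, y, y', on g n, w]
    (by intro i; fin_cases i <;> simp [*, supp_on, ho.1, hy.1, hy'.1])
    ![0, 0, 0, 1, (o + on g n) ⬝ᵥ w + 1] (by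
      intro ε hε
      simp only [Fin.sum_univ_succ, Fin.sum_univ_zero] at hε ⊢
      simp at hε ⊢
      have h4 : ε 4 = 0 := by
        rcases zcases (ε 4) with h4 | h4
        · exact h4
        · exfalso
          apply hws (ε 0) (ε 1) (ε 2) (ε 3)
          rw [h4, one_smul] at hε
          apply eq_of_vadd
          rw [← hε]; abel
      rw [h4] at hε ⊢
      have e1 := congrArg (fun v => o ⬝ᵥ v) hε
      have e2 := congrArg (fun v => y ⬝ᵥ v) hε
      have e3 := congrArg (fun v => y' ⬝ᵥ v) hε
      simp only [dotProduct_add, dotProduct_smul, hoJ, ho.2.1, hN, hN', hNs, hNs', hy.2.1, hy'.2.1,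
        h.1, (adjv_symm h).1, hy.odd, hy'.odd, smul_eq_mul, dotProduct_zero, mul_one, mul_zero,
        zero_smul] at e1 e2 e3
      generalize h3 : ε 3 = a3 at *
      generalize h2 : ε 2 = a2 at *
      generalize h1 : ε 1 = a1 at *
      generalize h0 : ε 0 = a0 at *
      rcases zcases a3 with rfl | rfl
      · simp
      · exfalso
        have : a0 = 1 ∧ a1 = 0 ∧ a2 = 0 := by
          clear h3 h2 h1 h0 hε; revert a0 a1 a2; decide
        obtain ⟨rfl, rfl, rfl⟩ := this
        apply ho.2.2
        apply eq_of_vadd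
        rw [← hε]; simp)
  have h0 := hzd 0
  have h1 := hzd 1
  have h2 := hzd 2
  have h3 := hzd 3
  have h4 := hzd 4
  simp at h0 h1 h2 h3 h4
  have hzo : o ⬝ᵥ z = 0 := by rw [dotProduct_comm, h0]
  have hzy : y ⬝ᵥ z = 0 := by rw [dotProduct_comm, h1]
  have hzy' : y' ⬝ᵥ z = 0 := by rw [dotProduct_comm, h2]
  refine ⟨z, ⟨hz, by rw [← dot_on hz, h3], fun e => ?_⟩, ⟨hzo, fun e => ?_⟩, ⟨hzy, fun e => ?_⟩,
    ⟨hzy', fun e => ?_⟩⟩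
  · rw [e, hoJ] at hzo; exact one_ne_zero hzo
  · rw [add_comm] at e
    rw [vadd_eq e, add_comm, add_dotProduct] at h4
    revert h4
    generalize o ⬝ᵥ w = a; generalize on g n ⬝ᵥ w = b
    revert a b; decide
  · have := congrArg (fun v => y' ⬝ᵥ v) e
    simp only [dotProduct_add, (adjv_symm h).1, hzy', hy'.odd] at this
    revert this; decide
  · have := congrArg (fun v => y ⬝ᵥ v) e
    simp only [dotProduct_add, h.1, hzy, hy.odd] at this
    revert this; decide

/-- Two neighbours of a vertex `a` are linked by a path of length at most two among the neighbours
of `a`: condition `c3` of `cover`. -/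
lemma comb3 {n : ℕ} {a y y' : VV g} (ha : vert n a) (hy : vert n y)
    (hy' : vert n y') (h1 : adjv n a y) (h2 : adjv n a y') :
    y = y' ∨ adjv n y y' ∨ ∃ w, vert n w ∧ adjv n a w ∧ adjv n y w ∧ adjv n y' w := by
  have haJ := ha.odd
  rcases zcases (y ⬝ᵥ y') with h0 | h0
  · refine Or.inr (Or.inl ⟨h0, fun h => ?_⟩)
    have := congrArg (fun v => a ⬝ᵥ v) h
    simp only [dotProduct_add, h1.1, h2.1, haJ] at this
    revert this; decide
  · right; right
    have h0' : y' ⬝ᵥ y = 1 := by rw [dotProduct_comm, h0]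
    have supp0 : supp n (0 : VV g) := fun i _ => rfl
    obtain ⟨w, hw, hw1, haw, hyw, hyw', -⟩ := exists_perp ha.1 hy.1 hy'.1 supp0 (by
      intro b c d e h
      have e1 := congrArg (fun v => a ⬝ᵥ v) h
      have e2 := congrArg (fun v => y ⬝ᵥ v) h
      simp only [dotProduct_add, dotProduct_smul, h1.1, h2.1, haJ, ha.2.1,
        (adjv_symm h1).1, (adjv_symm h2).1, h0, hy.2.1, hy.odd, smul_eq_mul, dotProduct_zero,
        smul_zero, add_zero] at e1 e2
      rcases zcases b with rfl | rfl <;> rcases zcases c with rfl | rfl <;>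
      rcases zcases d with rfl | rfl <;>
        first
        | (exfalso; revert e1; decide)
        | (exfalso; revert e2; decide)
        | (simp only [zero_smul, one_smul, zero_add, add_zero, smul_zero] at h
           first | exact h1.2 h | exact h2.2 h))
    refine ⟨w, ⟨hw, hw1, fun h => ?_⟩, ⟨haw, fun h => ?_⟩, ⟨hyw, fun h => ?_⟩, ⟨hyw', fun h => ?_⟩⟩
    · rw [h, haJ] at haw; exact one_ne_zero haw
    · have := congrArg (fun v => y ⬝ᵥ v) h
      simp only [dotProduct_add, (adjv_symm h1).1, hyw, hy.odd] at this
      revert this; decide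
    · have := congrArg (fun v => a ⬝ᵥ v) h
      simp only [dotProduct_add, h1.1, haw, haJ] at this
      revert this; decide
    · have := congrArg (fun v => a ⬝ᵥ v) h
      simp only [dotProduct_add, h2.1, haw, haJ] at this
      revert this; decide

end Orth9

namespace Orth9

open Matrix

set_option linter.unusedSimpArgs false

variable {g : ℕ}

/-! ### Stabilizers -/

section cox
variable {H : Type*} [Group H] {p : ℕ → H} {ρ : H →* OG g}

/-- The stabilizer of `e_n` in `DD p (n+1)` is `DD p n`. -/
def Stab (p : ℕ → H) (ρ : H →* OG g) (n : ℕ) : Prop :=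
  ∀ d ∈ DD p (n + 1), ac (ρ d) (ee g n) = ee g n → d ∈ DD p n

lemma vert_ee {n k : ℕ} (hk : k < n) (hn : 2 ≤ n) (hg : n ≤ g) : vert n (ee g k) := by
  refine ⟨supp_ee hk, ee_self (by omega), fun h => ?_⟩
  have h' := congrArg (fun z => ee g (if k = 0 then 1 else 0) ⬝ᵥ z) h
  have h1 : (if k = 0 then 1 else 0) ≠ k := by split_ifs <;> omega
  have h2 : (if k = 0 then 1 else 0) < n := by split_ifs <;> omega
  simp (disch := omega) only [ee_ne h1, ee_on_lt h2] at h'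
  exact zero_ne_one h'

lemma Cox.vert_act (hc : Cox g p ρ) {n : ℕ} (hn : n ≤ g) {d : H} (hd : d ∈ DD p n) {x : VV g}
    (hx : vert n x) : vert n (ac (ρ d) x) := by
  refine ⟨hc.supp_act hn hd hx.1, by rw [ac_dot, hx.2.1], fun h => hx.2.2 ?_⟩
  rw [← hc.fix_on hn hd] at h
  exact ac_injective _ h

lemma Cox.adjv_act (hc : Cox g p ρ) {n : ℕ} (hn : n ≤ g) {d : H} (hd : d ∈ DD p n) {x y : VV g} :
    adjv n (ac (ρ d) x) (ac (ρ d) y) ↔ adjv n x y := by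
  unfold adjv
  rw [ac_dot, ← ac_add]
  conv_lhs => rw [← hc.fix_on hn hd]
  rw [(ac_injective _).ne_iff]

lemma ac_map_inv_eq {d : H} {x y : VV g} (h : ac (ρ d) x = y) : ac (ρ d⁻¹) y = x := by
  rw [← h, map_inv, ac_inv_ac]

lemma Cox.last (hc : Cox g p ρ) {l : ℕ} (hl : l + 1 < g) :
    ac (ρ (p (l + 1))) (ee g (l + 1)) = ee g l := by
  rw [hc.act hl, vv_succ]
  simp (disch := omega) only [add_dotProduct, ee_ne, ee_self, zero_add, one_smul]
  linear_combination vadd_self (ee g (l + 1))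

lemma Cox.last' (hc : Cox g p ρ) {l : ℕ} (hl : l + 1 < g) :
    ac (ρ (p (l + 1))) (ee g l) = ee g (l + 1) := by
  rw [hc.act hl, vv_succ]
  simp (disch := omega) only [add_dotProduct, ee_ne, ee_self, add_zero, one_smul]
  linear_combination vadd_self (ee g l)

variable {l : ℕ}

lemma Cox.proj_adj (hc : Cox g p ρ) (hl : l + 2 ≤ g) {d d' : H}
    (h : AdjC (DD p (l + 1)) (p (l + 1)) d d') :
    ∃ k ∈ DD p (l + 1), ∃ k' ∈ DD p (l + 1), d' = d * k * p (l + 1) * k' ∧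
      ac (ρ d') (ee g (l + 1)) = ac (ρ d) (ac (ρ k) (ee g l)) := by
  obtain ⟨k, hk, k', hk', rfl⟩ := h
  refine ⟨k, hk, k', hk', rfl, ?_⟩
  rw [map_mul, map_mul, map_mul, ac_mul, ac_mul, ac_mul, hc.fix_ee (by omega) le_rfl hk',
      hc.last (by omega)]

/-- The vectors `k e_l` (for `k` in `DD p (l+1)`) are the neighbours of `e_{l+1}`. -/
lemma Cox.nbr (hc : Cox g p ρ) (hl0 : 1 ≤ l) (hl : l + 2 ≤ g) {k : H} (hk : k ∈ DD p (l + 1)) :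
    adjv (l + 2) (ee g (l + 1)) (ac (ρ k) (ee g l)) := by
  have hv := hc.vert_act (by omega) hk (vert_ee (k := l) (g := g) (by omega) (by omega) (by omega))
  refine ⟨ee_supp hv.1 le_rfl, fun h => hv.2.2 ?_⟩
  rw [add_comm] at h
  rw [vadd_eq h, on_succ]
  linear_combination vadd_self (ee g (l + 1))

lemma Cox.nbr' (hc : Cox g p ρ) (hl : l + 2 ≤ g) {y : VV g} (hy : vert (l + 2) y)
    (h : adjv (l + 2) (ee g (l + 1)) y) :
    ∃ k ∈ DD p (l + 1), ac (ρ k) (ee g l) = y := by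
  refine hc.trans l (by omega) y (supp_pred hy.1 h.1) hy.2.1 (fun e => h.2 ?_)
  rw [e, on_succ (l + 1), add_comm]

/-- Triangles of the graph lift, except possibly those whose vertices add up to the all-one
vector. -/
lemma Cox.tri_good (hc : Cox g p ρ) (hl0 : 3 ≤ l) (hl : l + 2 ≤ g) (hS : Stab p ρ l) {d d' d'' : H}
    (hd : d ∈ DD p (l + 2))
    (h1 : AdjC (DD p (l + 1)) (p (l + 1)) d d') (h2 : AdjC (DD p (l + 1)) (p (l + 1)) d d'')
    (h3 : adjv (l + 2) (ac (ρ d') (ee g (l + 1))) (ac (ρ d'') (ee g (l + 1))))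
    (h4 : (ac (ρ d) (ee g (l + 1)) + ac (ρ d') (ee g (l + 1)) + ac (ρ d'') (ee g (l + 1)) ≠
      on g (l + 2)) ∨ ∃ b ∈ DD p (l + 1), ac (ρ b) (ee g l) = on g l ∧
        p (l + 1) * b * p (l + 1) = b * p (l + 1) * b) :
    AdjC (DD p (l + 1)) (p (l + 1)) d' d'' := by
  obtain ⟨k1, hk1, r1, m1, rfl, e1⟩ := hc.proj_adj hl h1
  obtain ⟨k2, hk2, r2, m2, rfl, e2⟩ := hc.proj_adj hl h2
  have hss := hc.sq (l + 1) (by omega)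
  have hsi : (p (l + 1))⁻¹ = p (l + 1) := inv_eq_of_mul_eq_one_left hss
  set s := p (l + 1) with hs
  set K := DD p (l + 1) with hK
  have hKD : K ≤ DD p (l + 2) := DD_mono (by omega)
  have hdk : d * k1 ∈ DD p (l + 2) := Subgroup.mul_mem _ hd (hKD hk1)
  -- it suffices to treat the cosets of `s` and `k s`
  have hk : k1⁻¹ * k2 ∈ K := K.mul_mem (K.inv_mem hk1) hk2
  obtain ⟨k, rfl⟩ : ∃ k, k2 = k1 * k := ⟨k1⁻¹ * k2, by group⟩
  rw [inv_mul_cancel_left] at hk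
  suffices h : ∃ a ∈ K, ∃ b ∈ K, s * k * s = a * s * b by
    obtain ⟨a, ha, b, hb, hab⟩ := h
    refine ⟨r1⁻¹ * a, K.mul_mem (K.inv_mem m1) ha, b * r2, K.mul_mem hb m2, ?_⟩
    calc d * (k1 * k) * s * r2 = d * k1 * s * r1 * (r1⁻¹ * (s⁻¹ * k * s) * r2) := by group
      _ = d * k1 * s * r1 * (r1⁻¹ * (a * s * b) * r2) := by rw [hsi, hab]
      _ = _ := by group
  rw [e1, e2, map_mul ρ k1, ac_mul, ← ac_mul, ← ac_mul, ← map_mul, hc.adjv_act hl hdk] at h3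
  set y := ac (ρ k) (ee g l) with hy
  have hyv := hc.vert_act (by omega) hk
    (vert_ee (k := l) (g := g) (by omega) (by omega) (by omega))
  rw [← hy] at hyv
  have hys : supp l y := supp_pred hyv.1 h3.1
  have hcomm : ∀ h ∈ DD p l, s * h = h * s := fun h hh => hc.comm_DD (by omega) hh
  -- an element `b` with the same image of `e_l` differs from `k` by an element commuting with `s`
  have red : ∀ b ∈ K, ac (ρ b) (ee g l) = y → (∃ a ∈ K, ∃ c ∈ K, s * b * s = a * s * c) →
      ∃ a ∈ K, ∃ b ∈ K, s * k * s = a * s * b := by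
    rintro b hb hby ⟨a, ha, c, hcK, hbs⟩
    have hbk : b⁻¹ * k ∈ DD p l := by
      apply hS _ (K.mul_mem (K.inv_mem hb) hk)
      rw [map_mul, ac_mul, ← hy, ac_map_inv_eq hby]
    refine ⟨a, ha, c * (b⁻¹ * k), K.mul_mem hcK (DD_mono (by omega) hbk), ?_⟩
    calc s * k * s = s * b * ((b⁻¹ * k) * s) := by group
      _ = (s * b * s) * (b⁻¹ * k) := by rw [← hcomm _ hbk]; group
      _ = _ := by rw [hbs]; group
  by_cases hyb : y = on g l
  · rcases h4 with h4 | ⟨b, hb, hby, hbs⟩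
    · exfalso
      apply h4
      have e3 : ac (ρ d) (ee g (l + 1)) = ac (ρ (d * k1)) (ee g (l + 1)) := by
        rw [map_mul, ac_mul, hc.fix_ee (by omega) le_rfl hk1]
      rw [e1, e2, e3, map_mul ρ k1, ac_mul, ← ac_mul, ← ac_mul, ← map_mul, ← ac_add, ← ac_add,
        ← hy, hyb]
      have : ee g (l + 1) + ee g l + on g l = on g (l + 2) := by
        rw [on_succ, on_succ]; abel
      rw [this, hc.fix_on hl hdk]
    · exact red b hb (hby.trans hyb.symm) ⟨b, hb, b, hb, hbs⟩
  · obtain ⟨m, rfl⟩ : ∃ m, l = m + 1 := ⟨l - 1, by omega⟩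
    obtain ⟨h, hh, hhy⟩ := hc.trans m (by omega) y hys hyv.2.1 hyb
    have hq : p (m + 1) ∈ K := DD_gen (by omega) (by omega)
    have hhK : h ∈ K := DD_mono (by omega) hh
    have hbr := hc.br (m + 1) (by omega) (by omega)
    refine red (h * p (m + 1)) (K.mul_mem hhK hq) ?_
      ⟨h * p (m + 1), K.mul_mem hhK hq, p (m + 1), hq, ?_⟩
    · rw [map_mul, ac_mul, hc.last (by omega), hhy]
    · calc s * (h * p (m + 1)) * s = (s * h) * p (m + 1) * s := by group
        _ = h * (s * p (m + 1) * s) := by rw [hcomm h hh]; group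
        _ = h * (p (m + 1) * s * p (m + 1)) := by rw [hs, hbr]
        _ = _ := by group

lemma Cox.lift (hc : Cox g p ρ) (hl : l + 2 ≤ g) {d : H} (hd : d ∈ DD p (l + 2)) {y : VV g}
    (hy : vert (l + 2) y) (h : adjv (l + 2) (ac (ρ d) (ee g (l + 1))) y) :
    ∃ d', AdjC (DD p (l + 1)) (p (l + 1)) d d' ∧ ac (ρ d') (ee g (l + 1)) = y := by
  have hd' := (DD p (l + 2)).inv_mem hd
  have hy' := hc.vert_act hl hd' hy
  have h' := (hc.adjv_act hl hd').2 h
  rw [map_inv, ac_inv_ac, ← map_inv] at h'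
  obtain ⟨k, hk, hky⟩ := hc.nbr' hl hy' h'
  refine ⟨d * k * p (l + 1), ⟨k, hk, 1, one_mem _, by group⟩, ?_⟩
  rw [map_mul, map_mul, ac_mul, ac_mul, hc.last (by omega), hky, map_inv, ac_ac_inv]

/-- All triangles lift.  Triangles `x₁, x₂, x₃` with `x₁ + x₂ + x₃` the all-one vector do not exist
for even `l`.  For odd `l ≥ 7` such a triangle is filled by seven triangles not of this form, using
three more vertices; for smaller `l`, an extra braid relation is used. -/
lemma Cox.tri (hc : Cox g p ρ) (hl0 : 3 ≤ l) (hl : l + 2 ≤ g) (hS : Stab p ρ l)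
    (hB : 7 ≤ l ∨ Even l ∨ ∃ b ∈ DD p (l + 1), ac (ρ b) (ee g l) = on g l ∧
        p (l + 1) * b * p (l + 1) = b * p (l + 1) * b) {d d' d'' : H}
    (hd : d ∈ DD p (l + 2))
    (h1 : AdjC (DD p (l + 1)) (p (l + 1)) d d') (h2 : AdjC (DD p (l + 1)) (p (l + 1)) d d'')
    (h3 : adjv (l + 2) (ac (ρ d') (ee g (l + 1))) (ac (ρ d'') (ee g (l + 1)))) :
    AdjC (DD p (l + 1)) (p (l + 1)) d' d'' := by
  by_cases hsum : ac (ρ d) (ee g (l + 1)) + ac (ρ d') (ee g (l + 1)) + ac (ρ d'') (ee g (l + 1)) ≠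
      on g (l + 2)
  · exact hc.tri_good hl0 hl hS hd h1 h2 h3 (Or.inl hsum)
  push Not at hsum
  rcases hB with hB | hB | hB
  rotate_left
  · have := congrArg (fun v => v ⬝ᵥ v) hsum
    simp only [dot_self_add, ac_dot] at this
    rw [on_on le_rfl hl, ee_self (by omega), (ZMod.natCast_eq_zero_iff_even).2 (by grind)] at this
    exact absurd this (by decide)
  · exact hc.tri_good hl0 hl hS hd h1 h2 h3 (Or.inr hB)
  obtain ⟨k1, hk1, r1, m1, -, e1⟩ := hc.proj_adj hl h1
  set K := DD p (l + 1) with hK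
  set s := p (l + 1) with hs
  have hsD : s ∈ DD p (l + 2) := DD_gen (by omega) (by omega)
  have hKD : K ≤ DD p (l + 2) := DD_mono (by omega)
  set t := d * k1 with ht
  have htD : t ∈ DD p (l + 2) := Subgroup.mul_mem _ hd (hKD hk1)
  have f1 : ac (ρ d) (ee g (l + 1)) = ac (ρ t) (ee g (l + 1)) := by
    rw [ht, map_mul, ac_mul, hc.fix_ee (by omega) le_rfl hk1]
  have f2 : ac (ρ d') (ee g (l + 1)) = ac (ρ t) (ee g l) := by rw [e1, ht, map_mul, ac_mul]
  have f3 : ac (ρ d'') (ee g (l + 1)) = ac (ρ t) (on g l) := by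
    rw [f1, f2, ← ac_add, add_comm, ← hc.fix_on hl htD] at hsum
    rw [vadd_eq hsum, ← ac_add, on_succ, on_succ]
    congr 1
    linear_combination vadd_self (ee g (l + 1)) + vadd_self (ee g l)
  have d'D : d' ∈ DD p (l + 2) := h1.mem hKD hsD hd
  have d''D : d'' ∈ DD p (l + 2) := h2.mem hKD hsD hd
  have hne : ∀ x : VV g, (∃ i < l + 2, ee g i ⬝ᵥ x = 0) → x ≠ on g (l + 2) := by
    rintro x ⟨i, hi, h0⟩ rfl
    rw [ee_on_lt hi (by omega)] at h0
    exact one_ne_zero h0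
  have good : ∀ A B C : H, ∀ a b c : VV g, A ∈ DD p (l + 2) →
      ac (ρ A) (ee g (l + 1)) = ac (ρ t) a → ac (ρ B) (ee g (l + 1)) = ac (ρ t) b →
      ac (ρ C) (ee g (l + 1)) = ac (ρ t) c → AdjC K s A B → AdjC K s A C → b ⬝ᵥ c = 0 →
      (∃ i < l + 2, ee g i ⬝ᵥ (b + c) = 0) → (∃ i < l + 2, ee g i ⬝ᵥ (a + b + c) = 0) →
      AdjC K s B C := by
    intro A B C a b c hA ha hb hcc hAB hAC hbc hi hj
    refine hc.tri_good hl0 hl hS hA hAB hAC ?_ (Or.inl ?_)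
    · rw [hb, hcc, hc.adjv_act hl htD]
      exact ⟨hbc, hne _ hi⟩
    · rw [ha, hb, hcc, ← ac_add, ← ac_add, ← hc.fix_on hl htD]
      exact (ac_injective _).ne (hne _ hj)
  have lft : ∀ A : H, ∀ a b : VV g, A ∈ DD p (l + 2) →
      ac (ρ A) (ee g (l + 1)) = ac (ρ t) a → supp (l + 2) b → b ⬝ᵥ b = 1 →
      (∃ i < l + 2, ee g i ⬝ᵥ b = 0) → a ⬝ᵥ b = 0 → (∃ i < l + 2, ee g i ⬝ᵥ (a + b) = 0) →
      ∃ B, AdjC K s A B ∧ ac (ρ B) (ee g (l + 1)) = ac (ρ t) b := by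
    intro A a b hA ha hb hb1 hi hab hj
    refine hc.lift hl hA (hc.vert_act hl htD ⟨hb, hb1, hne _ hi⟩) ?_
    rw [ha, hc.adjv_act hl htD]
    exact ⟨hab, hne _ hj⟩
  have hodd : on g l ⬝ᵥ on g l = 1 := by
    rw [← ac_dot (ρ t), ← f3, ac_dot, ee_self (by omega)]
  have hlodd : (l : ZMod 2) = 1 := by rwa [on_on le_rfl (by omega)] at hodd
  have hp : supp (l + 2) (on g l + ee g 0 + ee g 1) :=
    supp_add (supp_add (supp_on (by omega)) (supp_ee (by omega))) (supp_ee (by omega))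
  have hq : supp (l + 2) (ee g (l + 1) + ee g 2 + ee g 3) :=
    supp_add (supp_add (supp_ee (by omega)) (supp_ee (by omega))) (supp_ee (by omega))
  have hr : supp (l + 2) (ee g l + ee g 4 + ee g 5) :=
    supp_add (supp_add (supp_ee (by omega)) (supp_ee (by omega))) (supp_ee (by omega))
  obtain ⟨dp, hdp, fp⟩ := lft d _ _ hd f1 hp
    (by simp (disch := omega) only [add_dotProduct, dotProduct_add, ee_ne, ee_self, ee_on_lt,
          ee_on_ge, on_ee_lt, on_ee_ge, hodd]
        decide)
    ⟨0, by omega, by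
      simp (disch := omega) only [add_dotProduct, dotProduct_add, ee_ne, ee_self, ee_on_lt]
      decide⟩
    (by simp (disch := omega) only [add_dotProduct, dotProduct_add, ee_ne, ee_self, ee_on_lt,
          ee_on_ge, on_ee_lt, on_ee_ge, hodd]
        decide)
    ⟨0, by omega, by
      simp (disch := omega) only [add_dotProduct, dotProduct_add, ee_ne, ee_self, ee_on_lt]
      decide⟩
  obtain ⟨dr, hdr, fr⟩ := lft d _ _ hd f1 hr
    (by simp (disch := omega) only [add_dotProduct, dotProduct_add, ee_ne, ee_self, ee_on_lt,
          ee_on_ge, on_ee_lt, on_ee_ge, hodd]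
        decide)
    ⟨0, by omega, by
      simp (disch := omega) only [add_dotProduct, dotProduct_add, ee_ne, ee_self, ee_on_lt]
      decide⟩
    (by simp (disch := omega) only [add_dotProduct, dotProduct_add, ee_ne, ee_self, ee_on_lt,
          ee_on_ge, on_ee_lt, on_ee_ge, hodd]
        decide)
    ⟨0, by omega, by
      simp (disch := omega) only [add_dotProduct, dotProduct_add, ee_ne, ee_self, ee_on_lt]
      decide⟩
  have dpD : dp ∈ DD p (l + 2) := hdp.mem hKD hsD hd
  have drD : dr ∈ DD p (l + 2) := hdr.mem hKD hsD hd
  obtain ⟨dq, hdq, fq⟩ := lft dp _ _ dpD fp hq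
    (by simp (disch := omega) only [add_dotProduct, dotProduct_add, ee_ne, ee_self, ee_on_lt,
          ee_on_ge, on_ee_lt, on_ee_ge, hodd]
        decide)
    ⟨0, by omega, by
      simp (disch := omega) only [add_dotProduct, dotProduct_add, ee_ne, ee_self, ee_on_lt]
      decide⟩
    (by simp (disch := omega) only [add_dotProduct, dotProduct_add, ee_ne, ee_self, ee_on_lt,
          ee_on_ge, on_ee_lt, on_ee_ge, hodd]
        decide)
    ⟨0, by omega, by
      simp (disch := omega) only [add_dotProduct, dotProduct_add, ee_ne, ee_self, ee_on_lt]
      decide⟩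
  have dqD : dq ∈ DD p (l + 2) := hdq.mem hKD hsD dpD
  have ss := hc.sq (l + 1) (by omega)
  have g1 : AdjC K s d' dp := good d d' dp _ _ _ hd f1 f2 fp h1 hdp
    (by simp (disch := omega) only [add_dotProduct, dotProduct_add, ee_ne, ee_self, ee_on_lt,
          ee_on_ge, on_ee_lt, on_ee_ge, hodd]
        decide)
    ⟨0, by omega, by
      simp (disch := omega) only [add_dotProduct, dotProduct_add, ee_ne, ee_self, ee_on_lt, ee_on_ge]
      decide⟩
    ⟨0, by omega, by
      simp (disch := omega) only [add_dotProduct, dotProduct_add, ee_ne, ee_self, ee_on_lt, ee_on_ge]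
      decide⟩
  have g2 : AdjC K s d'' dr := good d d'' dr _ _ _ hd f1 f3 fr h2 hdr
    (by simp (disch := omega) only [add_dotProduct, dotProduct_add, ee_ne, ee_self, ee_on_lt,
          ee_on_ge, on_ee_lt, on_ee_ge, hodd]
        decide)
    ⟨4, by omega, by
      simp (disch := omega) only [add_dotProduct, dotProduct_add, ee_ne, ee_self, ee_on_lt, ee_on_ge]
      decide⟩
    ⟨4, by omega, by
      simp (disch := omega) only [add_dotProduct, dotProduct_add, ee_ne, ee_self, ee_on_lt, ee_on_ge]
      decide⟩
  have g3 : AdjC K s dp dr := good d dp dr _ _ _ hd f1 fp fr hdp hdr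
    (by simp (disch := omega) only [add_dotProduct, dotProduct_add, ee_ne, ee_self, ee_on_lt,
          ee_on_ge, on_ee_lt, on_ee_ge, hodd]
        decide)
    ⟨0, by omega, by
      simp (disch := omega) only [add_dotProduct, dotProduct_add, ee_ne, ee_self, ee_on_lt, ee_on_ge]
      decide⟩
    ⟨0, by omega, by
      simp (disch := omega) only [add_dotProduct, dotProduct_add, ee_ne, ee_self, ee_on_lt, ee_on_ge]
      decide⟩
  have g4 : AdjC K s dr dq := good dp dr dq _ _ _ dpD fp fr fq g3 hdq
    (by simp (disch := omega) only [add_dotProduct, dotProduct_add, ee_ne, ee_self, ee_on_lt,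
          ee_on_ge, on_ee_lt, on_ee_ge, hodd]
        decide)
    ⟨0, by omega, by
      simp (disch := omega) only [add_dotProduct, dotProduct_add, ee_ne, ee_self, ee_on_lt, ee_on_ge]
      decide⟩
    ⟨0, by omega, by
      simp (disch := omega) only [add_dotProduct, dotProduct_add, ee_ne, ee_self, ee_on_lt, ee_on_ge]
      decide⟩
  have g5 : AdjC K s d' dq := good dp d' dq _ _ _ dpD fp f2 fq (g1.symm ss) hdq
    (by simp (disch := omega) only [add_dotProduct, dotProduct_add, ee_ne, ee_self, ee_on_lt,
          ee_on_ge, on_ee_lt, on_ee_ge, hodd]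
        decide)
    ⟨0, by omega, by
      simp (disch := omega) only [add_dotProduct, dotProduct_add, ee_ne, ee_self, ee_on_lt, ee_on_ge]
      decide⟩
    ⟨0, by omega, by
      simp (disch := omega) only [add_dotProduct, dotProduct_add, ee_ne, ee_self, ee_on_lt, ee_on_ge]
      decide⟩
  have g6 : AdjC K s d'' dq := good dr d'' dq _ _ _ drD fr f3 fq (g2.symm ss) g4
    (by simp (disch := omega) only [add_dotProduct, dotProduct_add, ee_ne, ee_self, ee_on_lt,
          ee_on_ge, on_ee_lt, on_ee_ge, hodd]
        decide)
    ⟨2, by omega, by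
      simp (disch := omega) only [add_dotProduct, dotProduct_add, ee_ne, ee_self, ee_on_lt, ee_on_ge]
      decide⟩
    ⟨2, by omega, by
      simp (disch := omega) only [add_dotProduct, dotProduct_add, ee_ne, ee_self, ee_on_lt, ee_on_ge]
      decide⟩
  exact good dq d' d'' _ _ _ dqD fq f2 f3 (g5.symm ss) (g6.symm ss)
    (by simp (disch := omega) only [add_dotProduct, dotProduct_add, ee_ne, ee_self, ee_on_lt,
          ee_on_ge, on_ee_lt, on_ee_ge, hodd])
    ⟨l + 1, by omega, by
      simp (disch := omega) only [add_dotProduct, dotProduct_add, ee_ne, ee_self, ee_on_lt, ee_on_ge]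
      decide⟩
    ⟨2, by omega, by
      simp (disch := omega) only [add_dotProduct, dotProduct_add, ee_ne, ee_self, ee_on_lt, ee_on_ge]
      decide⟩

/-- The inductive step: the covering criterion applied to the cosets of `DD p (l+1)` in
`DD p (l+2)` and the graph of odd vectors. -/
lemma Cox.stab_step (hc : Cox g p ρ) (hl0 : 3 ≤ l) (hl : l + 2 ≤ g) (hS : Stab p ρ l)
    (hB : 7 ≤ l ∨ Even l ∨ ∃ b ∈ DD p (l + 1), ac (ρ b) (ee g l) = on g l ∧
        p (l + 1) * b * p (l + 1) = b * p (l + 1) * b) : Stab p ρ (l + 1) := by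
  have hKD : DD p (l + 1) ≤ DD p (l + 2) := DD_mono (by omega)
  have hsD : p (l + 1) ∈ DD p (l + 2) := DD_gen (by omega) (by omega)
  have ho : vert (l + 2) (ee g (l + 1)) := vert_ee (by omega) (by omega) hl
  have ho' := ho.odd
  refine cover (DD p (l + 1)) (DD p (l + 2)) (p (l + 1)) (ee g (l + 1))
    (ee g (l + 1) + on g (l + 2)) (fun d => ac (ρ d) (ee g (l + 1))) (vert (l + 2))
    (adjv (l + 2)) (fun y => y ≠ ee g (l + 1) ∧ ee g (l + 1) ⬝ᵥ y = 1) hKD hsD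
    (hc.sq _ (by omega)) ?_ (by simp) ?_ (fun d hd => hc.vert_act hl hd ho) ?_ ?_ ?_ ?_
    (fun _ _ h => adjv_symm h) ?_ ?_ ?_ ?_ ?_ ?_ ?_ ?_ ?_ ?_
  · intro P h1 hK hs d hd
    refine hc.indr hl h1 ?_ hd
    intro i hi h4 d hd ih
    rcases Nat.lt_or_ge i (l + 1) with h | h
    · exact hK d hd ih _ (DD_gen h (by omega))
    · obtain rfl : i = l + 1 := by omega
      exact hs d hd ih
  · intro d k hk
    rw [map_mul, ac_mul, hc.fix_ee (by omega) le_rfl hk]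
  · intro d hd d' h
    obtain ⟨k, hk, k', hk', -, e⟩ := hc.proj_adj hl h
    rw [e, hc.adjv_act hl hd]
    exact hc.nbr (by omega) hl hk
  · intro d hd d' d'' h1 h2 h3
    obtain ⟨k1, hk1, r1, m1, rfl, e1⟩ := hc.proj_adj hl h1
    obtain ⟨k2, hk2, r2, m2, rfl, e2⟩ := hc.proj_adj hl h2
    simp only [e1, e2] at h3
    have h4 := ac_injective _ h3
    have h5 : k1⁻¹ * k2 ∈ DD p l := by
      apply hS _ (Subgroup.mul_mem _ (Subgroup.inv_mem _ hk1) hk2)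
      rw [map_mul, ac_mul, ac_map_inv_eq h4]
    have h6 := hc.comm_DD (by omega) h5
    have : (d * k1 * p (l + 1) * r1)⁻¹ * (d * k2 * p (l + 1) * r2) =
        r1⁻¹ * (k1⁻¹ * k2) * r2 := by
      calc _ = r1⁻¹ * (p (l + 1))⁻¹ * ((k1⁻¹ * k2) * p (l + 1)) * r2 := by group
        _ = _ := by rw [← h6]; group
    rw [this]
    exact Subgroup.mul_mem _ (Subgroup.mul_mem _ (Subgroup.inv_mem _ m1)
      (DD_mono (by omega) h5)) m2
  · intro d hd y hy h
    exact hc.lift hl hd hy h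
  · intro d hd d' d'' h1 h2 h3
    exact hc.tri hl0 hl hS hB hd h1 h2 h3
  · intro y hy
    by_cases h1 : y = ee g (l + 1)
    · exact Or.inl h1
    · rcases zcases (ee g (l + 1) ⬝ᵥ y) with h0 | h0
      · by_cases h2 : ee g (l + 1) + y = on g (l + 2)
        · rw [add_comm] at h2
          refine Or.inr (Or.inr (Or.inl ?_))
          rw [vadd_eq h2, add_comm]
        · exact Or.inr (Or.inl ⟨h0, h2⟩)
      · exact Or.inr (Or.inr (Or.inr ⟨h1, h0⟩))
  · intro y hy h1 h2
    have := h2.1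
    rw [dotProduct_add, hy.odd, (adjv_symm h1).1] at this
    exact absurd this (by decide)
  · intro y hy h
    have h1 := h.1
    rw [add_dotProduct, hy.odd'] at h1
    refine ⟨?_, ?_⟩
    · rintro rfl
      apply h.2
      linear_combination vadd_self (ee g (l + 1))
    · revert h1
      generalize ee g (l + 1) ⬝ᵥ y = c
      revert c; decide
  · intro y h1 h2
    rw [h2.1] at h1
    exact zero_ne_one h1.2
  · intro h
    rw [adjv, ho.2.1] at h
    exact one_ne_zero h.1
  · intro h
    exact h.1 rfl
  · intro h
    have := congrArg (fun v => ee g (l + 1) ⬝ᵥ v) h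
    simp only [dotProduct_add, ho.2.1, ho'] at this
    exact absurd this (by decide)
  · intro y z z' hy hz hz' hN h1 h2 h3 h4
    exact comb1 ho hy hz hz' hN.2 h1 h2 h3 h4
  · intro y y' hy hy' hN hN' h
    exact comb2 (by omega) hl ho hy hy' hN.2 hN'.2 h
  · intro y y' ha hy hy' h1 h2
    exact comb3 ha hy hy' h1 h2

/-! ### Small stabilizers -/

lemma Cox.stab_zero : Stab p ρ 0 := by
  intro d hd _
  rw [zero_add, DD_one, Subgroup.mem_bot] at hd
  rw [hd]; exact one_mem _

lemma ee_inj {i j : ℕ} (hi : i < g) (h : ee g i = ee g j) : i = j := by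
  by_contra hne
  have := congrArg (fun v => ee g i ⬝ᵥ v) h
  simp only [ee_self hi, ee_ne hne] at this
  exact one_ne_zero this

lemma Cox.stab_one (hc : Cox g p ρ) : Stab p ρ 1 := by
  have hg := hc.hg
  intro d hd h
  have : d = 1 ∨ d = p 1 := by
    refine hc.ind (by omega) (P := fun d => d = 1 ∨ d = p 1) (Or.inl rfl) ?_ hd
    intro i hi h4 d _ ih
    have hi0 : i ≠ 0 := fun h => by have := h4 h; omega
    obtain rfl : i = 1 := by omega
    rcases ih with rfl | rfl
    · right; simp
    · left; exact hc.sq 1 (by omega)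
  rcases this with rfl | rfl
  · exact one_mem _
  · rw [hc.last (by omega)] at h
    have := ee_inj (by omega) h
    omega

lemma Cox.stab_two (hc : Cox g p ρ) : Stab p ρ 2 := by
  have hg := hc.hg
  have h1 := hc.sq 1 (by omega)
  have h2 := hc.sq 2 (by omega)
  have hb := hc.br 1 (by omega) (by omega)
  norm_num at hb
  intro d hd h
  have : ∃ h ∈ DD p 2, d = h ∨ d = p 2 * h ∨ d = p 1 * p 2 * h := by
    refine hc.ind (by omega) (P := fun d => ∃ h ∈ DD p 2, d = h ∨ d = p 2 * h ∨ d = p 1 * p 2 * h)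
      ⟨1, one_mem _, Or.inl rfl⟩ ?_ hd
    rintro i hi h4 d _ ⟨h, hh, ih⟩
    have hi0 : i ≠ 0 := fun h => by have := h4 h; omega
    have hp1 : p 1 ∈ DD p 2 := DD_gen (by omega) (by omega)
    have : i = 1 ∨ i = 2 := by omega
    rcases this with rfl | rfl <;> rcases ih with rfl | rfl | rfl
    · exact ⟨_, Subgroup.mul_mem _ hp1 hh, Or.inl rfl⟩
    · exact ⟨_, hh, Or.inr (Or.inr (by group))⟩
    · exact ⟨h, hh, Or.inr (Or.inl (by rw [← mul_assoc, ← mul_assoc, h1, one_mul]))⟩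
    · exact ⟨_, hh, Or.inr (Or.inl rfl)⟩
    · exact ⟨_, hh, Or.inl (by rw [← mul_assoc, h2, one_mul])⟩
    · exact ⟨_, Subgroup.mul_mem _ hp1 hh, Or.inr (Or.inr (by
        rw [← mul_assoc, ← mul_assoc, ← hb]; group))⟩
  have hf : ∀ h ∈ DD p 2, ac (ρ h) (ee g 2) = ee g 2 := fun h hh => hc.fix_ee (by omega) le_rfl hh
  obtain ⟨e, he, rfl | rfl | rfl⟩ := this
  · exact he
  · rw [map_mul, ac_mul, hf e he, hc.last (by omega)] at h
    have := ee_inj (by omega) h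
    omega
  · rw [map_mul, map_mul, ac_mul, ac_mul, hf e he, hc.last (by omega), hc.last (by omega)] at h
    have := ee_inj (by omega) h
    omega

lemma Cox.stab_three (hc : Cox g p ρ) : Stab p ρ 3 := by
  have hg := hc.hg
  have h0 := hc.sq 0 (by omega)
  have h1 := hc.sq 1 (by omega)
  have h2 := hc.sq 2 (by omega)
  have h3 := hc.sq 3 (by omega)
  have hb := hc.br 1 (by omega) (by omega)
  have hb' := hc.br 2 (by omega) (by omega)
  have hc01 := hc.comm 0 1 (by omega) (by omega)
  have hc02 := hc.comm 0 2 (by omega) (by omega)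
  have hc03 := hc.comm 0 3 (by omega) (by omega)
  have hc13 := hc.comm 1 3 (by omega) (by omega)
  norm_num at hb hb'
  let r : ℕ → H := fun j => if j = 0 then 1 else if j = 1 then p 3 else if j = 2 then p 2 * p 3 else
    p 1 * p 2 * p 3
  intro d hd h
  have : ∃ h ∈ DD p 3, ∃ j < 4, d = r j * h ∨ d = p 0 * (r j * h) := by
    refine hc.ind (by omega) (P := fun d => ∃ h ∈ DD p 3, ∃ j < 4, d = r j * h ∨
      d = p 0 * (r j * h)) ⟨1, one_mem _, 0, by omega, Or.inl (by simp [r])⟩ ?_ hd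
    rintro i hi h4 d _ ⟨h, hh, j, hj, ih⟩
    -- the generator `p₀` commutes with the other ones
    have step : i ≠ 0 → ∃ h' ∈ DD p 3, ∃ j' < 4, p i * (r j * h) = r j' * h' := by
      intro hi0
      have hp1 : p 1 ∈ DD p 3 := DD_gen (by omega) (by omega)
      have hp2 : p 2 ∈ DD p 3 := DD_gen (by omega) (by omega)
      have m1 := Subgroup.mul_mem _ hp1 hh
      have m2 := Subgroup.mul_mem _ hp2 hh
      have e13 : p 1 * (p 3 * h) = p 3 * (p 1 * h) := by rw [← mul_assoc, hc13, mul_assoc]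
      interval_cases i
      · exact absurd rfl hi0
      · interval_cases j
        · exact ⟨_, m1, 0, by omega, by simp [r]⟩
        · exact ⟨_, m1, 1, by omega, by simp [r, e13]⟩
        · exact ⟨h, hh, 3, by omega, by simp [r, mul_assoc]⟩
        · exact ⟨h, hh, 2, by omega, by
            simp [r, mul_assoc]; rw [← mul_assoc (p 1), h1, one_mul]⟩
      · interval_cases j
        · exact ⟨_, m2, 0, by omega, by simp [r]⟩
        · exact ⟨h, hh, 2, by omega, by simp [r, mul_assoc]⟩
        · exact ⟨h, hh, 1, by omega, by
            simp [r, mul_assoc]; rw [← mul_assoc (p 2), h2, one_mul]⟩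
        · refine ⟨_, m1, 3, by omega, ?_⟩
          simp only [r]
          norm_num
          calc p 2 * (p 1 * p 2 * p 3 * h) = (p 2 * p 1 * p 2) * (p 3 * h) := by group
            _ = p 1 * p 2 * (p 1 * (p 3 * h)) := by rw [← hb]; group
            _ = _ := by rw [e13]; group
      · interval_cases j
        · exact ⟨h, hh, 1, by omega, by simp [r]⟩
        · exact ⟨h, hh, 0, by omega, by
            simp [r, mul_assoc]; rw [← mul_assoc (p 3), h3, one_mul]⟩
        · refine ⟨_, m2, 2, by omega, ?_⟩
          simp only [r]
          norm_num
          calc p 3 * (p 2 * p 3 * h) = (p 3 * p 2 * p 3) * h := by group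
            _ = _ := by rw [← hb']; group
        · refine ⟨_, m2, 3, by omega, ?_⟩
          simp only [r]
          norm_num
          calc p 3 * (p 1 * p 2 * p 3 * h) = (p 3 * p 1) * (p 2 * p 3 * h) := by group
            _ = p 1 * (p 3 * p 2 * p 3) * h := by rw [← hc13]; group
            _ = _ := by rw [← hb']; group
    by_cases hi0 : i = 0
    · subst hi0
      refine ⟨h, hh, j, hj, ?_⟩
      rcases ih with rfl | rfl
      · exact Or.inr rfl
      · left; rw [← mul_assoc, h0, one_mul]
    · obtain ⟨h', hh', j', hj', e⟩ := step hi0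
      refine ⟨h', hh', j', hj', ?_⟩
      rcases ih with rfl | rfl
      · exact Or.inl e
      · right
        have : p 0 * p i = p i * p 0 := hc.comm 0 i (by omega) (by omega)
        rw [← e, ← mul_assoc, ← this, mul_assoc]
  have hf : ∀ h ∈ DD p 3, ac (ρ h) (ee g 3) = ee g 3 := fun h hh => hc.fix_ee (by omega) le_rfl hh
  obtain ⟨e, he, j, hj, hd'⟩ := this
  have hr : ac (ρ (r j * e)) (ee g 3) = ee g (3 - j) := by
    rw [map_mul, ac_mul, hf e he]
    interval_cases j <;> simp [r, ac_mul, hc.last (l := 2) (by omega), hc.last (l := 1) (by omega),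
      hc.last (l := 0) (by omega)]
  rcases hd' with rfl | rfl
  · rw [hr] at h
    have := ee_inj (by omega) h
    obtain rfl : j = 0 := by omega
    simpa [r] using he
  · exfalso
    rw [map_mul, ac_mul, hr, hc.act (by omega), vv_zero, on_ee_lt (by omega) (by omega),
      one_smul] at h
    by_cases hj0 : j = 0
    · have := congrArg (fun v => ee g 0 ⬝ᵥ v) h
      subst hj0
      simp (disch := omega) only [dotProduct_add, ee_ne, ee_on_lt] at this
      exact absurd this (by decide)
    · have := congrArg (fun v => ee g (if j = 3 then 1 else 0) ⬝ᵥ v) h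
      split_ifs at this <;>
      simp (disch := omega) only [dotProduct_add, ee_ne, ee_on_lt] at this <;>
      exact absurd this (by decide)

/-- A homomorphism to `O(g, ℤ/2)` is injective on `DD p n` if all stabilizers are as expected. -/
lemma Cox.inj_of_stab (n : ℕ) (hS : ∀ k < n, Stab p ρ k) {d : H} (hd : d ∈ DD p n)
    (h : ρ d = 1) : d = 1 := by
  induction n with
  | zero =>
    have := DD_mono (p := p) (Nat.zero_le 1) hd
    rwa [DD_one, Subgroup.mem_bot] at this
  | succ n ih =>
    exact ih (fun k hk => hS k (by omega)) (hS n (by omega) d hd (by rw [h, ac_one]))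

/-- The stabilizers of `e₀, …, e₅` only need the Coxeter relations. -/
lemma Cox.stab_small (hc : Cox g p ρ) (k : ℕ) (hk : k ≤ 5) : Stab p ρ k := by
  have hg := hc.hg
  have h4 : Stab p ρ 4 := by
    refine hc.stab_step (by omega) (by omega) hc.stab_three (Or.inr (Or.inr ⟨p 0, DD_gen (by omega)
      (by omega), ?_, hc.br0.symm⟩))
    rw [hc.act (by omega), vv_zero, on_ee_lt (by omega) (by omega), one_smul, on_succ 3]
    linear_combination vadd_self (ee g 3)
  have h5 : Stab p ρ 5 := hc.stab_step (by omega) (by omega) h4 (Or.inr (Or.inl ⟨2, rfl⟩))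
  interval_cases k
  · exact Cox.stab_zero
  · exact hc.stab_one
  · exact hc.stab_two
  · exact hc.stab_three
  · exact h4
  · exact h5

/-- With one more braid relation, which makes the induction step from `5` to `6` work, the
homomorphism `ρ` is injective on all the subgroups `DD p n`. -/
lemma Cox.inj (hc : Cox g p ρ) (hB : ∃ b ∈ DD p 6, ac (ρ b) (ee g 5) = on g 5 ∧
    p 6 * b * p 6 = b * p 6 * b) {n : ℕ} (hn : n ≤ g) {d : H} (hd : d ∈ DD p n)
    (h : ρ d = 1) : d = 1 := by
  refine Cox.inj_of_stab n (fun k hk => ?_) hd h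
  induction k with
  | zero => exact Cox.stab_zero
  | succ k ih =>
    by_cases hk5 : k < 5
    · exact hc.stab_small _ (by omega)
    · refine hc.stab_step (by omega) (by omega) (ih (by omega)) ?_
      rcases Nat.lt_or_ge k 7 with h7 | h7
      · have : k = 5 ∨ k = 6 := by omega
        rcases this with rfl | rfl
        · exact Or.inr (Or.inr hB)
        · exact Or.inr (Or.inl ⟨3, rfl⟩)
      · exact Or.inl h7

end cox

end Orth9

namespace Orth9

open Matrix

variable {g : ℕ}

/-! ### Computing with transvections along combinations of orthonormal vectors

For orthonormal `f 0, …, f (k-1)`, a product of transvections along sums of the `f j` is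
determined by its action on the `f j`.  Sums of the `f j` are encoded by the binary digits of
natural numbers, so that identities between such products can be checked by evaluation. -/

/-- The `j`-th binary digit, in `ℤ/2`. -/
def bt (c j : ℕ) : ZMod 2 := if c.testBit j then 1 else 0

/-- The sum of those `f j` with `j < k` for which the `j`-th binary digit of `c` is `1`. -/
def mv (f : ℕ → VV g) (k c : ℕ) : VV g := ∑ j ∈ Finset.range k, bt c j • f j

/-- `f 0, …, f (k-1)` are orthonormal. -/
def ON (f : ℕ → VV g) (k : ℕ) : Prop := ∀ i < k, ∀ j < k, f i ⬝ᵥ f j = if i = j then 1 else 0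

/-- The parity of the number of ones among the last `k` binary digits. -/
def par (k c : ℕ) : Bool := (List.range k).foldr (fun j b => (c.testBit j) ^^ b) false

/-- The action of the transvection encoded by `c` on the vector encoded by `X`. -/
def stp (k c X : ℕ) : ℕ := if par k (c &&& X) then X ^^^ c else X

/-- The action of a product of transvections on encoded vectors. -/
def run (k : ℕ) (w : List ℕ) (X : ℕ) : ℕ := w.foldr (stp k) X

/-- All entries of the lists are even, and the products act in the same way. -/
def chk (k : ℕ) (w w' : List ℕ) : Bool :=
  w.all (fun c => !par k c) && w'.all (fun c => !par k c) &&
    (List.range k).all fun j => run k w (2 ^ j) == run k w' (2 ^ j)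

/-- The product of the transvections encoded by a list. -/
def tprod (f : ℕ → VV g) (k : ℕ) (w : List ℕ) : OG g := (w.map fun c => tau (mv f k c)).prod

lemma bt_xor (c d j : ℕ) : bt (c ^^^ d) j = bt c j + bt d j := by
  simp only [bt, Nat.testBit_xor]
  cases c.testBit j <;> cases d.testBit j <;> decide

lemma bt_and (c d j : ℕ) : bt (c &&& d) j = bt c j * bt d j := by
  simp only [bt, Nat.testBit_land]
  cases c.testBit j <;> cases d.testBit j <;> decide

lemma par_eq (k c : ℕ) : (if par k c then 1 else 0 : ZMod 2) = ∑ j ∈ Finset.range k, bt c j := by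
  have : ∀ l : List ℕ, (if l.foldr (fun j b => (c.testBit j) ^^ b) false then 1 else 0 : ZMod 2) =
      (l.map (bt c)).sum := by
    intro l
    induction l with
    | nil => simp
    | cons a l ih =>
      rw [List.map_cons, List.sum_cons, ← ih, List.foldr_cons]
      simp only [bt]
      cases c.testBit a <;> cases List.foldr (fun j b => (c.testBit j) ^^ b) false l <;> decide
  rw [par, this]
  rfl

lemma mv_dot_ext {f : ℕ → VV g} {k : ℕ} (c : ℕ) (x : VV g) :
    mv f k c ⬝ᵥ x = ∑ j ∈ Finset.range k, bt c j * (f j ⬝ᵥ x) := by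
  rw [mv, sum_dotProduct]
  exact Finset.sum_congr rfl fun j _ => smul_dotProduct _ _ _

lemma dot_mv {f : ℕ → VV g} {k : ℕ} (hf : ON f k) {i : ℕ} (hi : i < k) (c : ℕ) :
    f i ⬝ᵥ mv f k c = bt c i := by
  rw [dotProduct_comm, mv_dot_ext, Finset.sum_eq_single i]
  · rw [hf i hi i hi]; simp
  · intro j hj hij
    rw [hf j (Finset.mem_range.1 hj) i hi, if_neg hij, mul_zero]
  · intro h; exact absurd (Finset.mem_range.2 hi) h

lemma mv_mv {f : ℕ → VV g} {k : ℕ} (hf : ON f k) (c d : ℕ) :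
    mv f k c ⬝ᵥ mv f k d = if par k (c &&& d) then 1 else 0 := by
  rw [par_eq, mv_dot_ext]
  refine Finset.sum_congr rfl fun j hj => ?_
  rw [dot_mv hf (Finset.mem_range.1 hj), bt_and]

lemma mv_xor (f : ℕ → VV g) (k c d : ℕ) : mv f k (c ^^^ d) = mv f k c + mv f k d := by
  simp only [mv, bt_xor, add_smul, Finset.sum_add_distrib]

lemma mv_pow (f : ℕ → VV g) {k j : ℕ} (hj : j < k) : mv f k (2 ^ j) = f j := by
  rw [mv, Finset.sum_eq_single j]
  · simp [bt]
  · intro i _ hij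
    simp [bt, Nat.testBit_two_pow_of_ne (Ne.symm hij)]
  · intro h; exact absurd (Finset.mem_range.2 hj) h

lemma mv_even {f : ℕ → VV g} {k : ℕ} (hf : ON f k) {c : ℕ} (hc : par k c = false) :
    mv f k c ⬝ᵥ mv f k c = 0 := by
  rw [mv_mv hf, Nat.and_self, hc]; rfl

lemma tprod_mv {f : ℕ → VV g} {k : ℕ} (hf : ON f k) {w : List ℕ}
    (hw : ∀ c ∈ w, par k c = false) (X : ℕ) : ac (tprod f k w) (mv f k X) = mv f k (run k w X) := by
  induction w with
  | nil => simp [tprod, run]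
  | cons c w ih =>
    have h1 : tprod f k (c :: w) = tau (mv f k c) * tprod f k w := by simp [tprod]
    have h2 : run k (c :: w) X = stp k c (run k w X) := rfl
    rw [h1, h2, ac_mul, ih fun d hd => hw d (List.mem_cons_of_mem _ hd),
      tau_ac (mv_even hf (hw c List.mem_cons_self)), mv_mv hf, stp]
    by_cases h : par k (c &&& run k w X)
    · simp [h, mv_xor]
    · simp [h]

lemma tprod_fix {f : ℕ → VV g} {k : ℕ} (hf : ON f k) {w : List ℕ}
    (hw : ∀ c ∈ w, par k c = false) {x : VV g} (hx : ∀ j < k, f j ⬝ᵥ x = 0) :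
    ac (tprod f k w) x = x := by
  induction w with
  | nil => simp [tprod]
  | cons c w ih =>
    have h1 : tprod f k (c :: w) = tau (mv f k c) * tprod f k w := by simp [tprod]
    rw [h1, ac_mul, ih fun d hd => hw d (List.mem_cons_of_mem _ hd),
      tau_fix (mv_even hf (hw c List.mem_cons_self))]
    rw [mv_dot_ext]
    exact Finset.sum_eq_zero fun j hj => by rw [hx j (Finset.mem_range.1 hj), mul_zero]

/-- Identities between products of transvections along sums of orthonormal vectors may be
checked on encodings. -/
theorem tprod_eq {f : ℕ → VV g} {k : ℕ} (hf : ON f k) {w w' : List ℕ} (h : chk k w w' = true) :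
    tprod f k w = tprod f k w' := by
  simp only [chk, Bool.and_eq_true, List.all_eq_true, List.mem_range, beq_iff_eq,
    Bool.not_eq_true'] at h
  obtain ⟨⟨hw, hw'⟩, h⟩ := h
  have hj : ∀ j < k, ac (tprod f k w) (f j) = ac (tprod f k w') (f j) := by
    intro j hj
    rw [← mv_pow f hj, tprod_mv hf hw, tprod_mv hf hw', h j hj]
  have hs : ∀ (A : OG g) (s : Finset ℕ) (c : ℕ → ZMod 2),
      ac A (∑ j ∈ s, c j • f j) = ∑ j ∈ s, c j • ac A (f j) := by
    intro A s c
    simp [ac, Matrix.mulVec_sum, Matrix.mulVec_smul]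
  apply ac_ext
  intro x
  set y := ∑ j ∈ Finset.range k, (f j ⬝ᵥ x) • f j with hy
  have hxy : x = y + (x + y) := by
    linear_combination vadd_self y * (-1 : VV g)
  have hd : ∀ j < k, f j ⬝ᵥ (x + y) = 0 := by
    intro j hj
    rw [dotProduct_add, hy, dotProduct_sum, Finset.sum_eq_single j]
    · rw [dotProduct_smul, hf j hj j hj]; simp [zadd]
    · intro i hi hij
      rw [dotProduct_smul, hf j hj i (Finset.mem_range.1 hi), if_neg (Ne.symm hij), smul_zero]
    · intro h; exact absurd (Finset.mem_range.2 hj) h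
  rw [hxy, ac_add _ y, ac_add _ y, tprod_fix hf hw hd, tprod_fix hf hw' hd, hy, hs, hs]
  congr 1
  exact Finset.sum_congr rfl fun j hjk => by rw [hj j (Finset.mem_range.1 hjk)]

/-- `m` copies of a list in a row. -/
def lpow (m : ℕ) (w : List ℕ) : List ℕ := (List.replicate m w).flatten

lemma prod_lpow {H : Type*} [Monoid H] (F : ℕ → H) (m : ℕ) (w : List ℕ) :
    ((lpow m w).map F).prod = (w.map F).prod ^ m := by
  induction m with
  | zero => simp [lpow]
  | succ m ih =>
    rw [pow_succ', ← ih]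
    simp [lpow, List.replicate_succ]

lemma ON_ee {k : ℕ} (hk : k ≤ g) : ON (ee g) k := fun i hi j _ => ee_ee (by omega)

/-- The encoding of the vector `vv g i`. -/
def msk : ℕ → ℕ
  | 0 => 15
  | (i + 1) => 3 * 2 ^ i

lemma mv_msk {i : ℕ} (hi : i < 7) : mv (ee g) 7 (msk i) = vv g i := by
  have h : mv (ee g) 7 (msk i) = bt (msk i) 0 • ee g 0 + bt (msk i) 1 • ee g 1 + bt (msk i) 2 • ee g 2
    + bt (msk i) 3 • ee g 3 + bt (msk i) 4 • ee g 4 + bt (msk i) 5 • ee g 5 + bt (msk i) 6 • ee g 6 := by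
    simp [mv, Finset.sum_range_succ]
  rw [h]
  interval_cases i
  · simp [msk, bt, Nat.testBit, vv, on_succ, on_zero]
  all_goals simp [msk, bt, Nat.testBit, vv]

/-- Two words in the generators with index less than `7` have equal images in `O(g, ℤ/2)` if
they pass the check. -/
lemma tau_word (hg : 7 ≤ g) {w w' : List ℕ} (hw : ∀ i ∈ w, i < 7) (hw' : ∀ i ∈ w', i < 7)
    (h : chk 7 (w.map msk) (w'.map msk) = true) :
    (w.map fun i => tau (vv g i)).prod = (w'.map fun i => tau (vv g i)).prod := by
  have := tprod_eq (ON_ee hg) h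
  simp only [tprod, List.map_map] at this
  convert this using 2
  · exact List.map_congr_left fun i hi => by simp [mv_msk (hw i hi)]
  · exact List.map_congr_left fun i hi => by simp [mv_msk (hw' i hi)]

end Orth9

namespace Orth9

open Matrix

variable {g : ℕ}

/-! ### The element `(a₆ b)³` in the Coxeter group of type `E₇` -/

section cox
variable {H : Type*} [Group H] {p : ℕ → H} {ρ : H →* OG g}

lemma Cox.word_map (hc : Cox g p ρ) {w : List ℕ} (hw : ∀ i ∈ w, i < g) :
    ρ (w.map p).prod = (w.map fun i => tau (vv g i)).prod := by
  rw [map_list_prod, List.map_map]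
  congr 1
  exact List.map_congr_left fun i hi => hc.map i (hw i hi)

lemma word_mem {n : ℕ} (hn : 4 ≤ n) {w : List ℕ} (hw : ∀ i ∈ w, i < n) :
    (w.map p).prod ∈ DD p n := by
  refine Subgroup.list_prod_mem _ fun x hx => ?_
  obtain ⟨i, hi, rfl⟩ := List.mem_map.1 hx
  exact DD_gen (hw i hi) fun _ => hn

/-- The Coxeter relations suffice to decide the word problem in the subgroup generated by
`p 0, …, p 5`. -/
lemma Cox.word6 (hc : Cox g p ρ) (w w' : List ℕ) (hw : ∀ i ∈ w, i < 6) (hw' : ∀ i ∈ w', i < 6)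
    (h : chk 7 (w.map msk) (w'.map msk) = true) : (w.map p).prod = (w'.map p).prod := by
  have hg := hc.hg
  have h1 : (w.map p).prod * (w'.map p).prod⁻¹ = 1 := by
    refine Cox.inj_of_stab (ρ := ρ) 6 (fun k hk => hc.stab_small k (by omega))
      (Subgroup.mul_mem _ (word_mem (by omega) hw)
      (Subgroup.inv_mem _ (word_mem (by omega) hw'))) ?_
    rw [map_mul, map_inv, hc.word_map fun i hi => (hw i hi).trans (by omega),
      hc.word_map fun i hi => (hw' i hi).trans (by omega),
      tau_word hg (fun i hi => (hw i hi).trans (by omega))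
      (fun i hi => (hw' i hi).trans (by omega)) h, mul_inv_cancel]
  exact mul_inv_eq_one.1 h1

/-- The longest element of the Coxeter group of type `D₄` with centre `s` and leaves
`x`, `y`, `w` commutes with the leaves. -/
lemma d4_comm {s x y w : H} (hx : s * x * s = x * s * x) (hy : s * y * s = y * s * y) (hw : s * w * s = w * s * w)
    (cxy : y * x = x * y) (cxw : x * w = w * x) (cyw : y * w = w * y) :
    (s * (x * y * w)) ^ 3 * x = x * (s * (x * y * w)) ^ 3 := by
  have ac2 : ∀ {a b : H}, a * b = b * a → ∀ t, a * (b * t) = b * (a * t) := by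
    intro a b h t
    rw [← mul_assoc, h, mul_assoc]
  have cxy1 := ac2 cxy
  have cxw1 := ac2 cxw
  have cyw1 := ac2 cyw
  have key : (s * (x * y * w)) ^ 3 = x * (s * (x * y * w) * s * (x * y * w) * s * (y * w)) := by
    rw [pow_succ, _root_.sq]
    have e1 := congrArg (fun t => s * w * x * t * (w * x * s * w * x * y)) hy.symm
    have e2 := congrArg (fun t => s * w * x * s * y * s * w * t * (w * y)) hx.symm
    have e3 := congrArg (fun t => s * w * x * s * y * t * (x * s * w * y)) hw
    have e4 := congrArg (fun t => s * x * t * (y * s * w * x * s * w * y)) hw.symm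
    have e5 := congrArg (fun t => t * (w * s * y * s * w * x * s * w * y)) hx
    have e6 := congrArg (fun t => x * s * w * x * t * (w * x * s * w * y)) hy
    simp only [mul_assoc, cxw1, cyw, cyw1, cxy1] at e1 e2 e3 e4 e5 e6 ⊢
    exact e1.trans (e2.trans (e3.trans (e4.trans (e5.trans e6))))
  have e : y * w * x = x * y * w := by
    rw [mul_assoc, ← cxw, ← mul_assoc, cxy]
  calc (s * (x * y * w)) ^ 3 * x
      = x * (s * (x * y * w) * s * (x * y * w) * s * (y * w * x)) := by
        rw [key]; simp only [mul_assoc]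
    _ = x * (s * (x * y * w)) ^ 3 := by
        rw [e, pow_succ, _root_.sq]; simp only [mul_assoc]

lemma pow3_swap {s P : H} (h : (s * P) ^ 3 * P = P * (s * P) ^ 3) : (s * P) ^ 3 = (P * s) ^ 3 := by
  have h1 : P * (s * P) ^ 3 = (P * s) ^ 3 * P := by
    simp only [pow_succ, pow_zero, one_mul, mul_assoc]
  rw [h1] at h
  exact mul_right_cancel h

lemma pow3_inv {s P : H} (hs : s * s = 1) (hP : P * P = 1) : (s * P) ^ 3 * (P * s) ^ 3 = 1 := by
  have : P * s = (s * P)⁻¹ := by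
    rw [_root_.mul_inv_rev, inv_eq_of_mul_eq_one_left hs, inv_eq_of_mul_eq_one_left hP]
  rw [this, inv_pow, mul_inv_cancel]

lemma d4_sq {s x y w : H} (ss : s * s = 1) (sx : x * x = 1) (sy : y * y = 1) (sw : w * w = 1)
    (hx : s * x * s = x * s * x) (hy : s * y * s = y * s * y) (hw : s * w * s = w * s * w)
    (cxy : y * x = x * y) (cxw : x * w = w * x) (cyw : y * w = w * y) :
    (s * (x * y * w)) ^ 3 * (s * (x * y * w)) ^ 3 = 1 := by
  have h1 := d4_comm hx hy hw cxy cxw cyw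
  have h2 := d4_comm hy hx hw cxy.symm cyw cxw
  have h3 := d4_comm hw hx hy cxw cyw.symm cxy.symm
  have e2 : y * x * w = x * y * w := by rw [cxy]
  have e3 : w * x * y = x * y * w := by rw [mul_assoc x, cyw, ← mul_assoc, cxw]
  rw [e2] at h2
  rw [e3] at h3
  have h4 : (s * (x * y * w)) ^ 3 * (x * y * w) = (x * y * w) * (s * (x * y * w)) ^ 3 := by
    have : Commute ((s * (x * y * w)) ^ 3) (x * y * w) :=
      (Commute.mul_right (Commute.mul_right h1 h2) h3)
    exact this
  have h5 := pow3_swap h4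
  have hP : (x * y * w) * (x * y * w) = 1 := by
    calc (x * y * w) * (x * y * w) = (x * y * w) * (w * x * y) := by rw [e3]
      _ = x * (y * ((w * w) * x) * y) := by simp only [mul_assoc]
      _ = 1 := by rw [sw, one_mul, cxy, mul_assoc, sy, mul_one, sx]
  nth_rewrite 2 [h5]
  exact pow3_inv ss hP

lemma br_conj {x y x' y' c : H} (h : x * y * x = y * x * y) (hx : x' * c = c * x)
    (hy : y' * c = c * y) : x' * y' * x' = y' * x' * y' := by
  have h1 : x' = c * x * c⁻¹ := eq_mul_inv_of_mul_eq hx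
  have h2 : y' = c * y * c⁻¹ := eq_mul_inv_of_mul_eq hy
  have e : ∀ u v : H, c * u * c⁻¹ * (c * v * c⁻¹) * (c * u * c⁻¹) = c * (u * v * u) * c⁻¹ := by
    intro u v; group
  rw [h1, h2, e, e, h]

/-- The conjugate of `a₀` by `a₄ a₃ a₅ a₄`, as a word: a reflection commuting with `a₅` and
braiding with `a₆`. -/
def rL : List ℕ := [4, 3, 5, 4, 0, 4, 5, 3, 4]

/-- The conjugate of the word `rL` by `a₂ a₃ a₁ a₂`: another such reflection. -/
def qL : List ℕ := [2, 3, 1, 2] ++ rL ++ [2, 1, 3, 2]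

/-- A word for the central involution of the Coxeter group of type `D₆`; it maps to the
transvection along `e₀ + ⋯ + e₅`. -/
def bL : List ℕ := [5] ++ rL ++ qL ++ [0, 3, 1]

/-- The element `(a₆ b)³`, where `b` is given by the word `bL`. -/
def zz (p : ℕ → H) : H := (p 6 * (bL.map p).prod) ^ 3

lemma Cox.b_comm (hc : Cox g p ρ) {i : ℕ} (hi : i < 6) :
    (bL.map p).prod * p i = p i * (bL.map p).prod := by
  have h : ((bL ++ [i]).map p).prod = ((i :: bL).map p).prod := by
    interval_cases i <;> exact hc.word6 _ _ (by decide) (by decide) (by decide +kernel)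
  simpa using h

lemma Cox.b_sq (hc : Cox g p ρ) : (bL.map p).prod * (bL.map p).prod = 1 := by
  have h : ((bL ++ bL).map p).prod = (([] : List ℕ).map p).prod :=
    hc.word6 _ _ (by decide) (by decide) (by decide +kernel)
  rw [List.map_append, List.prod_append] at h
  exact h

lemma Cox.br_r (hc : Cox g p ρ) : p 6 * (rL.map p).prod * p 6 =
    (rL.map p).prod * p 6 * (rL.map p).prod := by
  have hg := hc.hg
  refine br_conj (c := p 4 * p 3 * p 5 * p 4 * p 6 * p 5) hc.br0.symm ?_ ?_
  · have c3 := hc.comm 3 6 (by omega) (by omega)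
    have c4 := hc.comm 4 6 (by omega) (by omega)
    have b5 := hc.br 5 (by omega) (by omega)
    have b4 := hc.br 4 (by omega) (by omega)
    calc p 6 * (p 4 * p 3 * p 5 * p 4 * p 6 * p 5)
        = (p 6 * p 4) * p 3 * p 5 * (p 4 * p 6) * p 5 := by simp only [mul_assoc]
      _ = p 4 * (p 6 * p 3) * p 5 * (p 6 * p 4) * p 5 := by
        rw [← c4]; simp only [mul_assoc]
      _ = p 4 * p 3 * (p 6 * p 5 * p 6) * p 4 * p 5 := by rw [← c3]; simp only [mul_assoc]
      _ = p 4 * p 3 * p 5 * p 6 * (p 5 * p 4 * p 5) := by rw [← b5]; simp only [mul_assoc]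
      _ = p 4 * p 3 * p 5 * (p 6 * p 4) * p 5 * p 4 := by rw [← b4]; simp only [mul_assoc]
      _ = _ := by rw [← c4]; simp only [mul_assoc]
  · have c5 := hc.comm 0 5 (by omega) (by omega)
    have c6 := hc.comm 0 6 (by omega) (by omega)
    have h : ((rL ++ [4, 3, 5, 4]).map p).prod = (([4, 3, 5, 4, 0]).map p).prod :=
      hc.word6 _ _ (by decide) (by decide) (by decide +kernel)
    have h' : (rL.map p).prod * (p 4 * p 3 * p 5 * p 4) = p 4 * p 3 * p 5 * p 4 * p 0 := by
      rw [List.map_append, List.prod_append] at h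
      simpa [mul_assoc] using h
    calc (rL.map p).prod * (p 4 * p 3 * p 5 * p 4 * p 6 * p 5)
        = ((rL.map p).prod * (p 4 * p 3 * p 5 * p 4)) * p 6 * p 5 := by simp only [mul_assoc]
      _ = p 4 * p 3 * p 5 * p 4 * (p 0 * p 6) * p 5 := by rw [h']; simp only [mul_assoc]
      _ = p 4 * p 3 * p 5 * p 4 * p 6 * (p 0 * p 5) := by rw [c6]; simp only [mul_assoc]
      _ = _ := by rw [c5]; simp only [mul_assoc]

lemma Cox.br_q (hc : Cox g p ρ) : p 6 * (qL.map p).prod * p 6 =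
    (qL.map p).prod * p 6 * (qL.map p).prod := by
  have hg := hc.hg
  have hs : ∀ i, i < 5 → Commute (p 6) (p i) := fun i hi => by
    rcases Nat.eq_zero_or_pos i with rfl | h0
    · exact (hc.comm 0 6 (by omega) (by omega)).symm
    · exact (hc.comm i 6 (by omega) (by omega)).symm
  refine br_conj (c := ([2, 3, 1, 2].map p).prod) hc.br_r ?_ ?_
  · have : Commute (p 6) (p 2 * (p 3 * (p 1 * p 2))) :=
      (hs 2 (by omega)).mul_right ((hs 3 (by omega)).mul_right
        ((hs 1 (by omega)).mul_right (hs 2 (by omega))))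
    simpa using this.eq
  · have h : ((qL ++ [2, 3, 1, 2]).map p).prod = (([2, 3, 1, 2] ++ rL).map p).prod :=
      hc.word6 _ _ (by decide) (by decide) (by decide +kernel)
    rwa [List.map_append, List.prod_append, List.map_append, List.prod_append] at h

lemma Cox.word6a (hc : Cox g p ρ) (u v u' v' : List ℕ) (hu : ∀ i ∈ u ++ v, i < 6)
    (hu' : ∀ i ∈ u' ++ v', i < 6) (h : chk 7 ((u ++ v).map msk) ((u' ++ v').map msk) = true) :
    (u.map p).prod * (v.map p).prod = (u'.map p).prod * (v'.map p).prod := by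
  have := hc.word6 _ _ hu hu' h
  rwa [List.map_append, List.prod_append, List.map_append, List.prod_append] at this

/-- In a group satisfying the Coxeter relations of type `E₇`, the element `zz p` is an involution
commuting with all the generators: up to the factor `p 0 * p 3 * p 1`, it is the longest element of
a Coxeter group of type `D₄`. -/
lemma Cox.zz_central (hc : Cox g p ρ) :
    zz p * zz p = 1 ∧ ∀ i < 7, zz p * p i = p i * zz p := by
  have hg := hc.hg
  set s := p 6 with hs
  set b := (bL.map p).prod with hb
  set x := ([5].map p).prod with hx
  set r := (rL.map p).prod with hr
  set q := (qL.map p).prod with hq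
  set Q := ([0, 3, 1].map p).prod with hQ
  have hx5 : x = p 5 := by simp [hx]
  have one_eq : (1 : H) = (([] : List ℕ).map p).prod * (([] : List ℕ).map p).prod := by simp
  have ss : s * s = 1 := hc.sq 6 (by omega)
  have sx : x * x = 1 := by
    rw [one_eq]; exact hc.word6a _ _ _ _ (by decide) (by decide) (by decide +kernel)
  have sr : r * r = 1 := by
    rw [one_eq]; exact hc.word6a _ _ _ _ (by decide) (by decide) (by decide +kernel)
  have sq' : q * q = 1 := by
    rw [one_eq]; exact hc.word6a _ _ _ _ (by decide) (by decide) (by decide +kernel)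
  have sQ : Q * Q = 1 := by
    rw [one_eq]; exact hc.word6a _ _ _ _ (by decide) (by decide) (by decide +kernel)
  have crx : r * x = x * r := hc.word6a _ _ _ _ (by decide) (by decide) (by decide +kernel)
  have cxq : x * q = q * x := hc.word6a _ _ _ _ (by decide) (by decide) (by decide +kernel)
  have crq : r * q = q * r := hc.word6a _ _ _ _ (by decide) (by decide) (by decide +kernel)
  have cxQ : x * Q = Q * x := hc.word6a _ _ _ _ (by decide) (by decide) (by decide +kernel)
  have crQ : r * Q = Q * r := hc.word6a _ _ _ _ (by decide) (by decide) (by decide +kernel)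
  have cqQ : q * Q = Q * q := hc.word6a _ _ _ _ (by decide) (by decide) (by decide +kernel)
  have csp : ∀ i, i < 5 → Commute s (p i) := fun i hi => by
    rcases Nat.eq_zero_or_pos i with rfl | h0
    · exact (hc.comm 0 6 (by omega) (by omega)).symm
    · exact (hc.comm i 6 (by omega) (by omega)).symm
  have csQ : Commute s Q := by
    have : Q = p 0 * (p 3 * p 1) := by simp [hQ]
    rw [this]
    exact (csp 0 (by omega)).mul_right ((csp 3 (by omega)).mul_right (csp 1 (by omega)))
  have bx : s * x * s = x * s * x := by
    rw [hx5]; exact (hc.br 5 (by omega) (by omega)).symm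
  have br : s * r * s = r * s * r := hc.br_r
  have bq : s * q * s = q * s * q := hc.br_q
  have hbP : b = x * r * q * Q := by
    rw [hb, hx, hr, hq, hQ, bL, List.map_append, List.prod_append, List.map_append,
      List.prod_append, List.map_append, List.prod_append]
  have csPQ : Commute (s * (x * r * q)) Q :=
    Commute.mul_left csQ (Commute.mul_left (Commute.mul_left cxQ crQ) cqQ)
  have hz : zz p = (s * (x * r * q)) ^ 3 * Q := by
    rw [zz, ← hb, ← hs, hbP, ← mul_assoc, csPQ.mul_pow]
    congr 1
    rw [pow_succ, _root_.sq, sQ, one_mul]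
  have hz2 : zz p * zz p = 1 := by
    rw [hz]
    have h := d4_sq ss sx sr sq' bx br bq crx cxq crq
    calc _ = (s * (x * r * q)) ^ 3 * (Q * (s * (x * r * q)) ^ 3) * Q := by simp only [mul_assoc]
      _ = ((s * (x * r * q)) ^ 3 * (s * (x * r * q)) ^ 3) * (Q * Q) := by
        rw [← (csPQ.pow_left 3).eq]; simp only [mul_assoc]
      _ = 1 := by rw [h, sQ, one_mul]
  refine ⟨hz2, fun i hi => ?_⟩
  rcases Nat.lt_or_ge i 5 with h5 | h5
  · have : Commute (s * b) (p i) := Commute.mul_left (csp i h5) (hc.b_comm (by omega))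
    exact this.pow_left 3
  · have : i = 5 ∨ i = 6 := by omega
    rcases this with rfl | rfl
    · rw [hz, ← hx5]
      have h := d4_comm bx br bq crx cxq crq
      exact Commute.mul_left h cxQ.symm
    · have hbb : b * b = 1 := hc.b_sq
      have h1 : zz p * (b * s) ^ 3 = 1 := pow3_inv ss hbb
      have h2 : zz p = (b * s) ^ 3 := mul_left_cancel (hz2.trans h1.symm)
      calc zz p * s = s * (b * s) ^ 3 := by
            rw [zz, ← hb, ← hs]
            simp only [pow_succ, pow_zero, one_mul, mul_assoc]
        _ = s * zz p := by rw [h2]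

end cox

end Orth9

namespace Orth9

open Matrix

variable {g : ℕ}

/-! ### The consequence of the relator `C` for the Coxeter generators -/

lemma lift_gen {G : Type*} [Group G] (p : ℕ → G) {i : ℕ} (hi : i < g) :
    FreeGroup.lift (fun j : Fin g => p j) (gen g i) = p i := by
  rw [gen, dif_pos hi, FreeGroup.lift_apply_of]

/-- The Coxeter relators of type `E₇`. -/
def cox7 : Set (FreeGroup (Fin 7)) :=
  {r | ∃ i < 7, r = gen 7 i * gen 7 i} ∪
  {r | ∃ i j, j < 7 ∧ ((0 < i ∧ i + 1 < j) ∨ (i = 0 ∧ 1 ≤ j ∧ j ≠ 4)) ∧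
      r = gen 7 i * gen 7 j * (gen 7 j * gen 7 i)⁻¹} ∪
  {r | ∃ i, 1 ≤ i ∧ i + 1 < 7 ∧
      r = gen 7 i * gen 7 (i + 1) * gen 7 i *
        (gen 7 (i + 1) * gen 7 i * gen 7 (i + 1))⁻¹} ∪
  {gen 7 0 * gen 7 4 * gen 7 0 * (gen 7 4 * gen 7 0 * gen 7 4)⁻¹}

/-- The Coxeter group of type `E₇`. -/
abbrev W7 := PresentedGroup cox7

/-- The Coxeter generators of `W7`. -/
def wq (i : ℕ) : W7 := PresentedGroup.mk cox7 (gen 7 i)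

/-- The universal property of `W7`. -/
lemma lift7 {G : Type*} [Group G] {p : ℕ → G} (sq : ∀ i < 7, p i * p i = 1)
    (comm : ∀ i j, j < 7 → ((0 < i ∧ i + 1 < j) ∨ (i = 0 ∧ 1 ≤ j ∧ j ≠ 4)) →
      p i * p j = p j * p i)
    (br : ∀ i, 1 ≤ i → i + 1 < 7 → p i * p (i + 1) * p i = p (i + 1) * p i * p (i + 1))
    (br0 : p 0 * p 4 * p 0 = p 4 * p 0 * p 4) : ∃ φ : W7 →* G, ∀ i < 7, φ (wq i) = p i := by
  have h : ∀ r ∈ cox7, FreeGroup.lift (fun j : Fin 7 => p j) r = 1 := by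
    rintro r (((⟨i, hi, rfl⟩ | ⟨i, j, hj, h, rfl⟩) | ⟨i, h1, hi, rfl⟩) | rfl)
    · simp only [map_mul, lift_gen p hi, sq i hi]
    · have hi : i < 7 := by omega
      simp only [map_mul, map_inv, lift_gen p hi, lift_gen p hj, comm i j hj h, mul_inv_cancel]
    · have hi' : i < 7 := by omega
      simp only [map_mul, map_inv, lift_gen p hi, lift_gen p hi', br i h1 hi, mul_inv_cancel]
    · simp (disch := omega) only [map_mul, map_inv, lift_gen p, br0, mul_inv_cancel]
  exact ⟨PresentedGroup.toGroup h, fun _ hi => lift_gen p hi⟩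

lemma vv_rel {g : ℕ} {i j : ℕ} (hj : j < g)
    (h : (0 < i ∧ i + 1 < j) ∨ (i = 0 ∧ 1 ≤ j ∧ j ≠ 4)) : vv g i ⬝ᵥ vv g j = 0 := by
  obtain ⟨j, rfl⟩ : ∃ j', j = j' + 1 := ⟨j - 1, by omega⟩
  rcases h with ⟨h0, h1⟩ | ⟨rfl, h1, h4⟩
  · obtain ⟨i, rfl⟩ : ∃ i', i = i' + 1 := ⟨i - 1, by omega⟩
    rw [vv_succ, vv_succ]
    simp (disch := omega) only [add_dotProduct, dotProduct_add, ee_ne]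
    decide
  · rw [vv_zero, vv_succ]
    rcases Nat.lt_or_ge j 3 with h | h
    · simp (disch := omega) only [dotProduct_add, on_ee_lt]
      decide
    · simp (disch := omega) only [dotProduct_add, on_ee_ge]
      decide

lemma vv_br {g : ℕ} {i : ℕ} (h1 : 1 ≤ i) (hi : i + 1 < g) :
    vv g i ⬝ᵥ vv g (i + 1) = 1 := by
  obtain ⟨i, rfl⟩ : ∃ i', i = i' + 1 := ⟨i - 1, by omega⟩
  rw [vv_succ, vv_succ]
  simp (disch := omega) only [add_dotProduct, dotProduct_add, ee_ne, ee_self]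
  decide

lemma vv_br0 {g : ℕ} (hg : 7 ≤ g) : vv g 0 ⬝ᵥ vv g 4 = 1 := by
  rw [vv_zero, vv_succ 3]
  simp (disch := omega) only [dotProduct_add, on_ee_lt, on_ee_ge]
  decide

lemma wq_map {r : FreeGroup (Fin 7)} (h : r ∈ cox7) : PresentedGroup.mk cox7 r = 1 :=
  PresentedGroup.one_of_mem h

lemma cox_W7 : ∃ ρ : W7 →* OG 7, Cox 7 wq ρ := by
  obtain ⟨ρ, hρ⟩ := lift7 (p := fun i => tau (vv 7 i)) (fun i _ => tau_sq _)
    (fun i j hj h => tau_comm (vv_rel hj h))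
    (fun i h1 hi => tau_braid (vv_self (by omega) (by omega)) (vv_self (by omega) (by omega))
      (vv_br h1 hi))
    (tau_braid (vv_self (by omega) (by omega)) (vv_self (by omega) (by omega)) (vv_br0 le_rfl))
  refine ⟨ρ, le_rfl, hρ, fun i hi => ?_, fun i j hj h => ?_, fun i h1 hi => ?_, ?_⟩
  · exact wq_map (Or.inl (Or.inl (Or.inl ⟨i, hi, rfl⟩)))
  · exact mul_inv_eq_one.1 (wq_map (Or.inl (Or.inl (Or.inr ⟨i, j, hj, h, rfl⟩))))
  · exact mul_inv_eq_one.1 (wq_map (Or.inl (Or.inr ⟨i, h1, hi, rfl⟩)))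
  · exact mul_inv_eq_one.1 (wq_map (Or.inr rfl))

lemma sgn_W7 : ∃ ε : W7 →* ℤˣ, ∀ i < 7, ε (wq i) = -1 :=
  lift7 (p := fun _ => (-1 : ℤˣ)) (fun _ _ => by decide) (fun _ _ _ _ => rfl) (fun _ _ _ => rfl) rfl

lemma sgn_word (ε : W7 →* ℤˣ) (hε : ∀ i < 7, ε (wq i) = -1) {w : List ℕ} (hw : ∀ i ∈ w, i < 7) :
    ε (w.map wq).prod = (-1) ^ w.length := by
  induction w with
  | nil => simp
  | cons a w ih =>
    rw [List.map_cons, List.prod_cons, map_mul, ih fun i hi => hw i (List.mem_cons_of_mem _ hi),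
      hε a (hw a List.mem_cons_self), List.length_cons, pow_succ']

lemma zz_word {H : Type*} [Group H] (p : ℕ → H) : zz p = ((lpow 3 (6 :: bL)).map p).prod := by
  rw [prod_lpow, zz, List.map_cons, List.prod_cons]

/-- The Coxeter element of `a₂, …, a₆, a₀`, as a word. -/
def uL : List ℕ := [2, 3, 4, 5, 6, 0]

/-- The Coxeter element of `a₁, …, a₆, a₀`, as a word. -/
def vL : List ℕ := [1, 2, 3, 4, 5, 6, 0]

lemma br_of_pow3 {H : Type*} [Group H] {s b : H} (hs : s * s = 1) (hb : b * b = 1)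
    (h : (s * b) ^ 3 = 1) : s * b * s = b * s * b := by
  have h1 : (s * b * s) * (b * s * b) = 1 := by
    rw [← h]; simp only [pow_succ, pow_zero, one_mul, mul_assoc]
  have h2 : (b * s * b) * (b * s * b) = 1 := by
    calc (b * s * b) * (b * s * b) = b * (s * (b * b) * s) * b := by simp only [mul_assoc]
      _ = 1 := by rw [hb, mul_one, hs, mul_one, hb]
  exact mul_right_cancel (h1.trans h2.symm)

lemma Cox.b_act {H : Type*} [Group H] {p : ℕ → H} {ρ : H →* OG g} (hc : Cox g p ρ) :
    ac (ρ (bL.map p).prod) (ee g 5) = on g 5 := by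
  have hg := hc.hg
  have hlt : ∀ i ∈ bL, i < 7 := by decide
  have h1 : ρ (bL.map p).prod = tprod (ee g) 7 (bL.map msk) := by
    rw [hc.word_map fun i hi => (hlt i hi).trans_le hg, tprod, List.map_map]
    congr 1
    exact List.map_congr_left fun i hi => by simp [mv_msk (hlt i hi)]
  have h2 := tprod_mv (ON_ee hg) (w := bL.map msk) (by decide +kernel) (2 ^ 5)
  have h3 : run 7 (bL.map msk) (2 ^ 5) = 31 := by decide +kernel
  rw [h3, mv_pow (ee g) (by omega)] at h2
  rw [h1, h2]
  simp [mv, Finset.sum_range_succ, bt, Nat.testBit, on_succ, on_zero]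

/-- Passing to the quotient by the central element `zz`, every relation between the images
in `O(7, ℤ/2)` holds in `W7` up to `zz`. -/
lemma W7_word {w : List ℕ} (hw : ∀ i ∈ w, i < 7) (h : chk 7 (w.map msk) [] = true) :
    (w.map wq).prod = 1 ∨ (w.map wq).prod = zz wq := by
  obtain ⟨ρ, hc⟩ := cox_W7
  obtain ⟨hz2, hzc⟩ := hc.zz_central
  have hcen : ∀ x : W7, zz wq * x = x * zz wq := by
    intro x
    obtain ⟨y, rfl⟩ := PresentedGroup.mk_surjective cox7 x
    induction y using FreeGroup.induction_on with
    | C1 => simp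
    | of i =>
      have : (FreeGroup.of i : FreeGroup (Fin 7)) = gen 7 i := by rw [gen, dif_pos i.2]
      rw [this]; exact hzc i i.2
    | inv_of i ih =>
      rw [map_inv]
      exact (Commute.inv_right (show Commute _ _ from ih))
    | mul x y hx hy =>
      rw [map_mul]
      exact (show Commute _ _ from hx).mul_right hy
  let N : Subgroup W7 := Subgroup.zpowers (zz wq)
  have hN : N.Normal := by
    constructor
    rintro x ⟨k, rfl⟩ y
    refine ⟨k, ?_⟩
    have : Commute (zz wq ^ k) y := (show Commute (zz wq) y from hcen y).zpow_left k
    simp only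
    rw [← this.eq, mul_inv_cancel_right]
  have hNm : ∀ x ∈ N, x = 1 ∨ x = zz wq := by
    rintro x ⟨k, rfl⟩
    have hz2' : zz wq ^ (2 : ℤ) = 1 := by rw [zpow_two]; exact hz2
    rcases Int.even_or_odd' k with ⟨m, rfl | rfl⟩
    · left; simp only; rw [_root_.zpow_mul, hz2', _root_.one_zpow]
    · right; simp only; rw [_root_.zpow_add, _root_.zpow_mul, hz2', _root_.one_zpow, one_mul, zpow_one]
  have hρz : ρ (zz wq) = 1 := by
    rw [zz_word, hc.word_map (by decide), tau_word (w' := []) le_rfl (by decide) (by decide)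
      (by decide +kernel)]
    rfl
  have hker : N ≤ ρ.ker := by
    rw [Subgroup.zpowers_le]; exact hρz
  let ρ' : W7 ⧸ N →* OG 7 := QuotientGroup.lift N ρ hker
  let π : W7 →* W7 ⧸ N := QuotientGroup.mk' N
  let p' : ℕ → W7 ⧸ N := fun i => π (wq i)
  have hπw : ∀ w : List ℕ, π (w.map wq).prod = (w.map p').prod := by
    intro w
    rw [map_list_prod, List.map_map]; rfl
  have hc' : Cox 7 p' ρ' := by
    refine ⟨le_rfl, hc.map, fun i hi => ?_, fun i j hj h => ?_, fun i h1 hi => ?_, ?_⟩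
    · simp only [p', ← map_mul, hc.sq i hi, map_one]
    · simp only [p', ← map_mul, hc.comm i j hj h]
    · simp only [p', ← map_mul, hc.br i h1 hi]
    · simp only [p', ← map_mul, hc.br0]
  have hz' : (p' 6 * (bL.map p').prod) ^ 3 = 1 := by
    have : π (zz wq) = 1 := (QuotientGroup.eq_one_iff _).2 (Subgroup.mem_zpowers _)
    rw [← hπw, ← map_mul, ← map_pow]
    exact this
  have h1 := hc'.inj ⟨(bL.map p').prod, word_mem (by omega) (by decide), ?_, ?_⟩ (n := 7) le_rfl
    (d := (w.map p').prod) (word_mem (by omega) hw) ?_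
  · rw [← hπw] at h1
    exact hNm _ ((QuotientGroup.eq_one_iff _).1 h1)
  · exact hc'.b_act
  · exact br_of_pow3 (hc'.sq 6 (by omega)) hc'.b_sq hz'
  · rw [hc'.word_map hw, tau_word (w' := []) le_rfl hw (by decide) h]
    rfl

/-- Both words are trivial in `O(7, ℤ/2)`; the sign homomorphism, which is `-1` on `zz`, decides
which of the two possible values each takes. -/
lemma W7_rel : ((lpow 12 uL).map wq).prod = 1 ∧ ((lpow 9 vL).map wq).prod = zz wq := by
  obtain ⟨ε, hε⟩ := sgn_W7
  have hz : ε (zz wq) = -1 := by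
    rw [zz_word, sgn_word ε hε (by decide)]; decide
  constructor
  · refine (W7_word (by decide) (by decide +kernel)).resolve_right fun h => ?_
    have h' := congrArg ε h
    rw [hz, sgn_word ε hε (by decide)] at h'
    exact absurd h' (by decide)
  · refine (W7_word (by decide) (by decide +kernel)).resolve_left fun h => ?_
    have h' := congrArg ε h
    rw [map_one, sgn_word ε hε (by decide)] at h'
    exact absurd h' (by decide)

/-- In the presence of the Coxeter relations, the relator `C` makes `p 6` braid with the central
involution of the subgroup of type `D₆`. -/
lemma Cox.b_braid {H : Type*} [Group H] {p : ℕ → H} {ρ : H →* OG g} (hc : Cox g p ρ)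
    (h : (uL.map p).prod ^ 12 = (vL.map p).prod ^ 9) :
    p 6 * (bL.map p).prod * p 6 = (bL.map p).prod * p 6 * (bL.map p).prod := by
  have hg := hc.hg
  obtain ⟨φ, hφ⟩ := lift7 (p := p) (fun i hi => hc.sq i (by omega))
    (fun i j hj => hc.comm i j (by omega)) (fun i h1 hi => hc.br i h1 (by omega)) hc.br0
  have hw : ∀ {w : List ℕ}, (∀ i ∈ w, i < 7) → φ (w.map wq).prod = (w.map p).prod := by
    intro w hw
    rw [map_list_prod, List.map_map]
    congr 1
    exact List.map_congr_left fun i hi => hφ i (hw i hi)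
  have h1 := congrArg φ W7_rel.1
  have h2 := congrArg φ W7_rel.2
  rw [hw (by decide), prod_lpow, map_one] at h1
  rw [zz_word, hw (by decide), hw (by decide), ← zz_word, prod_lpow, ← h, h1] at h2
  exact br_of_pow3 (hc.sq 6 (by omega)) hc.b_sq h2.symm

end Orth9

namespace Orth9

open Matrix

variable {g : ℕ}

/-! ### The presentation of the orthogonal group -/

/-- The homomorphism from the free group to `O(g, ℤ/2)` sending `aᵢ` to the transvection along
`vv g i`. -/
def ph (g : ℕ) : FreeGroup (Fin g) →* OG g := FreeGroup.lift fun i : Fin g => tau (vv g i)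

lemma ph_gen {i : ℕ} (hi : i < g) : ph g (gen g i) = tau (vv g i) :=
  lift_gen (fun i => tau (vv g i)) hi

lemma Cword_map {G : Type*} [Group G] (f : FreeGroup (Fin g) →* G)
    (h : ∀ i < 7, f (gen g i) * f (gen g i) = 1) :
    f (Cword g) = (uL.map fun i => f (gen g i)).prod ^ 12 *
      ((vL.map fun i => f (gen g i)).prod ^ 9)⁻¹ := by
  have hi : ∀ i < 7, (f (gen g i))⁻¹ = f (gen g i) := fun i hi =>
    inv_eq_of_mul_eq_one_left (h i hi)
  rw [Cword]
  simp only [map_mul, map_pow, map_zpow, map_inv]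
  simp (disch := omega) only [hi, uL, vL, List.map_cons, List.map_nil, List.prod_cons,
    List.prod_nil, mul_one]
  simp only [mul_assoc]
  generalize f (gen g 2) * _ = u
  generalize f (gen g 1) * _ = v
  group

lemma ph_Cword (hg : 7 ≤ g) : ph g (Cword g) = 1 := by
  have e : ∀ w : List ℕ, (∀ i ∈ w, i < 7) → (w.map fun i => ph g (gen g i)) =
      w.map fun i => tau (vv g i) := fun w hw =>
    List.map_congr_left fun i hi => ph_gen ((hw i hi).trans_le hg)
  rw [Cword_map _ fun i hi => by rw [ph_gen (by omega), tau_sq], e _ (by decide), e _ (by decide),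
    ← prod_lpow, ← prod_lpow, tau_word (w' := []) hg (by decide) (by decide) (by decide +kernel),
    tau_word (w := lpow 9 vL) (w' := []) hg (by decide) (by decide) (by decide +kernel)]
  simp

/-- The word `bword g i` maps to the transvection along the sum of the first `2 i + 2` basis
vectors. -/
lemma ph_bword (hg : 7 ≤ g) : ∀ i, 1 ≤ i → 2 * i + 2 ≤ g →
    ph g (bword g i) = tau (on g (2 * i + 2))
  | 0 => fun h => absurd h (by omega)
  | 1 => fun _ _ => by
    rw [bword, ph_gen (by omega), vv_zero]
  | 2 => fun _ _ => by
    have h := tprod_eq (ON_ee hg) (w := lpow 5 ([1, 2, 3, 4, 5, 0].map msk)) (w' := [63])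
      (by decide +kernel)
    have h6 : mv (ee g) 7 63 = on g 6 := by
      simp [mv, Finset.sum_range_succ, bt, Nat.testBit, on_succ, on_zero]
    simp only [tprod, prod_lpow] at h
    simp (disch := omega) only [List.map_cons, List.map_nil, List.prod_cons, List.prod_nil,
      mul_one, mv_msk, h6] at h
    rw [bword]
    simp (disch := omega) only [map_pow, map_mul, ph_gen, mul_assoc]
    exact h
  | (n + 3) => fun _ hn => by
    have ih1 := ph_bword hg (n + 1) (by omega) (by omega)
    have ih2 := ph_bword hg (n + 2) (by omega) (by omega)
    -- the identities of the case `i = 2` hold for the orthonormal vectors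
    -- `e₀ + ⋯ + e_{2n+2}`, `e_{2n+3}`, …, `e_{2n+7}`
    let f : ℕ → VV g := fun j => if j = 0 then on g (2 * n + 3) else ee g (2 * n + 2 + j)
    have f0 : f 0 = on g (2 * n + 3) := rfl
    have fs : ∀ j, f (j + 1) = ee g (2 * n + 3 + j) := fun j => by
      simp only [f, Nat.add_eq_zero_iff, one_ne_zero, and_false, if_false]
      congr 1; omega
    have hf : ON f 6 := by
      intro i hi j hj
      rcases i with _ | i <;> rcases j with _ | j
      · rw [f0, on_on le_rfl (by omega)]
        have h2 := zadd (n : ZMod 2)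
        have h3 : (3 : ZMod 2) = 1 := by decide
        push_cast
        rw [h3, two_mul, h2, zero_add]
      · rw [f0, fs, on_ee_ge (by omega)]; simp
      · rw [f0, fs, ee_on_ge (by omega)]; simp
      · rw [fs, fs, ee_ee (by omega)]
        simp
    have h1 := tprod_eq hf (w := lpow 5 [3, 6, 12, 24, 48, 15]) (w' := [63]) (by decide +kernel)
    have h2 := tprod_eq hf (w := lpow 6 [3, 6, 12, 24, 48]) (w' := []) (by decide +kernel)
    have m3 : mv f 6 3 = on g (2 * (n + 1) + 2) := by
      simp [mv, Finset.sum_range_succ, bt, Nat.testBit, f0, fs, mul_add, on_succ]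
    have m6 : mv f 6 6 = vv g (2 * (n + 2)) := by
      rw [show 2 * (n + 2) = 2 * n + 3 + 1 by omega, vv_succ]
      simp [mv, Finset.sum_range_succ, bt, Nat.testBit, fs]
    have m12 : mv f 6 12 = vv g (2 * (n + 2) + 1) := by
      rw [show 2 * (n + 2) + 1 = 2 * n + 3 + 1 + 1 by omega, vv_succ]
      simp [mv, Finset.sum_range_succ, bt, Nat.testBit, fs, add_assoc]
    have m24 : mv f 6 24 = vv g (2 * (n + 2) + 2) := by
      rw [show 2 * (n + 2) + 2 = 2 * n + 3 + 2 + 1 by omega, vv_succ]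
      simp [mv, Finset.sum_range_succ, bt, Nat.testBit, fs, add_assoc]
    have m48 : mv f 6 48 = vv g (2 * (n + 2) + 3) := by
      rw [show 2 * (n + 2) + 3 = 2 * n + 3 + 3 + 1 by omega, vv_succ]
      simp [mv, Finset.sum_range_succ, bt, Nat.testBit, fs, add_assoc]
    have m15 : mv f 6 15 = on g (2 * (n + 2) + 2) := by
      rw [show 2 * (n + 2) + 2 = 2 * n + 3 + 1 + 1 + 1 by omega, on_succ, on_succ, on_succ]
      simp [mv, Finset.sum_range_succ, bt, Nat.testBit, f0, fs, add_assoc]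
    have m63 : mv f 6 63 = on g (2 * (n + 3) + 2) := by
      rw [show 2 * (n + 3) + 2 = 2 * n + 3 + 1 + 1 + 1 + 1 + 1 by omega, on_succ, on_succ, on_succ,
        on_succ, on_succ]
      simp [mv, Finset.sum_range_succ, bt, Nat.testBit, f0, fs, add_assoc]
    simp only [tprod, prod_lpow] at h1 h2
    simp only [List.map_cons, List.map_nil, List.prod_cons, List.prod_nil,
      mul_one, m3, m6, m12, m24, m48, m15, m63] at h1 h2
    rw [bword]
    simp (disch := omega) only [map_pow, map_zpow, map_mul, ph_gen, ih1, ih2, mul_assoc]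
    rw [h1, _root_.zpow_neg, show (6 : ℤ) = ((6 : ℕ) : ℤ) from rfl, zpow_natCast, h2, inv_one, mul_one]

lemma ph_rel (hg : 9 ≤ g) : ∀ r ∈ R9 g, ph g r = 1 := by
  rintro r (((((⟨i, hi, rfl⟩ | ⟨i, j, hj, h, rfl⟩) | ⟨i, h1, hi, rfl⟩) | rfl) | rfl) | ⟨he, rfl⟩)
  · rw [map_pow, ph_gen hi, _root_.sq, tau_sq]
  · have hi : i < g := by omega
    rw [map_mul, map_mul, map_mul, map_inv, map_inv, ph_gen hi, ph_gen hj, tau_comm (vv_rel hj h)]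
    simp
  · simp (disch := omega) only [map_mul, map_inv, ph_gen]
    rw [tau_braid (vv_self (by omega) (by omega)) (vv_self (by omega) (by omega)) (vv_br h1 hi),
      mul_inv_cancel]
  · simp (disch := omega) only [map_mul, map_inv, ph_gen]
    rw [tau_braid (vv_self (by omega) (by omega)) (vv_self (by omega) (by omega))
      (vv_br0 (by omega)), mul_inv_cancel]
  · exact ph_Cword (by omega)
  · obtain ⟨m, hm⟩ := he
    have hd : vv g (g - 5) ⬝ᵥ on g g = 0 := by
      rw [dot_on (supp_vv (by omega) (by omega)), vv_self (by omega) (by omega)]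
    rw [map_mul, map_mul, map_mul, map_inv, map_inv, ph_gen (by omega), ph_bword (by omega) _
      (by omega) (by omega), show 2 * ((g - 2) / 2) + 2 = g by omega, tau_comm hd]
    simp

/-- The orthogonal group as a quotient of the presented group. -/
def phq (hg : 9 ≤ g) : PresentedGroup (R9 g) →* OG g := PresentedGroup.toGroup (ph_rel hg)

/-- The generators of the presented group. -/
def pq (g i : ℕ) : PresentedGroup (R9 g) := PresentedGroup.mk (R9 g) (gen g i)

lemma cox_pq (hg : 9 ≤ g) : Cox g (pq g) (phq hg) := by
  have hm : ∀ {r}, r ∈ R9 g → PresentedGroup.mk (R9 g) r = 1 := PresentedGroup.one_of_mem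
  refine ⟨by omega, fun i hi => ph_gen hi, fun i hi => ?_, fun i j hj h => ?_, fun i h1 hi => ?_, ?_⟩
  · have := hm (Or.inl (Or.inl (Or.inl (Or.inl (Or.inl ⟨i, hi, rfl⟩)))))
    rwa [_root_.sq] at this
  · have := hm (Or.inl (Or.inl (Or.inl (Or.inl (Or.inr ⟨i, j, hj, h, rfl⟩)))))
    rw [map_mul, map_mul, map_mul, map_inv, map_inv, mul_inv_eq_one, mul_inv_eq_iff_eq_mul] at this
    exact this
  · exact mul_inv_eq_one.1 (hm (Or.inl (Or.inl (Or.inl (Or.inr ⟨i, h1, hi, rfl⟩)))))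
  · exact mul_inv_eq_one.1 (hm (Or.inl (Or.inl (Or.inr rfl))))

lemma DD_pq : DD (pq g) g = ⊤ ∨ g < 4 := by
  by_cases h4 : g < 4
  · exact Or.inr h4
  left
  rw [eq_top_iff, ← PresentedGroup.closure_range_of, Subgroup.closure_le]
  rintro _ ⟨i, rfl⟩
  have : PresentedGroup.of i = pq g i := by rw [pq, gen, dif_pos i.2]; rfl
  rw [this]
  exact DD_gen i.2 (by omega)

lemma phq_injective (hg : 9 ≤ g) : Function.Injective (phq hg) := by
  rw [injective_iff_map_eq_one]
  intro d hd
  have hc := cox_pq hg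
  have hC : (uL.map (pq g)).prod ^ 12 = (vL.map (pq g)).prod ^ 9 := by
    have h1 := Cword_map (PresentedGroup.mk (R9 g)) fun i hi => hc.sq i (by omega)
    rw [PresentedGroup.one_of_mem (Or.inl (Or.inr rfl))] at h1
    exact (mul_inv_eq_one.1 h1.symm)
  refine hc.inj ⟨_, word_mem (by omega) (by decide), hc.b_act, hc.b_braid hC⟩ le_rfl ?_ hd
  rw [DD_pq.resolve_right (by omega)]
  trivial

/-- The transvections along the `vv g i` generate the orthogonal group: a matrix fixing all
`e_j` with `j ≥ k` is a product of such transvections on the first `k` coordinates. -/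
lemma Cox.surj {H : Type*} [Group H] {p : ℕ → H} {ρ : H →* OG g} (hc : Cox g p ρ) (k : ℕ)
    (hk : k + 1 ≤ g) (A : OG g) (hA : ∀ j, k + 1 ≤ j → j < g → ac A (ee g j) = ee g j) :
    ∃ d ∈ DD p (k + 1), ρ d = A := by
  have hg := hc.hg
  induction k generalizing A with
  | zero =>
    refine ⟨1, one_mem _, ?_⟩
    rw [map_one]
    have h0 : ac A (ee g 0) = ee g 0 := by
      apply vec_ext
      intro j hj
      rcases Nat.eq_zero_or_pos j with rfl | hj0
      · have hs : supp 1 (ac A (ee g 0)) := supp_iff.2 fun j h1 hj => by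
          rw [← hA j (by omega) hj, ac_dot, ee_ne (by omega)]
        have h1 := dot_on hs
        rw [ac_dot, ee_self hj, on_succ, on_zero, zero_add, dotProduct_comm] at h1
        rw [h1, ee_self hj]
      · rw [← hA j (by omega) hj, ac_dot, hA j (by omega) hj]
    apply ac_ext
    intro x
    apply vec_ext
    intro j hj
    have : ac A (ee g j) = ee g j := by
      rcases Nat.eq_zero_or_pos j with rfl | hj0
      · exact h0
      · exact hA j (by omega) hj
    rw [ac_one]
    conv_rhs => rw [← this, ac_dot]
  | succ k ih =>
    have hs : ∀ i, i ≤ k + 1 → supp (k + 1 + 1) (ac A (ee g i)) := fun i hi =>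
      supp_iff.2 fun j h1 hj => by
        rw [← hA j (by omega) hj, ac_dot, ee_ne (by omega)]
    obtain ⟨d, hd, hdx⟩ := hc.trans (k + 1) hk (ac A (ee g (k + 1))) (hs _ le_rfl)
      (by rw [ac_dot, ee_self (by omega)]) (fun h => by
        have h1 := dot_on (hs 0 (by omega))
        rw [← h, ac_dot, ac_dot, ee_self (by omega), ee_ne (by omega)] at h1
        exact absurd h1 (by decide))
    obtain ⟨d', hd', hρ⟩ := ih (by omega) ((ρ d)⁻¹ * A) (fun j h1 hj => by
      rw [ac_mul]
      apply ac_injective (ρ d)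
      rw [ac_ac_inv]
      rcases Nat.eq_or_lt_of_le h1 with rfl | h2
      · exact hdx.symm
      · rw [hA j (by omega) hj, hc.fix_ee hk (by omega) hd])
    refine ⟨d * d', mul_mem hd (DD_mono (by omega) hd'), ?_⟩
    rw [map_mul, hρ, mul_inv_cancel_left]

lemma phq_surjective (hg : 9 ≤ g) : Function.Surjective (phq hg) := by
  intro A
  obtain ⟨k, rfl⟩ : ∃ k, g = k + 1 := ⟨g - 1, by omega⟩
  obtain ⟨d, -, hd⟩ := (cox_pq hg).surj k le_rfl A fun j h1 h2 => absurd h1 (by omega)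
  exact ⟨d, hd⟩

lemma ph_surjective (hg : 9 ≤ g) : Function.Surjective (ph g) := by
  intro A
  obtain ⟨d, rfl⟩ := phq_surjective hg A
  obtain ⟨x, rfl⟩ := PresentedGroup.mk_surjective _ d
  exact ⟨x, rfl⟩

lemma ph_ker (hg : 9 ≤ g) {x : FreeGroup (Fin g)} (h : ph g x = 1) :
    x ∈ Subgroup.normalClosure (R9 g) := by
  rw [← PresentedGroup.mk_eq_one_iff]
  apply phq_injective hg
  rw [map_one]
  exact h

end Orth9

namespace Orth9

open Matrix

open scoped commutatorElement

variable {g : ℕ}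

/-! ### Commutators modulo `[K, F]` -/

/-- The subgroup `[K, F]`. -/
abbrev NN (g : ℕ) : Subgroup (FreeGroup (Fin g)) := ⁅Subgroup.normalClosure (R9 g), ⊤⁆

/-- The quotient `F / [K, F]`, a central extension of `O(g, ℤ/2)`. -/
abbrev Gam (g : ℕ) := FreeGroup (Fin g) ⧸ NN g

/-- The projection `F → F / [K, F]`. -/
def pi (g : ℕ) : FreeGroup (Fin g) →* Gam g := QuotientGroup.mk' (NN g)

lemma pi_surj : Function.Surjective (pi g) := QuotientGroup.mk'_surjective _

lemma pi_eq_one {x : FreeGroup (Fin g)} : pi g x = 1 ↔ x ∈ NN g := QuotientGroup.eq_one_iff x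

lemma pi_central (hg : 9 ≤ g) {x : FreeGroup (Fin g)} (h : ph g x = 1) (γ : Gam g) :
    pi g x * γ = γ * pi g x := by
  obtain ⟨y, rfl⟩ := pi_surj γ
  have h1 : pi g ⁅x, y⁆ = 1 :=
    pi_eq_one.2 (Subgroup.commutator_mem_commutator (ph_ker hg h) (Subgroup.mem_top y))
  rw [map_commutatorElement, commutatorElement_eq_one_iff_mul_comm] at h1
  exact h1

/-- If the commutators of the `u i` with `y` are central, then taking the commutator with `y` is
multiplicative on words in the `u i`. -/
lemma comm_prod {G : Type*} [Group G] (u : ℕ → G) (y : G) (L : List ℕ)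
    (h : ∀ i ∈ L, ∀ γ : G, ⁅u i, y⁆ * γ = γ * ⁅u i, y⁆) :
    ⁅(L.map u).prod, y⁆ = (L.map fun i => ⁅u i, y⁆).prod := by
  induction L with
  | nil => simp
  | cons i L ih =>
    have ih' := ih fun j hj => h j (List.mem_cons_of_mem _ hj)
    have hc := h i List.mem_cons_self
    rw [List.map_cons, List.prod_cons, List.map_cons, List.prod_cons, ← ih', hc]
    have h2 : ∀ γ : G, ⁅(L.map u).prod, y⁆ * γ = γ * ⁅(L.map u).prod, y⁆ := by
      intro γ
      rw [ih']
      refine (Commute.list_prod_left _ _ fun z hz => ?_ : Commute _ γ)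
      obtain ⟨j, hj, rfl⟩ := List.mem_map.1 hz
      exact h j (List.mem_cons_of_mem _ hj) γ
    calc ⁅u i * (L.map u).prod, y⁆ = u i * ⁅(L.map u).prod, y⁆ * (u i)⁻¹ * ⁅u i, y⁆ := by
          simp only [commutatorElement_def]; group
      _ = _ := by rw [← h2, mul_inv_cancel_right]

/-- Elements of `F / [K, F]` lying over a transvection along `w` and over a transvection of a
configuration of type `E₇` spanned by orthonormal vectors having the same product with `w`
commute: the commutator with the former is a homomorphism from (the subgroup generated by) the
configuration to an abelian group, and the braid relations, the squares and the relation
`(a₁⋯a₆a₀)⁹ = 1` show that it is trivial. -/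
lemma comm_config (hg : 9 ≤ g) {f : ℕ → VV g} (hf : ON f 7) {w : VV g} {c : ZMod 2}
    (hc : ∀ j < 7, f j ⬝ᵥ w = c) {y : FreeGroup (Fin g)} (hy : ph g y = tau w) {i : ℕ} (hi : i < 7)
    {x : FreeGroup (Fin g)} (hx : ph g x = tau (mv f 7 (msk i))) :
    pi g x * pi g y = pi g y * pi g x := by
  choose u hu using fun j => ph_surjective hg (tau (mv f 7 (msk j)))
  have hd : ∀ j < 7, mv f 7 (msk j) ⬝ᵥ w = 0 := by
    intro j hj
    rw [mv_dot_ext]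
    have : ∑ k ∈ Finset.range 7, bt (msk j) k * (f k ⬝ᵥ w) =
        (∑ k ∈ Finset.range 7, bt (msk j) k) * c := by
      rw [Finset.sum_mul]
      exact Finset.sum_congr rfl fun k hk => by rw [hc k (Finset.mem_range.1 hk)]
    rw [this, ← par_eq, show par 7 (msk j) = false by interval_cases j <;> decide]
    simp
  let t : ℕ → Gam g := fun j => ⁅pi g (u j), pi g y⁆
  have ht : ∀ j < 7, ∀ γ, t j * γ = γ * t j := by
    intro j hj γ
    simp only [t, ← map_commutatorElement]
    refine pi_central hg ?_ γ
    rw [map_commutatorElement, commutatorElement_eq_one_iff_mul_comm, hu, hy, tau_comm (hd j hj)]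
  have hk : ∀ a b : FreeGroup (Fin g), ph g a = ph g b → ⁅pi g a, pi g y⁆ = ⁅pi g b, pi g y⁆ := by
    intro a b hab
    have h1 : ph g (a * b⁻¹) = 1 := by rw [map_mul, map_inv, hab, mul_inv_cancel]
    have h2 := pi_central hg h1
    have h3 : pi g a = pi g (a * b⁻¹) * pi g b := by rw [← map_mul, inv_mul_cancel_right]
    rw [h3]
    generalize pi g (a * b⁻¹) = z at *
    simp only [commutatorElement_def]
    calc z * pi g b * pi g y * (z * pi g b)⁻¹ * (pi g y)⁻¹
        = z * (pi g b * pi g y * (pi g b)⁻¹) * z⁻¹ * (pi g y)⁻¹ := by group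
      _ = _ := by rw [h2, mul_inv_cancel_right]
  have hw : ∀ L L' : List ℕ, (∀ i ∈ L, i < 7) → (∀ i ∈ L', i < 7) →
      chk 7 (L.map msk) (L'.map msk) = true → (L.map t).prod = (L'.map t).prod := by
    intro L L' hL hL' h
    have e : ∀ L : List ℕ, (∀ i ∈ L, i < 7) →
        (L.map t).prod = ⁅pi g (L.map u).prod, pi g y⁆ := by
      intro L hL
      rw [map_list_prod, List.map_map]
      exact (comm_prod (fun j => pi g (u j)) _ L fun i hi => ht i (hL i hi)).symm
    have e2 : ∀ L : List ℕ, ph g (L.map u).prod = tprod f 7 (L.map msk) := by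
      intro L
      rw [map_list_prod, List.map_map, tprod, List.map_map]
      congr 1
      exact List.map_congr_left fun i _ => hu i
    rw [e L hL, e L' hL']
    refine hk _ _ ?_
    rw [e2, e2, tprod_eq hf h]
  have hbr : ∀ a b, a < 7 → b < 7 → chk 7 ([a, b, a].map msk) ([b, a, b].map msk) = true →
      t a = t b := by
    intro a b ha hb h
    have := hw [a, b, a] [b, a, b] (by simp; omega) (by simp; omega) h
    simp only [List.map_cons, List.map_nil, List.prod_cons, List.prod_nil, mul_one] at this
    rw [ht a ha (t b)] at this
    exact mul_right_cancel this
  have h12 : t 1 = t 2 := hbr _ _ (by omega) (by omega) (by decide +kernel)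
  have h23 : t 2 = t 3 := hbr _ _ (by omega) (by omega) (by decide +kernel)
  have h34 : t 3 = t 4 := hbr _ _ (by omega) (by omega) (by decide +kernel)
  have h45 : t 4 = t 5 := hbr _ _ (by omega) (by omega) (by decide +kernel)
  have h56 : t 5 = t 6 := hbr _ _ (by omega) (by omega) (by decide +kernel)
  have h04 : t 0 = t 4 := hbr _ _ (by omega) (by omega) (by decide +kernel)
  have hall : ∀ j < 7, t j = t 6 := by
    intro j hj
    interval_cases j <;> simp only [h12, h23, h34, h45, h56, h04]
  have hsq : t 6 * t 6 = 1 := by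
    have := hw [6, 6] [] (by decide) (by decide) (by decide +kernel)
    simpa using this
  have h63 : (t 6 ^ 7) ^ 9 = 1 := by
    have := hw (lpow 9 vL) [] (by decide) (by decide) (by decide +kernel)
    rw [prod_lpow, vL] at this
    simp only [List.map_cons, List.map_nil, List.prod_cons, List.prod_nil, mul_one, h12, h23, h34,
      h45, h56, h04] at this
    rw [← this]
    simp only [pow_succ, pow_zero, one_mul, mul_assoc]
  have h6 : t 6 = 1 := by
    rw [← pow_mul, show 7 * 9 = 2 * 31 + 1 by norm_num, pow_succ, pow_mul, _root_.sq, hsq, one_pow,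
      one_mul] at h63
    exact h63
  have := hk x (u i) (by rw [hx, hu])
  rw [show ⁅pi g (u i), pi g y⁆ = t i from rfl, hall i hi, h6,
    commutatorElement_eq_one_iff_mul_comm] at this
  exact this

/-- A partial choice of pairwise different indices avoiding a small set extends to seven indices. -/
lemma exists_idx (l : ℕ → ℕ) (bad : Finset ℕ) (hb : 7 + bad.card ≤ g) (m n : ℕ) (hn : m + n ≤ 7)
    (hl : ∀ k < m, l k < g ∧ l k ∉ bad) (hi : ∀ a < m, ∀ b < m, l a = l b → a = b) :
    ∃ s : ℕ → ℕ, (∀ k < m, s k = l k) ∧ (∀ k < m + n, s k < g ∧ s k ∉ bad) ∧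
      ∀ a < m + n, ∀ b < m + n, s a = s b → a = b := by
  induction n with
  | zero => exact ⟨l, fun _ _ => rfl, hl, hi⟩
  | succ n ih =>
    obtain ⟨s, h1, h2, h3⟩ := ih (by omega)
    obtain ⟨x, hx⟩ : ∃ x ∈ Finset.range g, x ∉ bad ∪ (Finset.range (m + n)).image s := by
      apply Finset.exists_mem_notMem_of_card_lt_card
      have := Finset.card_union_le bad ((Finset.range (m + n)).image s)
      have := Finset.card_image_le (s := Finset.range (m + n)) (f := s)
      simp only [Finset.card_range] at *
      omega
    simp only [Finset.mem_range, Finset.mem_union, Finset.mem_image, not_or, not_exists,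
      not_and] at hx
    obtain ⟨hxg, hxb, hxs⟩ := hx
    refine ⟨fun k => if k = m + n then x else s k, fun k hk => ?_, fun k hk => ?_, ?_⟩
    · simp only; rw [if_neg (by omega), h1 k hk]
    · simp only
      split_ifs with h
      · exact ⟨hxg, hxb⟩
      · exact h2 k (by omega)
    · intro a ha b hb hab
      simp only at hab
      split_ifs at hab with h h' h'
      · omega
      · exact absurd hab.symm (hxs b (by omega))
      · exact absurd hab (hxs a (by omega))
      · exact h3 a (by omega) b (by omega) hab

lemma ON_idx {s : ℕ → ℕ} (h2 : ∀ k < 7, s k < g) (h3 : ∀ a < 7, ∀ b < 7, s a = s b → a = b) :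
    ON (fun k => ee g (s k)) 7 := by
  intro i hi j hj
  rw [ee_ee (h2 i hi)]
  by_cases h : i = j
  · rw [if_pos h, if_pos (congrArg s h)]
  · rw [if_neg h, if_neg fun h' => h (h3 i hi j hj h')]

lemma mv_three (f : ℕ → VV g) : mv f 7 (msk 1) = f 0 + f 1 := by
  simp [mv, msk, Finset.sum_range_succ, bt, Nat.testBit]

lemma mv_fifteen (f : ℕ → VV g) : mv f 7 (msk 0) = f 0 + f 1 + f 2 + f 3 := by
  simp [mv, msk, Finset.sum_range_succ, bt, Nat.testBit]

lemma pi_comm (hg : 9 ≤ g) {i j : ℕ} (hj : j < g)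
    (h : (0 < i ∧ i + 1 < j) ∨ (i = 0 ∧ 1 ≤ j ∧ j ≠ 4)) :
    pi g (gen g i) * pi g (gen g j) = pi g (gen g j) * pi g (gen g i) := by
  obtain ⟨j, rfl⟩ : ∃ j', j = j' + 1 := ⟨j - 1, by omega⟩
  have hbad : (({j, j + 1} : Finset ℕ)).card ≤ 2 := Finset.card_le_two
  have hy : ph g (gen g (j + 1)) = tau (ee g j + ee g (j + 1)) := by rw [ph_gen hj, vv_succ]
  have hdot : ∀ k, k < g → k ∉ ({j, j + 1} : Finset ℕ) →
      ee g k ⬝ᵥ (ee g j + ee g (j + 1)) = 0 := by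
    intro k hk hkb
    simp only [Finset.mem_insert, Finset.mem_singleton, not_or] at hkb
    rw [dotProduct_add, ee_ne (Ne.symm (Ne.symm hkb.1)), ee_ne hkb.2, add_zero]
  rcases h with ⟨h0, h1⟩ | ⟨rfl, h1, h4⟩
  · obtain ⟨i, rfl⟩ : ∃ i', i = i' + 1 := ⟨i - 1, by omega⟩
    obtain ⟨s, s1, s2, s3⟩ := exists_idx (g := g) (fun k => i + k) {j, j + 1} (by omega) 2 5 (by omega)
      (fun k hk => ⟨by omega, by simp; omega⟩) (fun a _ b _ hab => by omega)
    refine comm_config hg (ON_idx (fun k hk => (s2 k hk).1) s3) (c := 0)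
      (fun k hk => hdot _ (s2 k hk).1 (s2 k hk).2) hy (i := 1) (by omega) ?_
    rw [ph_gen (by omega), mv_three, s1 0 (by omega), s1 1 (by omega), vv_succ]
    rfl
  · rcases Nat.lt_or_ge j 4 with h5 | h5
    · -- the transvection along `e_m + e_l + (e_j + e_{j+1})`, where `{m, l, j, j+1} = {0, 1, 2, 3}`
      obtain ⟨m, l, hm, hl, hml, hmj, hmj', hlj, hlj', hon⟩ : ∃ m l, m < 4 ∧ l < 4 ∧ m ≠ l ∧
          m ≠ j ∧ m ≠ j + 1 ∧ l ≠ j ∧ l ≠ j + 1 ∧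
          on g 4 = ee g m + (ee g j + ee g (j + 1)) + ee g l := by
        have e4 : on g 4 = ee g 0 + ee g 1 + ee g 2 + ee g 3 := by
          simp [on_succ, on_zero]
        have : j = 0 ∨ j = 1 ∨ j = 2 := by omega
        rcases this with rfl | rfl | rfl
        · exact ⟨2, 3, by omega, by omega, by omega, by omega, by omega, by omega, by omega,
            by rw [e4]; ring⟩
        · exact ⟨0, 3, by omega, by omega, by omega, by omega, by omega, by omega, by omega,
            by rw [e4]; ring⟩
        · exact ⟨0, 1, by omega, by omega, by omega, by omega, by omega, by omega, by omega,
            by rw [e4]; ring⟩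
      let f : ℕ → VV g := fun k => if k = 0 then ee g m + (ee g j + ee g (j + 1)) else
        if k = 1 then ee g l else ee g (k + 2)
      have f0 : f 0 = ee g m + (ee g j + ee g (j + 1)) := rfl
      have f1 : f 1 = ee g l := rfl
      have f2 : ∀ k, f (k + 2) = ee g (k + 4) := fun k => rfl
      have hf : ON f 7 := by
        intro a ha b hb
        rcases a with _ | _ | a <;> rcases b with _ | _ | b
        case succ.succ.succ.succ =>
          rw [f2, f2, ee_ee (by omega)]
          simp only [Nat.add_right_cancel_iff]
        all_goals
          simp only [f0, f1, f2, zero_add]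
          simp (disch := omega) only [dotProduct_add, add_dotProduct, ee_ne, ee_self, if_neg,
            if_true]
          try decide
      refine comm_config hg hf (c := 0) (fun k hk => ?_) hy (i := 1) (by omega) ?_
      · rcases k with _ | _ | k
        all_goals
          simp only [f0, f1, f2, zero_add]
          simp (disch := omega) only [dotProduct_add, add_dotProduct, ee_ne, ee_self]
          decide
      · rw [ph_gen (by omega), mv_three, vv_zero, hon, f0, f1]
    · obtain ⟨s, s1, s2, s3⟩ := exists_idx (g := g) (fun k => k) {j, j + 1} (by omega) 4 3 (by omega)
        (fun k hk => ⟨by omega, by simp; omega⟩) (fun a _ b _ hab => hab)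
      refine comm_config hg (ON_idx (fun k hk => (s2 k hk).1) s3) (c := 0)
        (fun k hk => hdot _ (s2 k hk).1 (s2 k hk).2) hy (i := 0) (by omega) ?_
      rw [ph_gen (by omega), mv_fifteen, s1 0 (by omega), s1 1 (by omega), s1 2 (by omega),
        s1 3 (by omega), vv_zero]
      simp [on_succ, on_zero]

lemma pi_bword (hg : 9 ≤ g) (he : Even g) :
    pi g (gen g (g - 5)) * pi g (bword g ((g - 2) / 2)) =
      pi g (bword g ((g - 2) / 2)) * pi g (gen g (g - 5)) := by
  obtain ⟨m, hm⟩ := he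
  have hy : ph g (bword g ((g - 2) / 2)) = tau (on g g) := by
    rw [ph_bword (by omega) _ (by omega) (by omega), show 2 * ((g - 2) / 2) + 2 = g by omega]
  obtain ⟨s, s1, s2, s3⟩ := exists_idx (g := g) (fun k => g - 6 + k) ∅ (by simp; omega) 2 5
    (by omega) (fun k hk => ⟨by omega, by simp⟩) (fun a _ b _ hab => by omega)
  refine comm_config hg (ON_idx (fun k hk => (s2 k hk).1) s3) (c := 1)
    (fun k hk => ee_on_lt (s2 k hk).1 (s2 k hk).1) hy (i := 1) (by omega) ?_
  rw [ph_gen (by omega), mv_three, s1 0 (by omega), s1 1 (by omega),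
    show g - 5 = g - 6 + 1 by omega, vv_succ]
  rfl

end Orth9

namespace Orth9

open Matrix

open scoped IsMulCommutative

variable {g : ℕ}

/-! ### Exponent sums -/

/-- The homomorphism from the free group to `ℤ` giving the generator `a_i` the weight `p i`. -/
def wt (g : ℕ) (p : ℕ → ℤ) : FreeGroup (Fin g) →* Multiplicative ℤ :=
  FreeGroup.lift fun j : Fin g => Multiplicative.ofAdd (p j)

lemma wt_gen (p : ℕ → ℤ) {i : ℕ} (hi : i < g) : wt g p (gen g i) = Multiplicative.ofAdd (p i) :=
  lift_gen (fun j => Multiplicative.ofAdd (p j)) hi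

/-- The braid relator of `a_i` and `a_j`. -/
def brd (g i j : ℕ) : FreeGroup (Fin g) :=
  gen g i * gen g j * gen g i * (gen g j * gen g i * gen g j)⁻¹

lemma wt_brd (p : ℕ → ℤ) {i j : ℕ} (hi : i < g) (hj : j < g) :
    (wt g p (brd g i j)).toAdd = p i - p j := by
  simp only [brd, map_mul, map_inv, wt_gen p hi, wt_gen p hj, toAdd_mul, toAdd_inv, toAdd_ofAdd]
  ring

lemma wt_Cword (hg : 9 ≤ g) (p : ℕ → ℤ) :
    (wt g p (Cword g)).toAdd = p 0 + p 1 + p 2 + p 3 + p 4 + p 5 + p 6 := by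
  simp (disch := omega) only [Cword, map_mul, map_inv, map_pow, map_zpow, wt_gen, toAdd_mul,
    toAdd_inv, toAdd_pow, toAdd_zpow, toAdd_ofAdd, smul_eq_mul, nsmul_eq_mul]
  push_cast
  ring

lemma x0_eq : x0word g = (gen g 0 ^ 2) ^ (-7 : ℤ) * brd g 1 2 ^ (-2 : ℤ) * brd g 2 3 ^ (-4 : ℤ) *
    brd g 3 4 ^ (-6 : ℤ) * brd g 4 5 ^ 4 * brd g 5 6 ^ 2 * brd g 0 4 ^ 12 * Cword g ^ 2 := rfl

lemma x0_mem_commutator : x0word g ∈ commutator (FreeGroup (Fin g)) := by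
  rw [← Abelianization.ker_of, MonoidHom.mem_ker, ← ofMul_eq_zero]
  simp only [x0word, Cword, map_mul, map_inv, map_pow, map_zpow, ofMul_mul, ofMul_inv, ofMul_pow,
    ofMul_zpow]
  abel

lemma ph_brd (hg : 9 ≤ g) {i : ℕ} (hi : 1 ≤ i) (hi' : i + 1 < g) : ph g (brd g i (i + 1)) = 1 :=
  ph_rel hg _ (Or.inl (Or.inl (Or.inl (Or.inr ⟨i, hi, hi', rfl⟩))))

lemma ph_brd0 (hg : 9 ≤ g) : ph g (brd g 0 4) = 1 :=
  ph_rel hg _ (Or.inl (Or.inl (Or.inr rfl)))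

lemma ph_sq (hg : 9 ≤ g) {i : ℕ} (hi : i < g) : ph g (gen g i ^ 2) = 1 :=
  ph_rel hg _ (Or.inl (Or.inl (Or.inl (Or.inl (Or.inl ⟨i, hi, rfl⟩)))))

lemma ph_C (hg : 9 ≤ g) : ph g (Cword g) = 1 :=
  ph_rel hg _ (Or.inl (Or.inr rfl))

lemma x0_mem (hg : 9 ≤ g) : x0word g ∈ Subgroup.normalClosure (R9 g) := by
  refine ph_ker hg ?_
  simp only [x0_eq, map_mul, map_pow (ph g) (brd _ _ _), map_pow (ph g) (Cword _),
    map_zpow, ph_sq hg (show 0 < g by omega), ph_brd0 hg, ph_C hg,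
    ph_brd hg (show 1 ≤ 1 by omega) (by omega), ph_brd hg (show 1 ≤ 2 by omega) (by omega),
    ph_brd hg (show 1 ≤ 3 by omega) (by omega), ph_brd hg (show 1 ≤ 4 by omega) (by omega),
    ph_brd hg (show 1 ≤ 5 by omega) (by omega), one_pow, _root_.one_zpow, mul_one]

/-! ### Generators of the central subgroup `K / [K, F]` -/

open Classical in
/-- The class in the centre of `F / [K, F]` of an element of `K` (and `1` for other elements). -/
noncomputable def zc (hg : 9 ≤ g) (x : FreeGroup (Fin g)) : Subgroup.center (Gam g) :=
  if h : ph g x = 1 then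
    ⟨pi g x, Subgroup.mem_center_iff.2 fun γ => (pi_central hg h γ).symm⟩ else 1

lemma zc_coe (hg : 9 ≤ g) {x : FreeGroup (Fin g)} (h : ph g x = 1) :
    (zc hg x : Gam g) = pi g x := by
  rw [zc, dif_pos h]

/-- The product of powers of the classes of `a₀²`, of the braid relators and of `C`. -/
noncomputable def zprod (hg : 9 ≤ g) (n : ℤ) (e : ℕ → ℤ) (m k : ℤ) : Subgroup.center (Gam g) :=
  zc hg (gen g 0 ^ 2) ^ n * (∏ i ∈ Finset.range g, zc hg (brd g i (i + 1)) ^ e i) *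
    zc hg (brd g 0 4) ^ m * zc hg (Cword g) ^ k

/-- The exponents of the braid relators of `a_i` and `a_{i+1}` are supported on `1 ≤ i < g - 1`. -/
def bsup (g : ℕ) (e : ℕ → ℤ) : Prop := ∀ i, ¬ (1 ≤ i ∧ i + 1 < g) → e i = 0

lemma zprod_mul (hg : 9 ≤ g) (n n' : ℤ) (e e' : ℕ → ℤ) (m m' k k' : ℤ) :
    zprod hg n e m k * zprod hg n' e' m' k' =
      zprod hg (n + n') (fun i => e i + e' i) (m + m') (k + k') := by
  simp only [zprod, _root_.zpow_add, Finset.prod_mul_distrib]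
  rw [mul_mul_mul_comm, mul_mul_mul_comm (zc hg (gen g 0 ^ 2) ^ n * _),
    mul_mul_mul_comm (zc hg (gen g 0 ^ 2) ^ n)]

/-- The subgroup generated by the classes of `a₀²`, the braid relators and `C`. -/
noncomputable def TZ (hg : 9 ≤ g) : Subgroup (Subgroup.center (Gam g)) where
  carrier := {z | ∃ n e m k, bsup g e ∧ z = zprod hg n e m k}
  one_mem' := ⟨0, 0, 0, 0, fun _ _ => rfl, by simp [zprod]⟩
  mul_mem' := by
    rintro _ _ ⟨n, e, m, k, h, rfl⟩ ⟨n', e', m', k', h', rfl⟩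
    exact ⟨_, _, _, _, fun i hi => by rw [h i hi, h' i hi, add_zero], zprod_mul hg ..⟩
  inv_mem' := by
    rintro _ ⟨n, e, m, k, h, rfl⟩
    refine ⟨-n, fun i => -e i, -m, -k, fun i hi => neg_eq_zero.2 (h i hi), ?_⟩
    rw [inv_eq_iff_mul_eq_one, zprod_mul]
    simp [zprod]

/-- The image of `TZ` in `F / [K, F]`. -/
noncomputable def TG (hg : 9 ≤ g) : Subgroup (Gam g) := (TZ hg).map (Subgroup.center (Gam g)).subtype

lemma mem_TG (hg : 9 ≤ g) {x : FreeGroup (Fin g)} (h : ph g x = 1) (hx : zc hg x ∈ TZ hg) :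
    pi g x ∈ TG hg := ⟨_, hx, zc_coe hg h⟩

lemma TG_sq0 (hg : 9 ≤ g) : pi g (gen g 0 ^ 2) ∈ TG hg :=
  mem_TG hg (ph_sq hg (by omega)) ⟨1, 0, 0, 0, fun _ _ => rfl, by simp [zprod]⟩

lemma TG_brd0 (hg : 9 ≤ g) : pi g (brd g 0 4) ∈ TG hg :=
  mem_TG hg (ph_brd0 hg) ⟨0, 0, 1, 0, fun _ _ => rfl, by simp [zprod]⟩

lemma TG_C (hg : 9 ≤ g) : pi g (Cword g) ∈ TG hg :=
  mem_TG hg (ph_C hg) ⟨0, 0, 0, 1, fun _ _ => rfl, by simp [zprod]⟩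

lemma TG_brd (hg : 9 ≤ g) {i : ℕ} (hi : 1 ≤ i) (hi' : i + 1 < g) :
    pi g (brd g i (i + 1)) ∈ TG hg := by
  refine mem_TG hg (ph_brd hg hi hi')
    ⟨0, fun j => if j = i then 1 else 0, 0, 0, fun j hj => if_neg fun h => hj ?_, ?_⟩
  · rw [h]; exact ⟨hi, hi'⟩
  · rw [zprod, Finset.prod_eq_single i (fun j _ h => by rw [if_neg h, _root_.zpow_zero])
      (fun h => absurd (Finset.mem_range.2 (by omega)) h)]
    simp

/-- If `a b a = β b a b` with `β` and `a²` central, then `a² = β² b²`. -/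
lemma sq_braid {G : Type*} [Group G] {a b β : G} (hβ : ∀ γ, β * γ = γ * β)
    (ha : ∀ γ, a ^ 2 * γ = γ * a ^ 2) (h : a * b * a * (b * a * b)⁻¹ = β) :
    a ^ 2 = β ^ 2 * b ^ 2 := by
  have h1 : (a * b) * a * (a * b)⁻¹ = β * b := by rw [← h]; group
  have h2 : (a * b) * a ^ 2 * (a * b)⁻¹ = (β * b) ^ 2 := by
    rw [← h1, _root_.sq, _root_.sq]; group
  rw [← ha, mul_inv_cancel_right] at h2
  rw [h2, (show Commute β b from hβ b).mul_pow]

lemma pi_sq (hg : 9 ≤ g) {i j : ℕ} (hi : i < g) (h : ph g (brd g i j) = 1) :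
    pi g (gen g i ^ 2) = pi g (brd g i j) ^ 2 * pi g (gen g j ^ 2) := by
  rw [map_pow, map_pow]
  refine sq_braid (pi_central hg h) (fun γ => ?_) ?_
  · rw [← map_pow]; exact pi_central hg (ph_sq hg hi) γ
  · simp only [brd, map_mul, map_inv]

/-- The squares of the generators lie in `TG`: all but `a₀²` are redundant as generators, since
neighbouring squares differ by the square of a braid relator. -/
lemma TG_sq (hg : 9 ≤ g) {i : ℕ} (hi : i < g) : pi g (gen g i ^ 2) ∈ TG hg := by
  have hup : ∀ j, 1 ≤ j → j + 1 < g →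
      (pi g (gen g j ^ 2) ∈ TG hg ↔ pi g (gen g (j + 1) ^ 2) ∈ TG hg) := by
    intro j h1 h2
    rw [pi_sq hg (by omega) (ph_brd hg h1 h2)]
    exact Subgroup.mul_mem_cancel_left _ (Subgroup.pow_mem _ (TG_brd hg h1 h2) 2)
  have h4 : pi g (gen g 4 ^ 2) ∈ TG hg := by
    have := TG_sq0 hg
    rw [pi_sq hg (by omega) (ph_brd0 hg)] at this
    exact (Subgroup.mul_mem_cancel_left _ (Subgroup.pow_mem _ (TG_brd0 hg) 2)).1 this
  rcases Nat.eq_zero_or_pos i with rfl | h0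
  · exact TG_sq0 hg
  · have h1 : pi g (gen g 1 ^ 2) ∈ TG hg := by
      rw [hup 1 (by omega) (by omega), hup 2 (by omega) (by omega), hup 3 (by omega) (by omega)]
      exact h4
    induction i, h0 using Nat.le_induction with
    | base => exact h1
    | succ j hj ih => exact (hup j hj hi).1 (ih (by omega))

lemma TG_normal (hg : 9 ≤ g) : (TG hg).Normal := by
  refine ⟨fun n hn γ => ?_⟩
  obtain ⟨z, hz, rfl⟩ := hn
  have : γ * (z : Gam g) = z * γ := Subgroup.mem_center_iff.1 z.2 γ
  refine ⟨z, hz, ?_⟩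
  simp only [Subgroup.subtype_apply]
  rw [this, mul_inv_cancel_right]

lemma TG_of_mem (hg : 9 ≤ g) {x : FreeGroup (Fin g)} (hx : x ∈ Subgroup.normalClosure (R9 g)) :
    pi g x ∈ TG hg := by
  have := TG_normal hg
  have hle : Subgroup.normalClosure (R9 g) ≤ (TG hg).comap (pi g) := by
    refine Subgroup.normalClosure_le_normal fun r hr => ?_
    change pi g r ∈ TG hg
    have hcom : ∀ a b : FreeGroup (Fin g), pi g a * pi g b = pi g b * pi g a →
        pi g (a * b * a⁻¹ * b⁻¹) ∈ TG hg := by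
      intro a b h
      rw [map_mul, map_mul, map_mul, h, map_inv, map_inv, mul_inv_cancel_right, mul_inv_cancel]
      exact Subgroup.one_mem _
    rcases hr with ((((⟨i, hi, rfl⟩ | ⟨i, j, hj, h, rfl⟩) | ⟨i, hi, hi', rfl⟩) | rfl) | rfl) |
      ⟨he, rfl⟩
    · exact TG_sq hg hi
    · exact hcom _ _ (pi_comm hg hj h)
    · exact TG_brd hg hi hi'
    · exact TG_brd0 hg
    · exact TG_C hg
    · exact hcom _ _ (pi_bword hg he)
  exact hle hx

/-! ### Solving for the exponents -/

/-- The weight homomorphism on the centre of `F / [K, F]`. -/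
noncomputable def wtc (g : ℕ) (p : ℕ → ℤ) : Subgroup.center (Gam g) →* Multiplicative ℤ :=
  (QuotientGroup.lift (NN g) (wt g p) (by
    have : (NN g) ≤ (wt g p).ker :=
      (Subgroup.commutator_mono le_top le_rfl).trans (Abelianization.commutator_subset_ker (wt g p))
    exact fun x hx => this hx)).comp (Subgroup.center (Gam g)).subtype

lemma wtc_of (p : ℕ → ℤ) {z : Subgroup.center (Gam g)} {x : FreeGroup (Fin g)}
    (h : (z : Gam g) = pi g x) : wtc g p z = wt g p x := by
  simp only [wtc, MonoidHom.comp_apply, Subgroup.subtype_apply, h]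
  rfl

lemma wtc_zprod (hg : 9 ≤ g) (p : ℕ → ℤ) (n : ℤ) (e : ℕ → ℤ) (m k : ℤ) (he : bsup g e) :
    (wtc g p (zprod hg n e m k)).toAdd =
      n * (2 * p 0) + ∑ i ∈ Finset.range g, e i * (p i - p (i + 1)) + m * (p 0 - p 4) +
        k * (p 0 + p 1 + p 2 + p 3 + p 4 + p 5 + p 6) := by
  simp only [zprod, map_mul, map_zpow, map_prod, toAdd_mul, toAdd_zpow, toAdd_prod, smul_eq_mul]
  rw [wtc_of p (zc_coe hg (ph_sq hg (show 0 < g by omega))), wtc_of p (zc_coe hg (ph_brd0 hg)),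
    wtc_of p (zc_coe hg (ph_C hg)), wt_brd p (by omega) (by omega), wt_Cword hg, map_pow,
    wt_gen p (by omega), toAdd_pow, toAdd_ofAdd]
  congr 3
  refine Finset.sum_congr rfl fun i _ => ?_
  by_cases h : 1 ≤ i ∧ i + 1 < g
  · rw [wtc_of p (zc_coe hg (ph_brd hg h.1 h.2)), wt_brd p (by omega) h.2]
  · rw [he i h, zero_mul, zero_mul]

/-- The exponent sums of the generators give a linear system whose integral solutions are the
multiples of `(-7; -2, -4, -6, 4, 2; 12; 2)`. -/
lemma solve (hg : 9 ≤ g) {n : ℤ} {e : ℕ → ℤ} {m k : ℤ} (he : bsup g e)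
    (h : ∀ p : ℕ → ℤ, n * (2 * p 0) + ∑ i ∈ Finset.range g, e i * (p i - p (i + 1)) +
      m * (p 0 - p 4) + k * (p 0 + p 1 + p 2 + p 3 + p 4 + p 5 + p 6) = 0) :
    ∃ t : ℤ, n = -7 * t ∧ e 1 = -2 * t ∧ e 2 = -4 * t ∧ e 3 = -6 * t ∧ e 4 = 4 * t ∧ e 5 = 2 * t ∧
      m = 12 * t ∧ k = 2 * t ∧ e 0 = 0 ∧ ∀ i, 6 ≤ i → e i = 0 := by
  have hs : ∀ j, j + 1 < g → ∑ i ∈ Finset.range g,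
      e i * ((if i = j + 1 then (1 : ℤ) else 0) - if i + 1 = j + 1 then 1 else 0) =
        e (j + 1) - e j := by
    intro j hj
    have h1 : j < g := by omega
    simp [mul_sub, Finset.sum_sub_distrib, hj, h1]
  have e0 : e 0 = 0 := he 0 (by omega)
  have q0 := h fun i => if i = 0 then 1 else 0
  have s0 : ∑ i ∈ Finset.range g,
      e i * ((if i = 0 then (1 : ℤ) else 0) - if i + 1 = 0 then 1 else 0) = 0 := by
    simp [e0]
  rw [s0] at q0
  have q : ∀ j, j + 1 < g → _ := fun j hj => h fun i => if i = j + 1 then 1 else 0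
  have q1 := q 0 (by omega)
  have q2 := q 1 (by omega)
  have q3 := q 2 (by omega)
  have q4 := q 3 (by omega)
  have q5 := q 4 (by omega)
  have q6 := q 5 (by omega)
  rw [hs _ (by omega)] at q1 q2 q3 q4 q5 q6
  have q7 : ∀ d, 6 + d < g → e (6 + d) = e 6 := by
    intro d
    induction d with
    | zero => intro _; rfl
    | succ d ih =>
      intro hd
      have := q (6 + d) (by omega)
      rw [hs _ (by omega)] at this
      simp only [if_neg (show ¬ (0 = 6 + d + 1) by omega), if_neg (show ¬ (1 = 6 + d + 1) by omega),
        if_neg (show ¬ (2 = 6 + d + 1) by omega), if_neg (show ¬ (3 = 6 + d + 1) by omega),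
        if_neg (show ¬ (4 = 6 + d + 1) by omega), if_neg (show ¬ (5 = 6 + d + 1) by omega),
        if_neg (show ¬ (6 = 6 + d + 1) by omega)] at this
      have h2 := ih (by omega)
      rw [← h2, show 6 + (d + 1) = 6 + d + 1 by omega]
      linarith
  have e6 : e 6 = 0 := by
    rw [← q7 (g - 7) (by omega)]
    exact he _ (by omega)
  norm_num at q0 q1 q2 q3 q4 q5 q6
  refine ⟨n + 4 * k, by omega, by omega, by omega, by omega, by omega, by omega, by omega, by omega,
    e0, fun i hi => ?_⟩
  by_cases hig : i < g
  · rw [show i = 6 + (i - 6) by omega, q7 _ (by omega), e6]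
  · exact he i (by omega)

/-- Every element of `K ∩ [F, F]` is a power of `x0word` modulo `[K, F]`. -/
theorem main_gen (hg : 9 ≤ g) {x : FreeGroup (Fin g)} (hx : x ∈ Subgroup.normalClosure (R9 g))
    (hx' : x ∈ commutator (FreeGroup (Fin g))) : ∃ t : ℤ, x * (x0word g ^ t)⁻¹ ∈ NN g := by
  obtain ⟨_, ⟨n, e, m, k, he, rfl⟩, hz⟩ := TG_of_mem hg hx
  rw [Subgroup.subtype_apply] at hz
  obtain ⟨t, rfl, h1, h2, h3, h4, h5, rfl, rfl, h0, h6⟩ := solve hg he fun p => by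
    rw [← wtc_zprod hg p _ _ _ _ he, wtc_of p hz]
    have : wt g p x = 1 := Abelianization.commutator_subset_ker (wt g p) hx'
    rw [this, toAdd_one]
  refine ⟨t, pi_eq_one.1 ?_⟩
  have hprod : ∏ i ∈ Finset.range g, zc hg (brd g i (i + 1)) ^ e i =
      ∏ i ∈ Finset.range 6, zc hg (brd g i (i + 1)) ^ e i := by
    symm
    refine Finset.prod_subset (fun i => by simp only [Finset.mem_range]; omega) fun i _ hi => ?_
    rw [h6 i (by simpa using hi), _root_.zpow_zero]
  have hx0 : pi g (x0word g) = ((zc hg (gen g 0 ^ 2) ^ (-7 : ℤ) * zc hg (brd g 1 2) ^ (-2 : ℤ) *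
      zc hg (brd g 2 3) ^ (-4 : ℤ) * zc hg (brd g 3 4) ^ (-6 : ℤ) * zc hg (brd g 4 5) ^ (4 : ℤ) *
      zc hg (brd g 5 6) ^ (2 : ℤ) * zc hg (brd g 0 4) ^ (12 : ℤ) * zc hg (Cword g) ^ (2 : ℤ) :
      Subgroup.center (Gam g)) : Gam g) := by
    simp only [Subgroup.coe_mul, Subgroup.coe_zpow]
    rw [zc_coe hg (ph_sq hg (show 0 < g by omega)), zc_coe hg (ph_brd0 hg), zc_coe hg (ph_C hg),
      zc_coe hg (ph_brd hg (show 1 ≤ 1 by omega) (by omega)),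
      zc_coe hg (ph_brd hg (show 1 ≤ 2 by omega) (by omega)),
      zc_coe hg (ph_brd hg (show 1 ≤ 3 by omega) (by omega)),
      zc_coe hg (ph_brd hg (show 1 ≤ 4 by omega) (by omega)),
      zc_coe hg (ph_brd hg (show 1 ≤ 5 by omega) (by omega))]
    simp only [← map_zpow, ← map_mul]
    rfl
  rw [map_mul, map_inv, map_zpow, hx0, ← hz, ← Subgroup.coe_zpow, mul_inv_eq_one]
  congr 1
  rw [zprod, hprod]
  simp only [Finset.prod_range_succ, Finset.prod_range_zero, h0, h1, h2, h3, h4, h5,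
    _root_.zpow_zero, one_mul, mul_zpow, _root_.zpow_mul, mul_assoc]

end Orth9

/-- for `g ≥ 9`, with `F` the free group on `a₀, …, a_{g−1}` and `K` the normal
closure of the relator set `R9 g` (so that `F/K ≅ O(g, ℤ/2)`), the abelian group
`(K ∩ [F, F]) / [K, F]` — which by the Hopf formula is `H₂(O(g, ℤ/2); ℤ)` — is generated by
the single class of the word `A⁻⁷ B₁⁻² B₂⁻⁴ B₃⁻⁶ B₄⁴ B₅² B¹² C²`. -/
theorem stmt_9 (g : ℕ) (hg : 9 ≤ g) :
    Nonempty (PresentedGroup (R9 g) ≃* Matrix.orthogonalGroup (Fin g) (ZMod 2)) ∧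
    x0word g ∈ Subgroup.normalClosure (R9 g) ⊓ commutator (FreeGroup (Fin g)) ∧
    ∀ x ∈ Subgroup.normalClosure (R9 g) ⊓ commutator (FreeGroup (Fin g)),
      ∃ n : ℤ, x * (x0word g ^ n)⁻¹ ∈
        ⁅Subgroup.normalClosure (R9 g), (⊤ : Subgroup (FreeGroup (Fin g)))⁆ := by
  exact ⟨⟨MulEquiv.ofBijective (Orth9.phq hg) ⟨Orth9.phq_injective hg, Orth9.phq_surjective hg⟩⟩,
    ⟨Orth9.x0_mem hg, Orth9.x0_mem_commutator⟩, fun _ hx => Orth9.main_gen hg hx.1 hx.2⟩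
end

section
/- Let G be a group and let g₁, g₂, …, gₙ ∈ G satisfy the braid relations g_i g_{i+1} g_i = g_{i+1} g_i g_{i+1} for i = 1, …, n−1 and the disjointness relations g_i g_j = g_j g_i for all i, j with |i − j| > 1. Then (g₁ g₂ ⋯ gₙ)^{n+1} = (g₁² g₂ ⋯ gₙ)^n. -/
/-!
Put `δ = g₁g₂⋯gₙ`. The braid and disjointness relations give `δ gᵢ = gᵢ₊₁ δ` for `i < n`
(`braidProd_mul`): moving `gᵢ` leftwards through `δ` past the generators it commutes with, the
factor `gᵢ gᵢ₊₁ gᵢ` becomes `gᵢ₊₁ gᵢ gᵢ₊₁`, whose first letter commutes with `g₁⋯gᵢ₋₁`.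
Pushing every `δ` in `(g₁ δ)ᵏ` to the right therefore turns the successive copies of `g₁` into
`g₁, g₂, …, gₖ`, so that `(g₁ δ)ᵏ = g₁⋯gₖ δᵏ` for `k ≤ n` (`mul_braidProd_pow`); for `k = n` the
right side is `δⁿ⁺¹`.
-/

/-- The product `g 0 * g 1 * ⋯ * g (k - 1)`, for a family indexed by all of `ℕ`. -/
def braidProd {G : Type*} [Group G] (g : ℕ → G) (k : ℕ) : G := ((List.range k).map g).prod

lemma braidProd_zero {G : Type*} [Group G] (g : ℕ → G) : braidProd g 0 = 1 := by
  simp [braidProd]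

lemma braidProd_succ {G : Type*} [Group G] (g : ℕ → G) (k : ℕ) :
    braidProd g (k + 1) = braidProd g k * g k := by
  simp [braidProd, List.range_succ]

lemma braidProd_comm {G : Type*} [Group G] {g : ℕ → G} {n : ℕ}
    (hdisj : ∀ i j, i + 1 < j → j < n → g i * g j = g j * g i) {j : ℕ} (hj : j < n) :
    ∀ k, k < j → braidProd g k * g j = g j * braidProd g k := by
  intro k
  induction k with
  | zero => simp [braidProd_zero]
  | succ k ih =>
    intro hk
    rw [braidProd_succ, mul_assoc, hdisj k j hk hj, ← mul_assoc, ih (by omega), mul_assoc]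

/-- Multiplying by `g 0 * ⋯ * g (k - 1)` shifts each generator, other than the last one occurring
in it, to the next. -/
lemma braidProd_mul {G : Type*} [Group G] {g : ℕ → G} {n : ℕ}
    (hbraid : ∀ i, i + 1 < n → g i * g (i + 1) * g i = g (i + 1) * g i * g (i + 1))
    (hdisj : ∀ i j, i + 1 < j → j < n → g i * g j = g j * g i) {i k : ℕ} (hik : i + 2 ≤ k) :
    k ≤ n → braidProd g k * g i = g (i + 1) * braidProd g k := by
  induction k, hik using Nat.le_induction with
  | base =>
    intro hn
    calc braidProd g (i + 2) * g i
        = braidProd g i * (g i * g (i + 1) * g i) := by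
          simp only [braidProd_succ, mul_assoc]
      _ = (braidProd g i * g (i + 1)) * g i * g (i + 1) := by
          rw [hbraid i (by omega)]; simp only [mul_assoc]
      _ = g (i + 1) * braidProd g (i + 2) := by
          rw [braidProd_comm hdisj (by omega) i (by omega)]
          simp only [braidProd_succ, mul_assoc]
  | succ k hk ih =>
    intro hn
    rw [braidProd_succ, mul_assoc, ← hdisj i k (by omega) (by omega), ← mul_assoc,
      ih (by omega), mul_assoc]

lemma braidProd_pow_mul {G : Type*} [Group G] {g : ℕ → G} {n : ℕ}
    (hbraid : ∀ i, i + 1 < n → g i * g (i + 1) * g i = g (i + 1) * g i * g (i + 1))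
    (hdisj : ∀ i j, i + 1 < j → j < n → g i * g j = g j * g i) :
    ∀ k, k < n → braidProd g n ^ k * g 0 = g k * braidProd g n ^ k := by
  intro k
  induction k with
  | zero => simp
  | succ k ih =>
    intro hk
    rw [pow_succ', mul_assoc, ih (by omega), ← mul_assoc,
      braidProd_mul hbraid hdisj (by omega) le_rfl, mul_assoc]

lemma mul_braidProd_pow {G : Type*} [Group G] {g : ℕ → G} {n : ℕ}
    (hbraid : ∀ i, i + 1 < n → g i * g (i + 1) * g i = g (i + 1) * g i * g (i + 1))
    (hdisj : ∀ i j, i + 1 < j → j < n → g i * g j = g j * g i) :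
    ∀ k, k ≤ n → (g 0 * braidProd g n) ^ k = braidProd g k * braidProd g n ^ k := by
  intro k
  induction k with
  | zero => simp [braidProd_zero]
  | succ k ih =>
    intro hk
    calc (g 0 * braidProd g n) ^ (k + 1)
        = braidProd g k * (braidProd g n ^ k * g 0) * braidProd g n := by
          rw [pow_succ, ih (by omega)]; simp only [mul_assoc]
      _ = braidProd g (k + 1) * braidProd g n ^ (k + 1) := by
          rw [braidProd_pow_mul hbraid hdisj k (by omega), braidProd_succ, pow_succ]
          simp only [mul_assoc]


/-- if `g₁, …, gₙ` in a group `G` satisfy the braid relations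
`gᵢg_{i+1}gᵢ = g_{i+1}gᵢg_{i+1}` and the disjointness relations `gᵢgⱼ = gⱼgᵢ` for `|i − j| > 1`,
then `(g₁g₂⋯gₙ)^{n+1} = (g₁²g₂⋯gₙ)ⁿ`.  Here `g₁²g₂⋯gₙ = g₁·(g₁g₂⋯gₙ)`. -/
theorem stmt_10 {G : Type*} [Group G] (n : ℕ) (hn : 0 < n) (f : Fin n → G)
    (hbraid : ∀ i j : Fin n, (j : ℕ) = (i : ℕ) + 1 →
      f i * f j * f i = f j * f i * f j)
    (hdisj : ∀ i j : Fin n, ((i : ℕ) + 1 < (j : ℕ) ∨ (j : ℕ) + 1 < (i : ℕ)) →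
      f i * f j = f j * f i) :
    (List.ofFn f).prod ^ (n + 1) = (f ⟨0, hn⟩ * (List.ofFn f).prod) ^ n := by
  -- The generators are extended by `1` to all of `ℕ`; only indices below `n` are used.
  let g : ℕ → G := fun i => if h : i < n then f ⟨i, h⟩ else 1
  have hg : ∀ i (h : i < n), g i = f ⟨i, h⟩ := fun i h => dif_pos h
  have hprod : (List.ofFn f).prod = braidProd g n := by
    have hlist : List.ofFn f = (List.range n).map g := by
      apply List.ext_getElem
      · simp
      · intro i h₁ h₂
        have hi : i < n := by simpa using h₁
        simp [hg i hi]
    rw [hlist, braidProd]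
  have hb : ∀ i, i + 1 < n → g i * g (i + 1) * g i = g (i + 1) * g i * g (i + 1) := by
    intro i hi
    rw [hg i (by omega), hg (i + 1) hi]
    exact hbraid _ _ rfl
  have hd : ∀ i j, i + 1 < j → j < n → g i * g j = g j * g i := by
    intro i j hij hj
    rw [hg i (by omega), hg j hj]
    exact hdisj _ _ (Or.inl hij)
  rw [hprod, ← hg 0 hn, mul_braidProd_pow hb hd n le_rfl, pow_succ']
end

section
/- Let G be a group and a₁, a₂, a₃, a₄, a₅, b ∈ G elements satisfying: a_i² = b² = 1 for all i; (a_i a_j)² = 1 whenever |i − j| > 1; a_i a_{i+1} a_i = a_{i+1} a_i a_{i+1} for i = 1, …, 4; (a_i b)² = 1 for i ∈ {1, 2, 3, 5}; and a₄ b a₄ = b a₄ b. Then b commutes with (a₁ a₂ a₃ a₄ a₅ b)⁵, i.e. b (a₁a₂a₃a₄a₅b)⁵ = (a₁a₂a₃a₄a₅b)⁵ b. -/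
/-!
The relations are those of the Coxeter group of type `D₆`, with `aᵢ` the reflection in `eᵢ - eᵢ₊₁`
and `b` the reflection in `e₅ + e₆`. The product `c = a₁a₂a₃a₄a₅b` is a Coxeter element acting by
`e₁ ↦ e₂ ↦ e₃ ↦ e₄ ↦ e₅ ↦ -e₁` and `e₆ ↦ -e₆`, so `c⁵ = -1` is central.

In an arbitrary group satisfying the relations, conjugation by `c` sends
`a₁ ↦ a₂ ↦ a₃ ↦ a₄`, `a₄ b a₄ ↦ a₅` and `a₄ a₅ a₄ ↦ b`. Following the orbit of the reflection `b`
therefore gives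
`b ↦ a₁a₂a₃a₄ b a₄a₃a₂a₁ ↦ a₂a₃a₄ a₅ a₄a₃a₂ ↦ a₃a₄ b a₄a₃ ↦ a₄a₅a₄ ↦ b`
(up to sign, the roots `e₅ + e₆, e₁ + e₆, e₂ - e₆, e₃ + e₆, e₄ - e₆, e₅ + e₆`),
which closes up after five steps.
-/

lemma commute_of_sq_eq_one {G : Type*} [Group G] {x y : G}
    (hx : x ^ 2 = 1) (hy : y ^ 2 = 1) (hxy : (x * y) ^ 2 = 1) : x * y = y * x := by
  have hx' : x⁻¹ = x := inv_eq_of_mul_eq_one_left (by rw [← sq, hx])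
  have hy' : y⁻¹ = y := inv_eq_of_mul_eq_one_left (by rw [← sq, hy])
  have h : (x * y)⁻¹ = x * y := inv_eq_of_mul_eq_one_left (by rw [← sq, hxy])
  rw [← h, mul_inv_rev, hx', hy']

/-- Along a chain of the diagram, a Coxeter element `p x y q` conjugates the node `x` to the next
node `y`. -/
lemma semiconjBy_of_braid {G : Type*} [Group G] {p x y q : G}
    (hbr : x * y * x = y * x * y) (hp : p * y = y * p) (hq : q * x = x * q) :
    SemiconjBy (p * x * y * q) x y := by
  show p * x * y * q * x = y * (p * x * y * q)
  calc p * x * y * q * x = p * (x * y) * (q * x) := by group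
    _ = p * (x * y * x) * q := by rw [hq]; group
    _ = p * y * (x * y) * q := by rw [hbr]; group
    _ = y * (p * x * y * q) := by rw [hp]; group

/-- The fork of the diagram: `x` is the branch node, `y` and `z` two end nodes
attached to it. In the geometric picture, the Coxeter element sends the root of `x z x` to that of
`y`. -/
lemma semiconjBy_fork {G : Type*} [Group G] {p x y z : G} (hz : z * z = 1)
    (hxy : x * y * x = y * x * y) (hxz : x * z * x = z * x * z) (hp : p * y = y * p) :
    SemiconjBy (p * x * y * z) (x * z * x) y := by
  show p * x * y * z * (x * z * x) = y * (p * x * y * z)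
  calc p * x * y * z * (x * z * x) = p * x * y * (z * z) * x * z := by rw [hxz]; group
    _ = p * (x * y * x) * z := by rw [hz]; group
    _ = p * y * (x * y * z) := by rw [hxy]; group
    _ = y * (p * x * y * z) := by rw [hp]; group

/-- Claim 3.3: under relations (1)–(5) of the presentation, `b` commutes with
`b₂ = (a₁a₂a₃a₄a₅b)⁵`. -/
theorem stmt_12 {G : Type*} [Group G] (a1 a2 a3 a4 a5 b : G)
    (ha1 : a1 ^ 2 = 1) (ha2 : a2 ^ 2 = 1) (ha3 : a3 ^ 2 = 1) (ha4 : a4 ^ 2 = 1)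
    (ha5 : a5 ^ 2 = 1) (hb : b ^ 2 = 1)
    (h13 : (a1 * a3) ^ 2 = 1) (h14 : (a1 * a4) ^ 2 = 1) (h15 : (a1 * a5) ^ 2 = 1)
    (h24 : (a2 * a4) ^ 2 = 1) (h25 : (a2 * a5) ^ 2 = 1) (h35 : (a3 * a5) ^ 2 = 1)
    (hbr1 : a1 * a2 * a1 = a2 * a1 * a2) (hbr2 : a2 * a3 * a2 = a3 * a2 * a3)
    (hbr3 : a3 * a4 * a3 = a4 * a3 * a4) (hbr4 : a4 * a5 * a4 = a5 * a4 * a5)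
    (hb1 : (a1 * b) ^ 2 = 1) (hb2 : (a2 * b) ^ 2 = 1) (hb3 : (a3 * b) ^ 2 = 1)
    (hb5 : (a5 * b) ^ 2 = 1)
    (hb4 : a4 * b * a4 = b * a4 * b) :
    b * (a1 * a2 * a3 * a4 * a5 * b) ^ 5 = (a1 * a2 * a3 * a4 * a5 * b) ^ 5 * b := by
  have c13 := commute_of_sq_eq_one ha1 ha3 h13
  have c14 := commute_of_sq_eq_one ha1 ha4 h14
  have c15 := commute_of_sq_eq_one ha1 ha5 h15
  have c24 := commute_of_sq_eq_one ha2 ha4 h24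
  have c25 := commute_of_sq_eq_one ha2 ha5 h25
  have c35 := commute_of_sq_eq_one ha3 ha5 h35
  have c1b := commute_of_sq_eq_one ha1 hb hb1
  have c2b := commute_of_sq_eq_one ha2 hb hb2
  have c3b := commute_of_sq_eq_one ha3 hb hb3
  have c5b := commute_of_sq_eq_one ha5 hb hb5
  rw [sq] at ha1 ha2 ha3 ha4 ha5 hb
  have comm {x y : G} (h : x * y = y * x) : Commute x y := h
  obtain ⟨c, hc⟩ : ∃ c, c = a1 * a2 * a3 * a4 * a5 * b := ⟨_, rfl⟩
  rw [← hc]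
  have s1 : SemiconjBy c a1 a2 := by
    have := semiconjBy_of_braid (p := 1) (q := a3 * a4 * a5 * b) hbr1 (by simp)
      ((((comm c13.symm).mul_left (comm c14.symm)).mul_left (comm c15.symm)).mul_left
        (comm c1b.symm))
    simpa [hc, mul_assoc] using this
  have s2 : SemiconjBy c a2 a3 := by
    have := semiconjBy_of_braid (p := a1) (q := a4 * a5 * b) hbr2 c13
      (((comm c24.symm).mul_left (comm c25.symm)).mul_left (comm c2b.symm))
    simpa [hc, mul_assoc] using this
  have s3 : SemiconjBy c a3 a4 := by
    have := semiconjBy_of_braid (p := a1 * a2) (q := a5 * b) hbr3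
      ((comm c14).mul_left (comm c24)) ((comm c35.symm).mul_left (comm c3b.symm))
    simpa [hc, mul_assoc] using this
  have s4 : SemiconjBy c (a4 * b * a4) a5 := by
    rw [hc]
    exact semiconjBy_fork hb hbr4 hb4 (((comm c15).mul_left (comm c25)).mul_left (comm c35))
  have s5 : SemiconjBy c (a4 * a5 * a4) b := by
    have := semiconjBy_fork ha5 hb4 hbr4
      (((comm c1b).mul_left (comm c2b)).mul_left (comm c3b))
    rwa [mul_assoc _ b a5, ← c5b, ← mul_assoc, ← hc] at this
  have t1 : SemiconjBy c b (a1 * a2 * a3 * (a4 * b * a4) * a3 * a2 * a1) := by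
    show c * b = _ * c
    have e : a1 * a2 * a3 * (a4 * b * a4) * a3 * a2 * a1 * c
        = a1 * a2 * a3 * a4 * b * (a4 * (a3 * (a2 * (a1 * a1) * a2) * a3) * a4) * a5 * b := by
      rw [hc]; group
    rw [e, ha1, mul_one, ha2, mul_one, ha3, mul_one, ha4, mul_one, mul_assoc _ b a5, ← c5b,
      ← mul_assoc, hc]
  have t2 : SemiconjBy c (a1 * a2 * a3 * (a4 * b * a4) * a3 * a2 * a1)
      (a2 * a3 * (a4 * a5 * a4) * a3 * a2) := by
    simpa only [mul_assoc] using
      (((((s1.mul_right s2).mul_right s3).mul_right s4).mul_right s3).mul_right s2).mul_right s1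
  have t3 : SemiconjBy c (a2 * a3 * (a4 * a5 * a4) * a3 * a2) (a3 * (a4 * b * a4) * a3) := by
    simpa only [mul_assoc] using
      (((s2.mul_right s3).mul_right s5).mul_right s3).mul_right s2
  have t4 : SemiconjBy c (a3 * (a4 * b * a4) * a3) (a4 * a5 * a4) :=
    (s3.mul_right s4).mul_right s3
  have t : SemiconjBy (c * (c * (c * (c * c)))) b b :=
    s5.mul_left (t4.mul_left (t3.mul_left (t2.mul_left t1)))
  have e5 : c ^ 5 = c * (c * (c * (c * c))) := by simp only [pow_succ, pow_zero, one_mul, mul_assoc]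
  rw [e5]
  exact t.eq.symm
end
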